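/- arXiv:2503.06224 — 13 statements merged into one kernel-verified Lean document; each statement's English description precedes it below -/
import Mathlib

section
/- Let T > 0 be a real number. The conjugation orbit of T·A under GL₂(ℝ), i.e. the set {g (T·A) g⁻¹ : g an invertible 2×2 real matrix}, is equal to the one-sheeted hyperboloid {a·A + b·B + c·C : a, b, c ∈ ℝ, a² + b² − c² = T²} inside M₂(ℝ). -/
noncomputable def matA : Matrix (Fin 2) (Fin 2) ℝ := !![1, 0; 0, -1]
noncomputable def matB : Matrix (Fin 2) (Fin 2) ℝ := !![0, 1; 1, 0]
noncomputable def matC : Matrix (Fin 2) (Fin 2) ℝ := !![0, -1; 1, 0]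

/-- The conjugation orbit of `T • A` under `GL₂(ℝ)` equals the one-sheeted hyperboloid
`{a•A + b•B + c•C : a² + b² − c² = T²}`. -/
theorem stmt_0 (T : ℝ) (hT : 0 < T) :
    {X : Matrix (Fin 2) (Fin 2) ℝ | ∃ g : (Matrix (Fin 2) (Fin 2) ℝ)ˣ,
        X = (g : Matrix (Fin 2) (Fin 2) ℝ) * (T • matA) *
          ((g⁻¹ : (Matrix (Fin 2) (Fin 2) ℝ)ˣ) : Matrix (Fin 2) (Fin 2) ℝ)} =
    {X : Matrix (Fin 2) (Fin 2) ℝ | ∃ a b c : ℝ,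
        a ^ 2 + b ^ 2 - c ^ 2 = T ^ 2 ∧ X = a • matA + b • matB + c • matC} := by
  have key : ∀ (X G : Matrix (Fin 2) (Fin 2) ℝ), G.det ≠ 0 → X * G = G * (T • matA) →
      ∃ g : (Matrix (Fin 2) (Fin 2) ℝ)ˣ,
        X = (g : Matrix (Fin 2) (Fin 2) ℝ) * (T • matA) *
          ((g⁻¹ : (Matrix (Fin 2) (Fin 2) ℝ)ˣ) : Matrix (Fin 2) (Fin 2) ℝ) := by
    intro X G hG h
    obtain ⟨g, rfl⟩ := (Matrix.isUnit_iff_isUnit_det G).2 (isUnit_iff_ne_zero.2 hG)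
    exact ⟨g, (Units.eq_mul_inv_iff_mul_eq g).2 h⟩
  ext X
  simp only [Set.mem_setOf_eq]
  constructor
  · rintro ⟨g, hX⟩
    have htr : X.trace = 0 := by
      rw [hX, Matrix.trace_mul_comm, ← mul_assoc, Units.inv_mul, one_mul]
      simp [matA, Matrix.trace_fin_two]
    have hdet : X.det = -T ^ 2 := by
      have h1 : (g : Matrix (Fin 2) (Fin 2) ℝ).det *
          ((g⁻¹ : (Matrix (Fin 2) (Fin 2) ℝ)ˣ) : Matrix (Fin 2) (Fin 2) ℝ).det = 1 := by
        rw [← Matrix.det_mul, Units.mul_inv, Matrix.det_one]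
      have h2 : (T • matA).det = -T ^ 2 := by
        simp [matA, Matrix.det_fin_two]; ring
      rw [hX, Matrix.det_mul, Matrix.det_mul, h2]
      linear_combination (-T ^ 2) * h1
    rw [Matrix.trace_fin_two] at htr
    rw [Matrix.det_fin_two] at hdet
    refine ⟨X 0 0, (X 0 1 + X 1 0) / 2, (X 1 0 - X 0 1) / 2, ?_, ?_⟩
    · linear_combination (X 0 0) * htr - hdet
    · ext i j
      fin_cases i <;> fin_cases j <;> simp [matA, matB, matC] <;> linarith
  · rintro ⟨a, b, c, h, rfl⟩
    by_cases ha : a + T = 0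
    · obtain rfl : a = -T := by linarith
      refine key _ !![b - c, 2 * T; 2 * T, -(b + c)] ?_ ?_
      · rw [Matrix.det_fin_two_of]
        nlinarith [mul_pos hT hT]
      · ext i j
        fin_cases i <;> fin_cases j <;>
          simp [matA, matB, matC, Matrix.mul_apply, Fin.sum_univ_two] <;> grind
    · refine key _ !![a + T, -(b - c); b + c, a + T] ?_ ?_
      · rw [Matrix.det_fin_two_of]
        have : (a + T) * (a + T) - -(b - c) * (b + c) = 2 * T * (a + T) := by
          linear_combination h
        rw [this]
        positivity
      · ext i j
        fin_cases i <;> fin_cases j <;>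
          simp [matA, matB, matC, Matrix.mul_apply, Fin.sum_univ_two] <;> grind
end

section
/- Let E be a complex inner product space and let A, B, C : E → E be linear maps such that ⟨Bx, y⟩ = −⟨x, By⟩ and ⟨Cx, y⟩ = −⟨x, Cy⟩ for all x, y ∈ E, and such that B∘C − C∘B = 2·A. Let T, R be real numbers and let v ∈ E with ‖v‖ = 1 and ‖A v − (2iT)·v‖ ≤ R. Then ‖Bv‖ · ‖Cv‖ ≥ 2T − R. -/
open scoped InnerProductSpace

theorem stmt_2 {E : Type*} [NormedAddCommGroup E] [InnerProductSpace ℂ E]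
    (A B C : E →ₗ[ℂ] E)
    (hB : ∀ x y : E, ⟪B x, y⟫_ℂ = -⟪x, B y⟫_ℂ)
    (hC : ∀ x y : E, ⟪C x, y⟫_ℂ = -⟪x, C y⟫_ℂ)
    (hBC : B ∘ₗ C - C ∘ₗ B = (2 : ℂ) • A)
    (T R : ℝ) (v : E) (hv : ‖v‖ = 1)
    (hA : ‖A v - (2 * Complex.I * (T : ℂ)) • v‖ ≤ R) :
    2 * T - R ≤ ‖B v‖ * ‖C v‖ := by
  have h1 : 2 * ⟪v, A v⟫_ℂ = ⟪C v, B v⟫_ℂ - ⟪B v, C v⟫_ℂ := by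
    have h := congrArg (fun f : E →ₗ[ℂ] E => ⟪v, f v⟫_ℂ) hBC
    simp only [LinearMap.sub_apply, LinearMap.comp_apply, LinearMap.smul_apply,
      inner_sub_right, inner_smul_right] at h
    rw [← h, hB v (C v), hC v (B v)]
    ring
  have h2 : ⟪v, A v - (2 * Complex.I * (T : ℂ)) • v⟫_ℂ = ⟪v, A v⟫_ℂ - 2 * Complex.I * (T : ℂ) := by
    rw [inner_sub_right, inner_smul_right, inner_self_eq_norm_sq_to_K, hv]
    simp
  have h3 := norm_inner_le_norm (𝕜 := ℂ) v (A v - (2 * Complex.I * (T : ℂ)) • v)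
  rw [h2, hv, one_mul] at h3
  have h4 : 2 * ‖⟪v, A v⟫_ℂ‖ ≤ 2 * (‖B v‖ * ‖C v‖) := by
    have h5 : ‖2 * ⟪v, A v⟫_ℂ‖ = 2 * ‖⟪v, A v⟫_ℂ‖ := by simp
    rw [← h5, h1]
    have a := norm_sub_le ⟪C v, B v⟫_ℂ ⟪B v, C v⟫_ℂ
    have b := norm_inner_le_norm (𝕜 := ℂ) (C v) (B v)
    have c := norm_inner_le_norm (𝕜 := ℂ) (B v) (C v)
    linarith [mul_comm ‖C v‖ ‖B v‖]
  have h6 : ‖2 * Complex.I * (T : ℂ)‖ = 2 * |T| := by simp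
  have h7 := norm_sub_norm_le (2 * Complex.I * (T : ℂ)) ⟪v, A v⟫_ℂ
  rw [norm_sub_rev, h6] at h7
  linarith [le_abs_self T]
end

section
/- Let E be a complex inner product space, let T ≥ 1 be real, and set N = ⌊√T⌋. Let (v_n) for integers n with −N ≤ n ≤ N+1 be an orthonormal family in E, and let R, C : E → E be linear maps such that R v_n = (iT + 1/2 + n)·v_{n+1} and C v_n = (2in)·v_n for all n with −N ≤ n ≤ N. Set ψ = Σ_{n=−N}^{N} v_n. Then: (i) ‖ψ‖² = 2N + 1; (ii) ‖Cψ‖ ≤ 2N·‖ψ‖; and (iii) ‖Rψ − (iT)·ψ‖ ≤ 4T. -/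
open scoped InnerProductSpace

lemma aux_sym {M : Type*} [AddCommGroup M] (f : ℤ → M) (k : ℕ) :
    ∑ n ∈ Finset.Icc (-((k + 1 : ℕ) : ℤ)) ((k + 1 : ℕ) : ℤ), f n
      = f (k + 1) + (f (-(k + 1)) + ∑ n ∈ Finset.Icc (-(k : ℤ)) (k : ℤ), f n) := by
  have h : Finset.Icc (-((k + 1 : ℕ) : ℤ)) ((k + 1 : ℕ) : ℤ)
      = insert ((k : ℤ) + 1) (insert (-((k : ℤ) + 1)) (Finset.Icc (-(k : ℤ)) (k : ℤ))) := by
    ext x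
    simp only [Finset.mem_Icc, Finset.mem_insert]
    push_cast
    omega
  rw [h, Finset.sum_insert, Finset.sum_insert]
  · simp
  · simp only [Finset.mem_Icc, Finset.mem_insert]
    omega

lemma aux_sq (k : ℕ) : ∑ n ∈ Finset.Icc (-(k : ℤ)) (k : ℤ), ((n : ℝ) + 1 / 2) ^ 2
    = (k : ℝ) * (k + 1) * (2 * k + 1) / 3 + (2 * k + 1) / 4 := by
  induction k with
  | zero => norm_num
  | succ k ih =>
    rw [aux_sym, ih]
    push_cast
    ring

lemma aux_tel {M : Type*} [AddCommGroup M] (f : ℤ → M) (k : ℕ) :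
    ∑ n ∈ Finset.Icc (-(k : ℤ)) (k : ℤ), (f (n + 1) - f n) = f (k + 1) - f (-k) := by
  induction k with
  | zero => simp
  | succ k ih =>
    rw [aux_sym, ih]
    have e : -((k : ℤ) + 1) + 1 = -k := by ring
    rw [e]
    push_cast
    abel

lemma aux_pyth {E : Type*} [NormedAddCommGroup E] [InnerProductSpace ℂ E] (s : Finset ℤ)
    (w : ℤ → E) (h1 : ∀ n ∈ s, ‖w n‖ = 1)
    (h2 : ∀ m ∈ s, ∀ n ∈ s, m ≠ n → ⟪w m, w n⟫_ℂ = 0) (c : ℤ → ℂ) :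
    ‖∑ n ∈ s, c n • w n‖ ^ 2 = ∑ n ∈ s, ‖c n‖ ^ 2 := by
  induction s using Finset.induction_on with
  | empty => simp
  | insert a s ha ih =>
    rw [Finset.sum_insert ha, Finset.sum_insert ha, ← ih
      (fun n hn => h1 n (Finset.mem_insert_of_mem hn))
      (fun m hm n hn => h2 m (Finset.mem_insert_of_mem hm) n (Finset.mem_insert_of_mem hn))]
    have h0 : ⟪c a • w a, ∑ n ∈ s, c n • w n⟫_ℂ = 0 := by
      rw [inner_sum]
      refine Finset.sum_eq_zero fun n hn => ?_
      rw [inner_smul_left, inner_smul_right, h2 a (Finset.mem_insert_self _ _) n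
        (Finset.mem_insert_of_mem hn) (fun h => ha (h ▸ hn))]
      simp
    have := norm_add_sq_eq_norm_sq_add_norm_sq_of_inner_eq_zero _ _ h0
    rw [pow_two, this, norm_smul, h1 a (Finset.mem_insert_self _ _)]
    ring

theorem stmt_4 {E : Type*} [NormedAddCommGroup E] [InnerProductSpace ℂ E]
    (T : ℝ) (hT : 1 ≤ T) (N : ℕ) (hN : N = ⌊Real.sqrt T⌋₊)
    (v : ℤ → E)
    (hnorm : ∀ n : ℤ, -(N : ℤ) ≤ n → n ≤ (N : ℤ) + 1 → ‖v n‖ = 1)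
    (horth : ∀ m n : ℤ, -(N : ℤ) ≤ m → m ≤ (N : ℤ) + 1 → -(N : ℤ) ≤ n → n ≤ (N : ℤ) + 1 →
      m ≠ n → ⟪v m, v n⟫_ℂ = 0)
    (Rop Cop : E →ₗ[ℂ] E)
    (hR : ∀ n : ℤ, -(N : ℤ) ≤ n → n ≤ (N : ℤ) →
      Rop (v n) = ((Complex.I * (T : ℂ) + 1 / 2 + (n : ℂ)) • v (n + 1)))
    (hC : ∀ n : ℤ, -(N : ℤ) ≤ n → n ≤ (N : ℤ) →
      Cop (v n) = ((2 * Complex.I * (n : ℂ)) • v n))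
    (ψ : E) (hψ : ψ = ∑ n ∈ Finset.Icc (-(N : ℤ)) (N : ℤ), v n) :
    ‖ψ‖ ^ 2 = 2 * (N : ℝ) + 1 ∧
    ‖Cop ψ‖ ≤ 2 * (N : ℝ) * ‖ψ‖ ∧
    ‖Rop ψ - (Complex.I * (T : ℂ)) • ψ‖ ≤ 4 * T := by
  have hcard : ∑ n ∈ Finset.Icc (-(N : ℤ)) (N : ℤ), (1 : ℝ) = 2 * N + 1 := by
    rw [Finset.sum_const, Int.card_Icc, nsmul_eq_mul, mul_one]
    have : (((N : ℤ) + 1 - -(N : ℤ)).toNat) = 2 * N + 1 := by omega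
    rw [this]
    push_cast
    ring
  have P := aux_pyth (Finset.Icc (-(N : ℤ)) (N : ℤ)) v
    (fun n hn => hnorm n (Finset.mem_Icc.1 hn).1 (by have := (Finset.mem_Icc.1 hn).2; omega))
    (fun m hm n hn => horth m n (Finset.mem_Icc.1 hm).1
      (by have := (Finset.mem_Icc.1 hm).2; omega) (Finset.mem_Icc.1 hn).1
      (by have := (Finset.mem_Icc.1 hn).2; omega))
  have Q := aux_pyth (Finset.Icc (-(N : ℤ)) (N : ℤ)) (fun n => v (n + 1))
    (fun n hn => by
      have := Finset.mem_Icc.1 hn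
      exact hnorm _ (by omega) (by omega))
    (fun m hm n hn hmn => by
      have := Finset.mem_Icc.1 hn
      have := Finset.mem_Icc.1 hm
      exact horth _ _ (by omega) (by omega) (by omega) (by omega) (by omega))
  have hi : ‖ψ‖ ^ 2 = 2 * (N : ℝ) + 1 := by
    have := P (fun _ => 1)
    simp only [one_smul, norm_one, one_pow] at this
    rw [hψ, this, hcard]
  refine ⟨hi, ?_, ?_⟩
  · have e : Cop ψ = ∑ n ∈ Finset.Icc (-(N : ℤ)) (N : ℤ), (2 * Complex.I * (n : ℂ)) • v n := by
      rw [hψ, map_sum]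
      exact Finset.sum_congr rfl fun n hn => hC n (Finset.mem_Icc.1 hn).1 (Finset.mem_Icc.1 hn).2
    refine le_of_sq_le_sq ?_ (by positivity)
    rw [e, P, mul_pow, hi, ← hcard, Finset.mul_sum]
    refine Finset.sum_le_sum fun n hn => ?_
    have h := Finset.mem_Icc.1 hn
    have h1 : -(N : ℝ) ≤ n := by exact_mod_cast h.1
    have h2 : (n : ℝ) ≤ N := by exact_mod_cast h.2
    have h3 : |(n : ℝ)| ≤ N := abs_le.2 ⟨h1, h2⟩
    rw [mul_one, norm_mul, norm_mul, Complex.norm_I, Complex.norm_intCast]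
    norm_num
    gcongr
  · have e : Rop ψ - (Complex.I * (T : ℂ)) • ψ
        = (Complex.I * (T : ℂ)) • (v (N + 1) - v (-N))
          + ∑ n ∈ Finset.Icc (-(N : ℤ)) (N : ℤ), (((n : ℝ) + 1 / 2 : ℝ) : ℂ) • v (n + 1) := by
      rw [hψ, map_sum, ← aux_tel, Finset.smul_sum, Finset.smul_sum, ← Finset.sum_sub_distrib,
        ← Finset.sum_add_distrib]
      refine Finset.sum_congr rfl fun n hn => ?_
      rw [hR n (Finset.mem_Icc.1 hn).1 (Finset.mem_Icc.1 hn).2]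
      push_cast
      module
    have hs0 : 1 ≤ Real.sqrt T := Real.one_le_sqrt.2 hT
    have hN1 : (1 : ℝ) ≤ N := by
      rw [hN]
      exact_mod_cast (Nat.one_le_floor_iff _).2 hs0
    have hNs : (N : ℝ) ≤ Real.sqrt T := by
      rw [hN]
      exact Nat.floor_le (by positivity)
    have hNT : (N : ℝ) ^ 2 ≤ T := by
      calc (N : ℝ) ^ 2 ≤ Real.sqrt T ^ 2 := by gcongr
        _ = T := Real.sq_sqrt (by linarith)
    have hA : ‖(Complex.I * (T : ℂ)) • (v (N + 1) - v (-N))‖ ≤ 2 * T := by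
      rw [norm_smul, norm_mul, Complex.norm_I, one_mul, Complex.norm_real, Real.norm_eq_abs,
        abs_of_pos (by linarith), mul_comm]
      have := norm_sub_le (v (N + 1)) (v (-N))
      rw [hnorm _ (by omega) (by omega), hnorm _ (by omega) (by omega)] at this
      gcongr
      linarith
    have hB : ‖∑ n ∈ Finset.Icc (-(N : ℤ)) (N : ℤ),
        (((n : ℝ) + 1 / 2 : ℝ) : ℂ) • v (n + 1)‖ ≤ 2 * T := by
      refine le_of_sq_le_sq ?_ (by linarith)
      have := Q (fun n => (((n : ℝ) + 1 / 2 : ℝ) : ℂ))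
      simp only [Complex.norm_real, Real.norm_eq_abs, sq_abs] at this
      rw [this, aux_sq]
      have h4 : ((N : ℝ) ^ 2) ^ 2 ≤ T ^ 2 := by gcongr
      have h2 : (N : ℝ) ≤ N ^ 2 := by nlinarith
      have h3 : (N : ℝ) ^ 2 ≤ N ^ 3 := by nlinarith [sq_nonneg (N : ℝ)]
      have h5 : (N : ℝ) ^ 3 ≤ (N ^ 2) ^ 2 := by nlinarith [pow_nonneg (by linarith : (0:ℝ) ≤ N) 3]
      nlinarith
    rw [e]
    exact (norm_add_le _ _).trans (by linarith)
end

section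
/- Let p be a prime and m ≥ 1 an integer. The subgroup K(m) of GL₂(ℤ_p) is generated by the three sets U⁺(m) = { [[1, x],[0, 1]] : x ∈ p^m ℤ_p }, U⁻(m) = { [[1, 0],[y, 1]] : y ∈ p^m ℤ_p }, and the set of diagonal matrices lying in K(m). -/
/-- The principal congruence subgroup `K(m)` of `GL₂(ℤ_p)`: matrices `g` with every entry of
`g − 1` lying in `p^m ℤ_p`. -/
def congK (p : ℕ) [Fact p.Prime] (m : ℕ) : Subgroup (Matrix (Fin 2) (Fin 2) ℤ_[p])ˣ where
  carrier := {g | ∀ i j, (p : ℤ_[p]) ^ m ∣ ((g : Matrix (Fin 2) (Fin 2) ℤ_[p]) - 1) i j}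
  one_mem' := by
    intro i j
    simp
  mul_mem' := by
    intro a b ha hb i j
    have key : ((a * b : (Matrix (Fin 2) (Fin 2) ℤ_[p])ˣ) : Matrix (Fin 2) (Fin 2) ℤ_[p]) - 1 =
        ((a : Matrix (Fin 2) (Fin 2) ℤ_[p]) - 1) * ((b : Matrix (Fin 2) (Fin 2) ℤ_[p]) - 1) +
          (((a : Matrix (Fin 2) (Fin 2) ℤ_[p]) - 1) + ((b : Matrix (Fin 2) (Fin 2) ℤ_[p]) - 1)) := by
      rw [Units.val_mul]
      noncomm_ring
    rw [key]
    simp only [Matrix.add_apply, Matrix.mul_apply]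
    exact dvd_add (Finset.dvd_sum fun k _ => (ha i k).mul_right _) (dvd_add (ha i j) (hb i j))
  inv_mem' := by
    intro a ha i j
    have key : ((a⁻¹ : (Matrix (Fin 2) (Fin 2) ℤ_[p])ˣ) : Matrix (Fin 2) (Fin 2) ℤ_[p]) - 1 =
        ((a⁻¹ : (Matrix (Fin 2) (Fin 2) ℤ_[p])ˣ) : Matrix (Fin 2) (Fin 2) ℤ_[p]) *
          (1 - (a : Matrix (Fin 2) (Fin 2) ℤ_[p])) := by
      rw [mul_sub, mul_one, Units.inv_mul]
    rw [key, Matrix.mul_apply]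
    refine Finset.dvd_sum fun k _ => Dvd.dvd.mul_left ?_ _
    have hk : ((1 : Matrix (Fin 2) (Fin 2) ℤ_[p]) - (a : Matrix (Fin 2) (Fin 2) ℤ_[p])) k j =
        -(((a : Matrix (Fin 2) (Fin 2) ℤ_[p]) - 1) k j) := by
      simp [Matrix.sub_apply]
    rw [hk]
    exact dvd_neg.mpr (ha k j)


/-- Upper unipotent unit. -/
def upU {R : Type*} [CommRing R] (x : R) : (Matrix (Fin 2) (Fin 2) R)ˣ :=
  ⟨!![1, x; 0, 1], !![1, -x; 0, 1], by simp [Matrix.one_fin_two], by simp [Matrix.one_fin_two]⟩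

/-- Lower unipotent unit. -/
def loU {R : Type*} [CommRing R] (y : R) : (Matrix (Fin 2) (Fin 2) R)ˣ :=
  ⟨!![1, 0; y, 1], !![1, 0; -y, 1], by simp [Matrix.one_fin_two], by simp [Matrix.one_fin_two]⟩

/-- `K(m)` is generated by the upper unipotent matrices `U⁺(m)`, the lower unipotent
matrices `U⁻(m)`, and the diagonal matrices lying in `K(m)`. -/
theorem stmt_7 (p : ℕ) [Fact p.Prime] (m : ℕ) (hm : 1 ≤ m) :
    Subgroup.closure
      ({g : (Matrix (Fin 2) (Fin 2) ℤ_[p])ˣ |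
          ∃ x : ℤ_[p], (p : ℤ_[p]) ^ m ∣ x ∧ (g : Matrix (Fin 2) (Fin 2) ℤ_[p]) = !![1, x; 0, 1]} ∪
        {g : (Matrix (Fin 2) (Fin 2) ℤ_[p])ˣ |
          ∃ y : ℤ_[p], (p : ℤ_[p]) ^ m ∣ y ∧ (g : Matrix (Fin 2) (Fin 2) ℤ_[p]) = !![1, 0; y, 1]} ∪
        {g : (Matrix (Fin 2) (Fin 2) ℤ_[p])ˣ |
          g ∈ congK p m ∧ ∀ i j, i ≠ j → (g : Matrix (Fin 2) (Fin 2) ℤ_[p]) i j = 0}) =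
      congK p m := by
  apply le_antisymm
  · rw [Subgroup.closure_le]
    rintro g ((⟨x, hx, hg⟩ | ⟨x, hx, hg⟩) | ⟨hg, -⟩)
    · intro i j
      rw [hg]
      fin_cases i <;> fin_cases j <;> simp [hx]
    · intro i j
      rw [hg]
      fin_cases i <;> fin_cases j <;> simp [hx]
    · exact hg
  · intro g hg
    have h00 := hg 0 0
    have h01 := hg 0 1
    have h10 := hg 1 0
    simp only [Matrix.sub_apply, Matrix.one_apply_eq, ne_eq, zero_ne_one, one_ne_zero,
      not_false_eq_true, Matrix.one_apply_ne, sub_zero] at h00 h01 h10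
    have ha : IsUnit ((g : Matrix (Fin 2) (Fin 2) ℤ_[p]) 0 0) := by
      have hn : 1 - (g : Matrix (Fin 2) (Fin 2) ℤ_[p]) 0 0 ∈ nonunits ℤ_[p] := by
        intro hu
        have h1 : (p : ℤ_[p]) ∣ 1 - (g : Matrix (Fin 2) (Fin 2) ℤ_[p]) 0 0 :=
          (dvd_pow_self _ (by omega)).trans ((dvd_sub_comm).1 h00)
        exact PadicInt.prime_p.not_isUnit (isUnit_of_dvd_unit h1 hu)
      have := IsLocalRing.isUnit_one_sub_self_of_mem_nonunits _ hn
      simpa using this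
    obtain ⟨u, hu⟩ := ha.exists_right_inv
    set b := (g : Matrix (Fin 2) (Fin 2) ℤ_[p]) 0 1 with hb
    set c := (g : Matrix (Fin 2) (Fin 2) ℤ_[p]) 1 0 with hc
    have hL : loU (c * u) ∈ congK p m := by
      intro i j
      fin_cases i <;> fin_cases j <;> simp [loU, h10.mul_right]
    have hU : upU (b * u) ∈ congK p m := by
      intro i j
      fin_cases i <;> fin_cases j <;> simp [upU, h01.mul_right]
    have e : g = loU (c * u) * ((loU (c * u))⁻¹ * g * (upU (b * u))⁻¹) * upU (b * u) := by group
    rw [e]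
    refine mul_mem (mul_mem (Subgroup.subset_closure ?_) (Subgroup.subset_closure ?_))
      (Subgroup.subset_closure ?_)
    · exact Or.inl (Or.inr ⟨_, h10.mul_right _, rfl⟩)
    · refine Or.inr ⟨mul_mem (mul_mem (inv_mem hL) hg) (inv_mem hU), ?_⟩
      have e1 : (((loU (c * u))⁻¹ : (Matrix (Fin 2) (Fin 2) ℤ_[p])ˣ) :
        Matrix (Fin 2) (Fin 2) ℤ_[p]) = !![1, 0; -(c * u), 1] := rfl
      have e2 : (((upU (b * u))⁻¹ : (Matrix (Fin 2) (Fin 2) ℤ_[p])ˣ) :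
        Matrix (Fin 2) (Fin 2) ℤ_[p]) = !![1, -(b * u); 0, 1] := rfl
      intro i j hij
      rw [Units.val_mul, Units.val_mul, e1, e2, Matrix.eta_fin_two (g : Matrix (Fin 2) (Fin 2) ℤ_[p]), ← hb, ← hc]
      fin_cases i <;> fin_cases j
      · simp at hij
      · simp
        linear_combination (-b) * hu
      · simp
        linear_combination (-c) * hu
      · simp at hij
    · exact Or.inl (Or.inl ⟨_, h01.mul_right _, rfl⟩)
end

section
/- Let p be an odd prime, r ≥ 1 an integer, b a unit of ℤ_p, and τ = [[b, 0],[0, −b]] ∈ M₂(ℤ_p). If k ∈ GL₂(ℤ_p) satisfies k τ k⁻¹ − τ ∈ p^r M₂(ℤ_p) (entrywise), then both off-diagonal entries of k lie in p^r ℤ_p; in particular k = d·k₁ with d an invertible diagonal matrix over ℤ_p and k₁ ∈ K(r). -/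
/-- If `k ∈ GL₂(ℤ_p)` almost commutes with `τ = diag(b, −b)` (`b` a unit), in the sense that
`k τ k⁻¹ − τ ∈ p^r M₂(ℤ_p)`, then the off-diagonal entries of `k` lie in `p^r ℤ_p`;
in particular `k = d·k₁` with `d` invertible diagonal and `k₁ ∈ K(r)`. -/
theorem stmt_9 (p : ℕ) [Fact p.Prime] (hp : Odd p) (r : ℕ) (hr : 1 ≤ r)
    (b : ℤ_[p]) (hb : IsUnit b)
    (k : (Matrix (Fin 2) (Fin 2) ℤ_[p])ˣ)
    (hk : ∀ i j, (p : ℤ_[p]) ^ r ∣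
      ((k : Matrix (Fin 2) (Fin 2) ℤ_[p]) * !![b, 0; 0, -b] *
          ((k⁻¹ : (Matrix (Fin 2) (Fin 2) ℤ_[p])ˣ) : Matrix (Fin 2) (Fin 2) ℤ_[p]) -
        !![b, 0; 0, -b]) i j) :
    ((p : ℤ_[p]) ^ r ∣ (k : Matrix (Fin 2) (Fin 2) ℤ_[p]) 0 1 ∧
      (p : ℤ_[p]) ^ r ∣ (k : Matrix (Fin 2) (Fin 2) ℤ_[p]) 1 0) ∧
    ∃ d k₁ : (Matrix (Fin 2) (Fin 2) ℤ_[p])ˣ,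
      (∀ i j, i ≠ j → (d : Matrix (Fin 2) (Fin 2) ℤ_[p]) i j = 0) ∧
      (∀ i j, (p : ℤ_[p]) ^ r ∣ ((k₁ : Matrix (Fin 2) (Fin 2) ℤ_[p]) - 1) i j) ∧
      k = d * k₁ := by
  have hp2 : IsUnit (2 : ℤ_[p]) := by
    have h := (PadicInt.isUnit_iff (p := p) (z := ((2 : ℤ) : ℤ_[p]))).2 (by
      by_contra hne
      have hlt : ‖((2 : ℤ) : ℤ_[p])‖ < 1 := lt_of_le_of_ne (PadicInt.norm_le_one _) hne
      rw [PadicInt.norm_int_lt_one_iff_dvd] at hlt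
      have h2 : p ∣ 2 := by exact_mod_cast hlt
      have := (Nat.prime_dvd_prime_iff_eq Fact.out Nat.prime_two).1 h2
      subst this
      exact absurd hp (by decide))
    exact_mod_cast h
  have h2b : IsUnit (2 * b) := hp2.mul hb
  have hM : ∀ i j, (p : ℤ_[p]) ^ r ∣ ((k : Matrix (Fin 2) (Fin 2) ℤ_[p]) * !![b, 0; 0, -b] -
      !![b, 0; 0, -b] * (k : Matrix (Fin 2) (Fin 2) ℤ_[p])) i j := by
    intro i j
    have e : (k : Matrix (Fin 2) (Fin 2) ℤ_[p]) * !![b, 0; 0, -b] -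
      !![b, 0; 0, -b] * (k : Matrix (Fin 2) (Fin 2) ℤ_[p]) =
      ((k : Matrix (Fin 2) (Fin 2) ℤ_[p]) * !![b, 0; 0, -b] *
          ((k⁻¹ : (Matrix (Fin 2) (Fin 2) ℤ_[p])ˣ) : Matrix (Fin 2) (Fin 2) ℤ_[p]) -
        !![b, 0; 0, -b]) * (k : Matrix (Fin 2) (Fin 2) ℤ_[p]) := by
      rw [sub_mul, Units.inv_mul_cancel_right]
    rw [e, Matrix.mul_apply]
    exact Finset.dvd_sum fun l _ => Dvd.dvd.mul_right (hk i l) _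
  have hdet : IsUnit (k : Matrix (Fin 2) (Fin 2) ℤ_[p]).det :=
    (Matrix.isUnit_iff_isUnit_det _).1 k.isUnit
  clear hk
  have h01 : (p : ℤ_[p]) ^ r ∣ (k : Matrix (Fin 2) (Fin 2) ℤ_[p]) 0 1 := by
    have h := hM 0 1
    simp only [Matrix.sub_apply, Matrix.mul_apply, Fin.sum_univ_two] at h
    simp at h
    rw [← h2b.dvd_mul_left, ← dvd_neg]
    convert h using 1
    ring
  have h10 : (p : ℤ_[p]) ^ r ∣ (k : Matrix (Fin 2) (Fin 2) ℤ_[p]) 1 0 := by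
    have h := hM 1 0
    simp only [Matrix.sub_apply, Matrix.mul_apply, Fin.sum_univ_two] at h
    simp at h
    rw [← h2b.dvd_mul_left]
    convert h using 1
    ring
  refine ⟨⟨h01, h10⟩, ?_⟩
  have hprod : IsUnit ((k : Matrix (Fin 2) (Fin 2) ℤ_[p]) 0 0 *
      (k : Matrix (Fin 2) (Fin 2) ℤ_[p]) 1 1) := by
    by_contra hn
    have hm : (k : Matrix (Fin 2) (Fin 2) ℤ_[p]) 0 1 *
        (k : Matrix (Fin 2) (Fin 2) ℤ_[p]) 1 0 ∈ nonunits ℤ_[p] := by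
      intro hu
      have hu1 := isUnit_of_mul_isUnit_left hu
      have hpu : IsUnit (p : ℤ_[p]) :=
        isUnit_of_dvd_unit ((dvd_pow_self _ (by omega)).trans h01) hu1
      exact PadicInt.prime_p.not_unit hpu
    have hn' : (k : Matrix (Fin 2) (Fin 2) ℤ_[p]) 0 0 *
        (k : Matrix (Fin 2) (Fin 2) ℤ_[p]) 1 1 ∈ IsLocalRing.maximalIdeal ℤ_[p] := hn
    have := (IsLocalRing.maximalIdeal ℤ_[p]).sub_mem hn' hm
    rw [← Matrix.det_fin_two] at this
    exact this hdet
  obtain ⟨u, hu⟩ := isUnit_of_mul_isUnit_left hprod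
  obtain ⟨v, hv⟩ := isUnit_of_mul_isUnit_right hprod
  let d : (Matrix (Fin 2) (Fin 2) ℤ_[p])ˣ :=
    ⟨!![(u : ℤ_[p]), 0; 0, (v : ℤ_[p])],
      !![((u⁻¹ : ℤ_[p]ˣ) : ℤ_[p]), 0; 0, ((v⁻¹ : ℤ_[p]ˣ) : ℤ_[p])],
      by simp [Matrix.one_fin_two], by simp [Matrix.one_fin_two]⟩
  refine ⟨d, d⁻¹ * k, ?_, ?_, by simp⟩
  · intro i j hij
    fin_cases i <;> fin_cases j <;> simp_all [d]
  · intro i j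
    have e : ((d⁻¹ : (Matrix (Fin 2) (Fin 2) ℤ_[p])ˣ) : Matrix (Fin 2) (Fin 2) ℤ_[p]) =
      !![((u⁻¹ : ℤ_[p]ˣ) : ℤ_[p]), 0; 0, ((v⁻¹ : ℤ_[p]ˣ) : ℤ_[p])] := rfl
    rw [Units.val_mul, e, Matrix.sub_apply, Matrix.mul_apply, Fin.sum_univ_two]
    fin_cases i <;> fin_cases j
    · simp [← hu]
    · simpa using h01
    · simpa using h10
    · simp [← hv]
end

section
/- Let p be a prime and m ≥ 1 an integer. Let B(ℤ_p) denote the upper triangular matrices in GL₂(ℤ_p), and let K_H(m,m) denote the set of matrices in GL₂(ℤ_p) both of whose off-diagonal entries lie in p^m ℤ_p. Then GL₂(ℤ_p) is the disjoint union of the double cosets B(ℤ_p)·γᵢ·K_H(m,m) for i = 1, …, m and B(ℤ_p)·γ̃ⱼ·K_H(m,m) for j = 0, …, m, where γᵢ = [[1, 0],[pⁱ, 1]] and γ̃ⱼ = [[0, −1],[1, pʲ]]. -/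
lemma aux_approx (p : ℕ) [Fact p.Prime] (m : ℕ) (d : ℤ_[p]) :
    ∃ e ≤ m, ∃ u r : ℤ_[p], IsUnit u ∧ (p : ℤ_[p]) ^ m ∣ r ∧ d = (p : ℤ_[p]) ^ e * u + r := by
  by_cases h : (p : ℤ_[p]) ^ m ∣ d
  · exact ⟨m, le_rfl, 1, d - (p : ℤ_[p]) ^ m, isUnit_one, dvd_sub h dvd_rfl, by ring⟩
  · have hd : d ≠ 0 := by rintro rfl; exact h (dvd_zero _)
    have hs := PadicInt.unitCoeff_spec hd
    refine ⟨d.valuation, ?_, (PadicInt.unitCoeff hd : ℤ_[p]), 0, Units.isUnit _, dvd_zero _, ?_⟩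
    · by_contra hlt
      apply h
      rw [hs]
      exact Dvd.dvd.mul_left (pow_dvd_pow _ (by omega)) _
    · rw [add_zero, mul_comm]; exact hs

lemma aux_not_dvd (p : ℕ) [Fact p.Prime] {x : ℤ_[p]} (h : IsUnit x) : ¬ (p : ℤ_[p]) ∣ x :=
  fun hx => PadicInt.prime_p.not_unit (isUnit_of_dvd_unit hx h)

lemma aux_unit (p : ℕ) [Fact p.Prime] {x : ℤ_[p]} (h : ¬ (p : ℤ_[p]) ∣ x) : IsUnit x := by
  by_contra hx
  apply h
  rw [← PadicInt.norm_lt_one_iff_dvd]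
  exact lt_of_le_of_ne (PadicInt.norm_le_one x) (fun h1 => hx (PadicInt.isUnit_iff.2 h1))

lemma aux_b (p : ℕ) [Fact p.Prime] (g h : Matrix (Fin 2) (Fin 2) ℤ_[p]) (hg : IsUnit g.det)
    (hh : IsUnit h.det) (h0 : g 1 0 = h 1 0) (h1 : g 1 1 = h 1 1) :
    ∃ b : Matrix (Fin 2) (Fin 2) ℤ_[p], (IsUnit b.det ∧ b 1 0 = 0) ∧ g = b * h := by
  have hb : g * h⁻¹ * h = g := by rw [Matrix.mul_assoc, Matrix.nonsing_inv_mul _ hh, mul_one]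
  generalize g * h⁻¹ = b at hb
  refine ⟨b, ⟨?_, ?_⟩, hb.symm⟩
  · rw [← hb, Matrix.det_mul] at hg
    exact isUnit_of_mul_isUnit_left hg
  · have e0 := congrFun (congrFun hb 1) 0
    have e1 := congrFun (congrFun hb 1) 1
    simp only [Matrix.mul_apply, Fin.sum_univ_two] at e0 e1
    have hz : b 1 0 * h.det = 0 := by
      rw [Matrix.det_fin_two]
      linear_combination h 1 1 * e0 - h 1 0 * e1 + h 1 1 * h0 - h 1 0 * h1
    exact (hh.mul_left_eq_zero).1 hz

lemma aux_inv (p : ℕ) [Fact p.Prime] (m : ℕ) (hm : 1 ≤ m)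
    (g b γ k : Matrix (Fin 2) (Fin 2) ℤ_[p]) (hb : IsUnit b.det) (hb0 : b 1 0 = 0)
    (hk : IsUnit k.det) (h1 : (p : ℤ_[p]) ^ m ∣ k 0 1) (h2 : (p : ℤ_[p]) ^ m ∣ k 1 0)
    (hg : g = b * γ * k) (e : ℕ) (he : e ≤ m) :
    ((p : ℤ_[p]) ^ e ∣ g 1 0 ↔ (p : ℤ_[p]) ^ e ∣ γ 1 0) ∧
    ((p : ℤ_[p]) ^ e ∣ g 1 1 ↔ (p : ℤ_[p]) ^ e ∣ γ 1 1) := by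
  have hb1 : IsUnit (b 1 1) := by
    rw [Matrix.det_fin_two, hb0, mul_zero, sub_zero] at hb
    exact isUnit_of_mul_isUnit_right hb
  have hp1 : (p : ℤ_[p]) ∣ k 0 1 := (dvd_pow_self _ (by omega)).trans h1
  have hkk : IsUnit (k 0 0 * k 1 1) := by
    apply aux_unit
    intro hd
    apply aux_not_dvd p hk
    rw [Matrix.det_fin_two]
    exact dvd_sub hd (hp1.mul_right _)
  have hk0 := isUnit_of_mul_isUnit_left hkk
  have hk1 := isUnit_of_mul_isUnit_right hkk
  have d1 := (pow_dvd_pow (p : ℤ_[p]) he).trans h1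
  have d2 := (pow_dvd_pow (p : ℤ_[p]) he).trans h2
  have g0 : g 1 0 = b 1 1 * (γ 1 0 * k 0 0 + γ 1 1 * k 1 0) := by
    subst hg
    simp only [Matrix.mul_apply, Fin.sum_univ_two, hb0]; ring
  have g1 : g 1 1 = b 1 1 * (γ 1 1 * k 1 1 + γ 1 0 * k 0 1) := by
    subst hg
    simp only [Matrix.mul_apply, Fin.sum_univ_two, hb0]; ring
  constructor
  · rw [g0, hb1.dvd_mul_left, dvd_add_left (d2.mul_left _), hk0.dvd_mul_right]
  · rw [g1, hb1.dvd_mul_left, dvd_add_left (d1.mul_left _), hk1.dvd_mul_right]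



/-- Double coset decomposition: `GL₂(ℤ_p)` is the disjoint union of the double cosets
`B(ℤ_p)·γᵢ·K_H(m,m)` for `i = 1, …, m` and `B(ℤ_p)·γ̃ⱼ·K_H(m,m)` for `j = 0, …, m`,
where `γᵢ = [[1,0],[pⁱ,1]]` and `γ̃ⱼ = [[0,−1],[1,pʲ]]`. -/
theorem stmt_10 (p : ℕ) [Fact p.Prime] (m : ℕ) (hm : 1 ≤ m) :
    ∀ g : Matrix (Fin 2) (Fin 2) ℤ_[p], IsUnit g.det →
      ∃! c : Fin m ⊕ Fin (m + 1),
        ∃ b : Matrix (Fin 2) (Fin 2) ℤ_[p], (IsUnit b.det ∧ b 1 0 = 0) ∧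
        ∃ k : Matrix (Fin 2) (Fin 2) ℤ_[p],
          (IsUnit k.det ∧ (p : ℤ_[p]) ^ m ∣ k 0 1 ∧ (p : ℤ_[p]) ^ m ∣ k 1 0) ∧
          g = b *
            (Sum.elim (fun i : Fin m => !![1, 0; (p : ℤ_[p]) ^ ((i : ℕ) + 1), 1])
              (fun j : Fin (m + 1) => !![0, -1; 1, (p : ℤ_[p]) ^ (j : ℕ)]) c) * k := by
  intro g hg
  have hP : ∀ a b : ℕ, (p : ℤ_[p]) ^ a ∣ (p : ℤ_[p]) ^ b ↔ a ≤ b := fun a b =>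
    pow_dvd_pow_iff PadicInt.prime_p.ne_zero PadicInt.prime_p.not_unit
  apply existsUnique_of_exists_of_unique
  · have hdet := hg
    rw [Matrix.det_fin_two] at hdet
    by_cases hc : (p : ℤ_[p]) ∣ g 1 0
    · have hd : IsUnit (g 1 1) := by
        apply aux_unit
        intro hd
        exact aux_not_dvd p hdet (dvd_sub (hd.mul_left _) (hc.mul_left _))
      obtain ⟨e, he, u, r, hu, hr, h⟩ := aux_approx p m (g 1 0)
      have he1 : 1 ≤ e := by
        by_contra h0
        obtain rfl : e = 0 := by omega
        apply aux_not_dvd p hu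
        have : u = g 1 0 - r := by rw [h]; ring
        rw [this]
        exact dvd_sub hc ((dvd_pow_self _ (by omega)).trans hr)
      have hkd : IsUnit (!![u, 0; r, g 1 1]).det := by
        rw [Matrix.det_fin_two]; simpa using ⟨hu, hd⟩
      obtain ⟨b, hb, hgb⟩ := aux_b p g (!![1, 0; (p : ℤ_[p]) ^ e, 1] * !![u, 0; r, g 1 1]) hg
        (by rw [Matrix.det_mul]; exact IsUnit.mul (by simp [Matrix.det_fin_two]) hkd)
        (by simp [Matrix.mul_apply, Fin.sum_univ_two, ← h]) 
        (by simp [Matrix.mul_apply, Fin.sum_univ_two])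
      refine ⟨Sum.inl ⟨e - 1, by omega⟩, b, hb, _, ⟨hkd, by simp, by simpa using hr⟩, ?_⟩
      have : e - 1 + 1 = e := by omega
      simp only [Sum.elim_inl, this]
      rw [Matrix.mul_assoc]; exact hgb
    · have hd := aux_unit p hc
      obtain ⟨e, he, u, r, hu, hr, h⟩ := aux_approx p m (g 1 1)
      have hkd : IsUnit (!![g 1 0, r; 0, u]).det := by
        rw [Matrix.det_fin_two]; simpa using ⟨hd, hu⟩
      obtain ⟨b, hb, hgb⟩ := aux_b p g (!![0, -1; 1, (p : ℤ_[p]) ^ e] * !![g 1 0, r; 0, u]) hg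
        (by rw [Matrix.det_mul]; exact IsUnit.mul (by simp [Matrix.det_fin_two]) hkd)
        (by simp [Matrix.mul_apply, Fin.sum_univ_two]) 
        (by simp [Matrix.mul_apply, Fin.sum_univ_two]; rw [h]; ring)
      refine ⟨Sum.inr ⟨e, by omega⟩, b, hb, _, ⟨hkd, by simpa using hr, by simp⟩, ?_⟩
      simp only [Sum.elim_inr]
      rw [Matrix.mul_assoc]; exact hgb
  · rintro c1 c2 ⟨b, ⟨hb, hb0⟩, k, ⟨hk, h1, h2⟩, e1⟩ ⟨b', ⟨hb', hb0'⟩, k', ⟨hk', h1', h2'⟩, e2⟩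
    have I1 := aux_inv p m hm g b _ k hb hb0 hk h1 h2 e1
    have I2 := aux_inv p m hm g b' _ k' hb' hb0' hk' h1' h2' e2
    clear e1 e2
    have J := fun e he => (I1 e he).1.symm.trans (I2 e he).1
    have J' := fun e he => (I1 e he).2.symm.trans (I2 e he).2
    clear I1 I2
    have hP1 : ∀ a : ℕ, (p : ℤ_[p]) ^ a ∣ 1 ↔ a ≤ 0 := fun a => by rw [← hP a 0, pow_zero]
    rcases c1 with i | i <;> rcases c2 with j | j <;>
      simp only [Sum.elim_inl, Sum.elim_inr, Matrix.of_apply, Matrix.cons_val_zero,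
        Matrix.cons_val_one, Matrix.cons_val', Matrix.cons_val_fin_one, hP, hP1] at J J'
    · have a := J (i + 1) (by omega)
      have b := J (j + 1) (by omega)
      congr 1; ext; omega
    · have a := J 1 hm
      omega
    · have a := J 1 hm
      omega
    · have a := J' i (by omega)
      have b := J' j (by omega)
      congr 1; ext; omega
end

section
/- Let p be an odd prime, r ≥ 1 an integer, b a unit of ℤ_p, and τ = [[b, 0],[0, −b]]. Let g = [[t, x],[0, 1]] with t ∈ ℚ_p nonzero and x ∈ ℚ_p. If there exist matrices X, X' ∈ p^r M₂(ℤ_p) with τ + X = g (τ + X') g⁻¹, then either x ∈ p^r ℤ_p or v_p(t) ≤ v_p(x) − r; in either case g ∈ K(r)·D·K(r), i.e. g = k₁ d k₂ for some k₁, k₂ ∈ K(r) and some invertible diagonal matrix d over ℚ_p. -/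
/-- If `τ + X = g (τ + X') g⁻¹` with `τ = diag(b, −b)`, `b` a unit of `ℤ_p`,
`X, X' ∈ p^r M₂(ℤ_p)` and `g = [[t, x],[0, 1]]`, then either `x ∈ p^r ℤ_p` or
`v_p(t) ≤ v_p(x) − r`; in either case `g ∈ K(r)·D·K(r)`. -/
theorem stmt_11 (p : ℕ) [Fact p.Prime] (hp : Odd p) (r : ℕ) (hr : 1 ≤ r)
    (b : ℤ_[p]) (hb : IsUnit b)
    (t x : ℚ_[p]) (ht : t ≠ 0)
    (X X' : Matrix (Fin 2) (Fin 2) ℚ_[p])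
    (hX : ∀ i j, ‖X i j‖ ≤ (p : ℝ) ^ (-(r : ℤ)))
    (hX' : ∀ i j, ‖X' i j‖ ≤ (p : ℝ) ^ (-(r : ℤ)))
    (heq : !![(b : ℚ_[p]), 0; 0, -(b : ℚ_[p])] + X =
      !![t, x; 0, 1] * (!![(b : ℚ_[p]), 0; 0, -(b : ℚ_[p])] + X') * (!![t, x; 0, 1])⁻¹) :
    (‖x‖ ≤ (p : ℝ) ^ (-(r : ℤ)) ∨ t.valuation ≤ x.valuation - (r : ℤ)) ∧
    ∃ k₁ k₂ : Matrix (Fin 2) (Fin 2) ℚ_[p], ∃ d₁ d₂ : ℚ_[p],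
      (∀ i j, ‖(k₁ - 1) i j‖ ≤ (p : ℝ) ^ (-(r : ℤ))) ∧
      (∀ i j, ‖(k₂ - 1) i j‖ ≤ (p : ℝ) ^ (-(r : ℤ))) ∧
      d₁ ≠ 0 ∧ d₂ ≠ 0 ∧ !![t, x; 0, 1] = k₁ * !![d₁, 0; 0, d₂] * k₂ := by
  have hp1 : (1 : ℝ) < p := by exact_mod_cast (Fact.out : p.Prime).one_lt
  have hq0 : (0 : ℝ) < (p : ℝ) ^ (-(r : ℤ)) := by positivity
  have hq1 : (p : ℝ) ^ (-(r : ℤ)) < 1 := zpow_lt_one_of_neg₀ hp1 (by omega)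
  have hdet : IsUnit (!![t, x; 0, 1] : Matrix (Fin 2) (Fin 2) ℚ_[p]).det := by
    simp [Matrix.det_fin_two, ht]
  have h2 : (!![(b : ℚ_[p]), 0; 0, -(b : ℚ_[p])] + X) * !![t, x; 0, 1] =
      !![t, x; 0, 1] * (!![(b : ℚ_[p]), 0; 0, -(b : ℚ_[p])] + X') := by
    rw [heq, Matrix.nonsing_inv_mul_cancel_right _ _ hdet]
  have h3 := congrFun (congrFun h2 0) 1
  simp [Matrix.mul_apply, Fin.sum_univ_two] at h3
  have h4 : (2 * (b : ℚ_[p]) + (X 0 0 - X' 1 1)) * x = t * X' 0 1 - X 0 1 := by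
    linear_combination h3
  have hb1 : ‖(b : ℚ_[p])‖ = 1 := by
    rw [PadicInt.padic_norm_e_of_padicInt]; exact PadicInt.isUnit_iff.mp hb
  have h21 : ‖(2 : ℚ_[p])‖ = 1 := by
    have : ‖((2 : ℕ) : ℚ_[p])‖ = 1 := by
      rw [Padic.norm_natCast_eq_one_iff]
      exact (Nat.coprime_two_right).mpr hp
    exact_mod_cast this
  have h2b : ‖2 * (b : ℚ_[p])‖ = 1 := by rw [norm_mul, h21, hb1, one_mul]
  have hs : ∀ u v : ℚ_[p], ‖u - v‖ ≤ max ‖u‖ ‖v‖ := fun u v => by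
    simpa [sub_eq_add_neg] using Padic.nonarchimedean u (-v)
  have hd : ‖X 0 0 - X' 1 1‖ < 1 :=
    ((hs _ _).trans (max_le (hX _ _) (hX' _ _))).trans_lt hq1
  have h5 : ‖2 * (b : ℚ_[p]) + (X 0 0 - X' 1 1)‖ = 1 := by
    rw [Padic.add_eq_max_of_ne (by rw [h2b]; exact hd.ne'), h2b, max_eq_left hd.le]
  have h6 : ‖x‖ ≤ max ‖t * X' 0 1‖ ‖X 0 1‖ := by
    have := congrArg norm h4
    rw [norm_mul, h5, one_mul] at this
    rw [this]; exact hs _ _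
  have key : ‖x‖ ≤ (p : ℝ) ^ (-(r : ℤ)) ∨ ‖x‖ ≤ ‖t‖ * (p : ℝ) ^ (-(r : ℤ)) := by
    rcases le_max_iff.mp h6 with h | h
    · right
      rw [norm_mul] at h
      exact h.trans (mul_le_mul_of_nonneg_left (hX' _ _) (norm_nonneg _))
    · exact Or.inl (h.trans (hX _ _))
  constructor
  · rcases key with h | h
    · exact Or.inl h
    · by_cases hx : x = 0
      · left; simp [hx]
      · right
        rw [Padic.norm_eq_zpow_neg_valuation hx, Padic.norm_eq_zpow_neg_valuation ht,
          ← zpow_add₀ (by positivity), zpow_le_zpow_iff_right₀ hp1] at h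
        omega
  · rcases key with h | h
    · refine ⟨!![1, x; 0, 1], 1, t, 1, ?_, ?_, ht, one_ne_zero, ?_⟩
      · intro i j
        fin_cases i <;> fin_cases j <;> simp
        simpa using h
      · intro i j
        simp
      · ext i j
        fin_cases i <;> fin_cases j <;> simp [Matrix.mul_apply]
    · have h' : ‖x / t‖ ≤ (p : ℝ) ^ (-(r : ℤ)) := by
        rw [norm_div, div_le_iff₀ (norm_pos_iff.mpr ht), mul_comm]; exact h
      rw [norm_div] at h'
      refine ⟨1, !![1, x / t; 0, 1], t, 1, ?_, ?_, ht, one_ne_zero, ?_⟩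
      · intro i j
        simp
      · intro i j
        fin_cases i <;> fin_cases j <;> simp
        simpa using h'
      · ext i j
        fin_cases i <;> fin_cases j <;> simp [Matrix.mul_apply]
        field_simp
end

section
/- Let p be a prime and let n ≥ 1 and 0 ≤ l ≤ n be integers. Let c₂, c₀ ∈ ℤ_p with c₂ of p-adic valuation exactly l (i.e. c₂ = p^l u with u a unit of ℤ_p). Then the number of residues α ∈ ℤ/p^nℤ satisfying α ≡ 1 (mod p) and c₂ α² ≡ c₀ (mod p^n) is at most 2·p^{(n+l)/2}. -/
lemma aux_dvd (p : ℤ) (hp : Prime p) (x y : ℤ) (k : ℕ) :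
    ∀ m : ℕ, 2 * k ≤ m + 1 → p ^ m ∣ x * y → p ^ k ∣ x ∨ p ^ k ∣ y := by
  induction k with
  | zero => intro m _ _; left; simp
  | succ k ih =>
    intro m hm h
    have key : ∀ x y : ℤ, p ^ m ∣ x * y → p ^ k ∣ x → p ^ (k+1) ∣ x ∨ p ^ (k+1) ∣ y := by
      rintro x y h ⟨z, rfl⟩
      by_cases hz : p ∣ z
      · left
        rw [pow_succ]
        exact mul_dvd_mul_left _ hz
      · right
        have h1 : p ^ k * p ^ (k+1) ∣ p ^ k * (z * y) := by
          rw [← pow_add, ← mul_assoc]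
          exact (pow_dvd_pow p (by omega)).trans h
        have h2 := (mul_dvd_mul_iff_left (pow_ne_zero k hp.ne_zero)).1 h1
        exact hp.pow_dvd_of_dvd_mul_left (k+1) hz h2
    rcases ih m (by omega) h with h1 | h1
    · exact key x y h h1
    · exact (key y x (by rwa [mul_comm]) h1).symm

lemma aux_fiber (p : ℕ) (hp : p.Prime) (n k : ℕ) (hk : k ≤ n) (b : ℤ) :
    Set.ncard {α : ZMod (p ^ n) | (p : ℤ) ^ k ∣ (α.val : ℤ) - b} ≤ p ^ (n - k) := by
  have : NeZero (p ^ n) := ⟨pow_ne_zero _ hp.ne_zero⟩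
  have hpos : 0 < p ^ k := pow_pos hp.pos k
  have := Set.ncard_le_ncard_of_injOn (s := {α : ZMod (p ^ n) | (p : ℤ) ^ k ∣ (α.val : ℤ) - b})
    (t := (Finset.range (p ^ (n - k)) : Set ℕ)) (fun α => α.val / p ^ k) ?_ ?_
    (Finset.finite_toSet _)
  · simpa [Set.ncard_coe_finset] using this
  · intro α _
    simp only [Finset.coe_range, Set.mem_Iio]
    rw [Nat.div_lt_iff_lt_mul hpos, ← pow_add, Nat.sub_add_cancel hk]
    exact ZMod.val_lt α
  · intro α hα β hβ h
    simp only [Set.mem_setOf_eq] at hα hβ h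
    apply ZMod.val_injective
    have h3 : ((p ^ k : ℕ) : ℤ) ∣ (β.val : ℤ) - α.val := by
      have := dvd_sub hβ hα
      push_cast
      simpa using this
    have h4 : α.val % p ^ k = β.val % p ^ k := (Nat.modEq_iff_dvd.2 h3)
    rw [← Nat.div_add_mod α.val (p ^ k), ← Nat.div_add_mod β.val (p ^ k), h, h4]


/-- The number of residues `α ∈ ℤ/p^nℤ` with `α ≡ 1 (mod p)` and `c₂ α² ≡ c₀ (mod p^n)`,
where `v_p(c₂) = l ≤ n`, is at most `2·p^((n+l)/2)`. -/
theorem stmt_12 (p : ℕ) [Fact p.Prime] (n l : ℕ) (hn : 1 ≤ n) (hl : l ≤ n)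
    (c₂ c₀ : ℤ_[p]) (hc₂ : ∃ u : ℤ_[p]ˣ, c₂ = (p : ℤ_[p]) ^ l * (u : ℤ_[p])) :
    (Nat.card {α : ZMod (p ^ n) |
        ZMod.castHom (dvd_pow_self p (Nat.one_le_iff_ne_zero.mp hn)) (ZMod p) α = 1 ∧
        PadicInt.toZModPow n c₂ * α ^ 2 = PadicInt.toZModPow n c₀} : ℝ) ≤
      2 * (p : ℝ) ^ (((n : ℝ) + (l : ℝ)) / 2) := by
  obtain ⟨u, rfl⟩ := hc₂
  have hp : p.Prime := Fact.out
  have : NeZero (p ^ n) := ⟨pow_ne_zero _ hp.ne_zero⟩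
  set S := {α : ZMod (p ^ n) |
        ZMod.castHom (dvd_pow_self p (Nat.one_le_iff_ne_zero.mp hn)) (ZMod p) α = 1 ∧
        PadicInt.toZModPow n ((p : ℤ_[p]) ^ l * (u : ℤ_[p])) * α ^ 2 =
          PadicInt.toZModPow n c₀} with hS
  set k := (n - l + 1) / 2 with hk
  have hkn : k ≤ n := by omega
  have hcard : Nat.card S ≤ 2 * p ^ (n - k) := by
    rw [Nat.card_coe_set_eq]
    rcases S.eq_empty_or_nonempty with h0 | ⟨β, hβ⟩
    · rw [h0]; simp
    have hsub : S ⊆ {α : ZMod (p ^ n) | (p : ℤ) ^ k ∣ (α.val : ℤ) - (β.val : ℤ)} ∪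
        {α : ZMod (p ^ n) | (p : ℤ) ^ k ∣ (α.val : ℤ) - (-(β.val : ℤ))} := by
      intro α hα
      have h1 := hα.2.trans hβ.2.symm
      have hu : IsUnit (PadicInt.toZModPow n (u : ℤ_[p])) := u.isUnit.map _
      rw [map_mul, map_pow, map_natCast] at h1
      have h2 : (p : ZMod (p ^ n)) ^ l * (α ^ 2 - β ^ 2) = 0 := by
        apply hu.mul_left_cancel
        linear_combination h1
      have h3 : (((p : ℤ) ^ l * (((α.val : ℤ) - β.val) * ((α.val : ℤ) - (-(β.val : ℤ)))) : ℤ) :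
          ZMod (p ^ n)) = 0 := by
        push_cast
        rw [ZMod.natCast_zmod_val, ZMod.natCast_zmod_val]
        linear_combination h2
      rw [ZMod.intCast_zmod_eq_zero_iff_dvd] at h3
      push_cast at h3
      have hpz : Prime (p : ℤ) := Nat.prime_iff_prime_int.1 hp
      have h4 : (p : ℤ) ^ n = p ^ l * p ^ (n - l) := by
        rw [← pow_add]; congr 1; omega
      rw [h4] at h3
      have h5 := (mul_dvd_mul_iff_left (pow_ne_zero l hpz.ne_zero)).1 h3
      exact aux_dvd p hpz _ _ k (n - l) (by omega) h5
    have a1 := aux_fiber p hp n k hkn (β.val : ℤ)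
    have a2 := aux_fiber p hp n k hkn (-(β.val : ℤ))
    have a3 := Set.ncard_le_ncard hsub (Set.toFinite _)
    have a4 := a3.trans (Set.ncard_union_le _ _)
    omega
  calc (Nat.card S : ℝ) ≤ ((2 * p ^ (n - k) : ℕ) : ℝ) := by exact_mod_cast hcard
    _ = 2 * (p : ℝ) ^ ((n - k : ℕ) : ℝ) := by rw [Real.rpow_natCast]; push_cast; rfl
    _ ≤ _ := by
      have h1 : (1 : ℝ) ≤ p := by exact_mod_cast hp.one_lt.le
      have h2 : ((n - k : ℕ) : ℝ) ≤ ((n : ℝ) + l) / 2 := by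
        have : 2 * (n - k) ≤ n + l := by omega
        have : (2 * ((n - k : ℕ) : ℝ)) ≤ n + l := by exact_mod_cast this
        linarith
      have := Real.rpow_le_rpow_of_exponent_le h1 h2
      linarith
end

section
/- Let p be a prime, n ≥ 1 an integer, and g = [[t, u],[v, w]] ∈ GL₂(ℤ_p). Define l ∈ ℕ by: l = min(2n + v_p(v), 4n) if w is a unit of ℤ_p, and l = max(0, 2n − v_p(w)) if v_p(w) > 0 (in which case v is necessarily a unit); and define t₀ = −2n − 2·min(2n, v_p(v)) (with the convention v_p(0) = +∞). Then there exist a scalar λ ∈ ℚ_p^×, x ∈ ℚ_p, y ∈ ℚ_p^×, and k ∈ GL₂(ℤ_p) such that g·[[p^{2n}, 0],[0, 1]] = λ·[[1, x],[0, 1]]·[[y, 0],[0, 1]]·k, with min(v_p(k₂₁), 4n) = l and v_p(y) = t₀ + 2l, where k₂₁ is the lower-left entry of k. -/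
open scoped Classical

/-- The `p`-adic valuation of an element of `ℤ_p`, valued in `ℕ∞`, with `v_p(0) = ⊤`. -/
noncomputable def padicValE (p : ℕ) [Fact p.Prime] (x : ℤ_[p]) : ℕ∞ :=
  if x = 0 then ⊤ else ((x.valuation : ℕ) : ℕ∞)

lemma unit_val (p : ℕ) [Fact p.Prime] (x : ℤ_[p]) (h : IsUnit x) : x.valuation = 0 := by
  have h3 := PadicInt.norm_eq_zpow_neg_valuation h.ne_zero
  rw [PadicInt.isUnit_iff.1 h] at h3
  have hp1 : (1 : ℝ) < p := by exact_mod_cast (Fact.out : p.Prime).one_lt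
  have := (zpow_eq_one_iff_right₀ (by positivity) hp1.ne').1 h3.symm
  simpa using this

lemma coe_ne (p : ℕ) [Fact p.Prime] (x : ℤ_[p]) (h : x ≠ 0) : (x : ℚ_[p]) ≠ 0 :=
  fun h' => h (Subtype.ext h')

lemma iwasawa_aux (p : ℕ) [Fact p.Prime] (A B c d lam r s : ℚ_[p]) (hlam : lam ≠ 0)
    (hD : A * d - B * c ≠ 0) (hc : c = lam * r) (hd : d = lam * s)
    (hr : ‖r‖ ≤ 1) (hs : ‖s‖ ≤ 1) (hrs : ‖r‖ = 1 ∨ ‖s‖ = 1) :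
    ∃ (x : ℚ_[p]) (k : Matrix (Fin 2) (Fin 2) ℚ_[p]),
      (∀ i j, ‖k i j‖ ≤ 1) ∧ ‖k.det‖ = 1 ∧
      !![A, B; c, d] =
        lam • (!![1, x; 0, 1] * !![(A * d - B * c) / lam ^ 2, 0; 0, 1] * k) ∧ k 1 0 = r := by
  subst hc hd
  rcases hrs with h | h
  · have h0 : r ≠ 0 := by rintro rfl; simp at h
    refine ⟨A / lam / r, !![0, -r⁻¹; r, s], ?_, ?_, ?_, ?_⟩
    · intro i j
      fin_cases i <;> fin_cases j <;> simp [h, hs]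
    · simp [Matrix.det_fin_two, h0]
    · ext i j
      fin_cases i <;> fin_cases j <;> simp [Matrix.mul_apply, Fin.sum_univ_two] <;> field_simp <;> ring
    · simp
  · have h0 : s ≠ 0 := by rintro rfl; simp at h
    refine ⟨B / lam / s, !![s⁻¹, 0; r, s], ?_, ?_, ?_, ?_⟩
    · intro i j
      fin_cases i <;> fin_cases j <;> simp [h, hr]
    · simp [Matrix.det_fin_two, h0]
    · ext i j
      fin_cases i <;> fin_cases j <;> simp [Matrix.mul_apply, Fin.sum_univ_two] <;> field_simp <;> ring
    · simp

lemma main_aux (p : ℕ) [Fact p.Prime] (n : ℕ) 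
    (t u v w : ℤ_[p]) (hdet : IsUnit (Matrix.det !![t, u; v, w]))
    (l : ℕ) (T : ℤ) (lam r s : ℚ_[p]) (hlam : lam ≠ 0)
    (hc : (v : ℚ_[p]) * (p : ℚ_[p]) ^ (2 * n) = lam * r) (hd : (w : ℚ_[p]) = lam * s)
    (hr : ‖r‖ ≤ 1) (hs : ‖s‖ ≤ 1) (hrs : ‖r‖ = 1 ∨ ‖s‖ = 1)
    (h1 : min (if r = 0 then (⊤ : WithTop ℤ) else ((r.valuation : ℤ) : WithTop ℤ))
          (((4 * n : ℕ) : ℤ) : WithTop ℤ) = ((l : ℤ) : WithTop ℤ))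
    (h2 : 2 * (n : ℤ) - 2 * lam.valuation = T) :
    ∃ (lam : ℚ_[p]ˣ) (x : ℚ_[p]) (y : ℚ_[p]ˣ) (k : Matrix (Fin 2) (Fin 2) ℚ_[p]),
      (∀ i j, ‖k i j‖ ≤ 1) ∧ ‖k.det‖ = 1 ∧
      !![(t : ℚ_[p]), (u : ℚ_[p]); (v : ℚ_[p]), (w : ℚ_[p])] * !![(p : ℚ_[p]) ^ (2 * n), 0; 0, 1] =
        (lam : ℚ_[p]) • (!![1, x; 0, 1] * !![(y : ℚ_[p]), 0; 0, 1] * k) ∧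
      min (if k 1 0 = 0 then (⊤ : WithTop ℤ) else (((k 1 0).valuation : ℤ) : WithTop ℤ))
          (((4 * n : ℕ) : ℤ) : WithTop ℤ) = ((l : ℤ) : WithTop ℤ) ∧
      (y : ℚ_[p]).valuation = T := by
  have hp : (p : ℚ_[p]) ≠ 0 := by exact_mod_cast (Fact.out : p.Prime).ne_zero
  have hP : (p : ℚ_[p]) ^ (2 * n) ≠ 0 := pow_ne_zero _ hp
  rw [Matrix.det_fin_two_of] at hdet
  have hδ0 : ((t * w - u * v : ℤ_[p]) : ℚ_[p]) ≠ 0 := coe_ne p _ hdet.ne_zero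
  have hδv : ((t * w - u * v : ℤ_[p]) : ℚ_[p]).valuation = 0 := by
    rw [PadicInt.valuation_coe, unit_val p _ hdet]; rfl
  have hE : (t : ℚ_[p]) * (p : ℚ_[p]) ^ (2 * n) * w - u * (v * (p : ℚ_[p]) ^ (2 * n))
      = (p : ℚ_[p]) ^ (2 * n) * ((t * w - u * v : ℤ_[p]) : ℚ_[p]) := by
    push_cast; ring
  have hD : (t : ℚ_[p]) * (p : ℚ_[p]) ^ (2 * n) * w - u * (v * (p : ℚ_[p]) ^ (2 * n)) ≠ 0 := by
    rw [hE]; exact mul_ne_zero hP hδ0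
  obtain ⟨x, k, hk1, hk2, hk3, hk4⟩ := iwasawa_aux p _ _ _ _ lam r s hlam hD hc hd hr hs hrs
  refine ⟨Units.mk0 lam hlam, x, Units.mk0 _ (div_ne_zero hD (pow_ne_zero 2 hlam)), k, hk1, hk2,
    ?_, ?_, ?_⟩
  · rw [Units.val_mk0, Units.val_mk0, ← hk3]
    ext i j
    fin_cases i <;> fin_cases j <;> simp [Matrix.mul_apply, Fin.sum_univ_two]
  · rw [hk4]; exact h1
  · rw [Units.val_mk0, hE, div_eq_mul_inv, Padic.valuation_mul (mul_ne_zero hP hδ0)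
      (inv_ne_zero (pow_ne_zero 2 hlam)), Padic.valuation_mul hP hδ0, hδv, Padic.valuation_inv,
      Padic.valuation_pow, Padic.valuation_pow, Padic.valuation_p, ← h2]
    push_cast; ring

/-- Explicit Iwasawa decomposition of `g·a(p^{2n})` for `g = [[t,u],[v,w]] ∈ GL₂(ℤ_p)`,
with the invariants `l` and `t₀` computed in terms of the valuations of `v` and `w`. -/
theorem stmt_13 (p : ℕ) [Fact p.Prime] (n : ℕ) (hn : 1 ≤ n)
    (t u v w : ℤ_[p]) (hdet : IsUnit (Matrix.det !![t, u; v, w]))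
    (l : ℕ)
    (hl : l = if IsUnit w
      then (min (((2 * n : ℕ) : ℕ∞) + padicValE p v) ((4 * n : ℕ) : ℕ∞)).toNat
      else ((((2 * n : ℕ) : ℕ∞)) - padicValE p w).toNat)
    (t₀ : ℤ)
    (ht₀ : t₀ = -(2 * (n : ℤ)) - 2 * ((min (((2 * n : ℕ) : ℕ∞)) (padicValE p v)).toNat : ℤ)) :
    ∃ (lam : ℚ_[p]ˣ) (x : ℚ_[p]) (y : ℚ_[p]ˣ) (k : Matrix (Fin 2) (Fin 2) ℚ_[p]),
      (∀ i j, ‖k i j‖ ≤ 1) ∧ ‖k.det‖ = 1 ∧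
      !![(t : ℚ_[p]), (u : ℚ_[p]); (v : ℚ_[p]), (w : ℚ_[p])] * !![(p : ℚ_[p]) ^ (2 * n), 0; 0, 1] =
        (lam : ℚ_[p]) • (!![1, x; 0, 1] * !![(y : ℚ_[p]), 0; 0, 1] * k) ∧
      min (if k 1 0 = 0 then (⊤ : WithTop ℤ) else (((k 1 0).valuation : ℤ) : WithTop ℤ))
          (((4 * n : ℕ) : ℤ) : WithTop ℤ) = ((l : ℤ) : WithTop ℤ) ∧
      (y : ℚ_[p]).valuation = t₀ + 2 * (l : ℤ) := by
  have hp : (p : ℚ_[p]) ≠ 0 := by exact_mod_cast (Fact.out : p.Prime).ne_zero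
  have hP : (p : ℚ_[p]) ^ (2 * n) ≠ 0 := pow_ne_zero _ hp
  have hPn : ‖(p : ℚ_[p]) ^ (2 * n)‖ ≤ 1 := by
    rw [norm_pow]; exact pow_le_one₀ (norm_nonneg _) (by simpa using PadicInt.norm_le_one (p : ℤ_[p]))
  by_cases hw : IsUnit w
  · rw [if_pos hw] at hl
    have hwn : ‖(w : ℚ_[p])‖ = 1 := by simpa using PadicInt.isUnit_iff.1 hw
    refine main_aux p n t u v w hdet l _ 1 (v * (p : ℚ_[p]) ^ (2 * n)) w one_ne_zero (by ring)
      (by ring) ?_ hwn.le (Or.inr hwn) ?_ ?_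
    · rw [norm_mul]
      exact mul_le_one₀ v.norm_le_one (norm_nonneg _) hPn
    · by_cases hv : v = 0
      · subst hv
        simp [padicValE] at hl
        simp [hl]
      · have hv' : (v : ℚ_[p]) ≠ 0 := coe_ne p v hv
        rw [if_neg (mul_ne_zero hv' hP), Padic.valuation_mul hv' hP, Padic.valuation_pow,
          Padic.valuation_p, PadicInt.valuation_coe]
        simp only [padicValE, if_neg hv] at hl
        have : l = min (2 * n + v.valuation) (4 * n) := by
          rw [hl]; norm_cast
        norm_cast
        rw [this]; push_cast
        congr 1; ring
    · rw [ht₀, hl]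
      by_cases hv : v = 0
      · subst hv
        simp [padicValE]
        have : (4 * (n : ℕ∞)).toNat = 4 * n := by norm_cast
        have : (2 * (n : ℕ∞)).toNat = 2 * n := by norm_cast
        omega
      · simp only [padicValE, if_neg hv]
        have h1 : (min (((2 * n : ℕ) : ℕ∞) + (v.valuation : ℕ∞)) ((4 * n : ℕ) : ℕ∞)).toNat
          = min (2 * n + v.valuation) (4 * n) := by norm_cast
        have h2 : (min (((2 * n : ℕ) : ℕ∞)) (v.valuation : ℕ∞)).toNat
          = min (2 * n) v.valuation := by norm_cast
        rw [h1, h2, Padic.valuation_one]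
        omega
  · rw [if_neg hw] at hl
    have hv : IsUnit v := by
      by_contra hv
      rw [Matrix.det_fin_two_of] at hdet
      have h1 : t * w ∈ nonunits ℤ_[p] := fun h => hw (isUnit_of_mul_isUnit_right h)
      have h2 : u * v ∈ nonunits ℤ_[p] := fun h => hv (isUnit_of_mul_isUnit_right h)
      rw [← IsLocalRing.mem_maximalIdeal] at h1 h2
      exact (IsLocalRing.mem_maximalIdeal _).1 (sub_mem h1 h2) hdet
    have hvn : ‖(v : ℚ_[p])‖ = 1 := by simpa using PadicInt.isUnit_iff.1 hv
    have hv0 : (v : ℚ_[p]) ≠ 0 := coe_ne p v hv.ne_zero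
    have hvv := unit_val p v hv
    have ht : t₀ = -(2 * (n : ℤ)) := by
      rw [ht₀]; simp [padicValE, hv.ne_zero, hvv]
    by_cases hd : w = 0 ∨ 2 * n ≤ w.valuation
    · have hl0 : l = 0 := by
        rw [hl]
        rcases hd with rfl | hd
        · simp [padicValE]
        · unfold padicValE
          split_ifs
          · simp
          · norm_cast
            rw [Nat.sub_eq_zero_of_le hd]; rfl
      have hs : ∃ s : ℤ_[p], w = (p : ℤ_[p]) ^ (2 * n) * s := by
        rcases hd with rfl | hd
        · exact ⟨0, by simp⟩
        · by_cases hw0 : w = 0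
          · exact ⟨0, by simp [hw0]⟩
          · exact Ideal.mem_span_singleton.1
              ((PadicInt.mem_span_pow_iff_le_valuation w hw0 (2 * n)).2 hd)
      obtain ⟨s, hs⟩ := hs
      refine main_aux p n t u v w hdet l _ ((p : ℚ_[p]) ^ (2 * n)) v s hP (by ring)
        (by rw [hs]; push_cast; ring) hvn.le s.norm_le_one (Or.inl hvn) ?_ ?_
      · rw [if_neg hv0, PadicInt.valuation_coe, hvv, hl0]
        norm_cast
      · rw [ht, hl0, Padic.valuation_pow, Padic.valuation_p]
        push_cast; ring
    · push Not at hd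
      obtain ⟨hw0, hlt⟩ := hd
      have hl1 : l = 2 * n - w.valuation := by
        rw [hl]; simp only [padicValE, if_neg hw0]; norm_cast
      have hw0' : (w : ℚ_[p]) ≠ 0 := coe_ne p w hw0
      have hval : ((v : ℚ_[p]) * (p : ℚ_[p]) ^ (2 * n) / w).valuation = l := by
        rw [div_eq_mul_inv, Padic.valuation_mul (mul_ne_zero hv0 hP) (inv_ne_zero hw0'),
          Padic.valuation_mul hv0 hP, Padic.valuation_inv, Padic.valuation_pow,
          Padic.valuation_p, PadicInt.valuation_coe, PadicInt.valuation_coe, hvv, hl1]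
        omega
      have hr0 : (v : ℚ_[p]) * (p : ℚ_[p]) ^ (2 * n) / w ≠ 0 :=
        div_ne_zero (mul_ne_zero hv0 hP) hw0'
      refine main_aux p n t u v w hdet l _ w ((v : ℚ_[p]) * (p : ℚ_[p]) ^ (2 * n) / w) 1 hw0'
        (by field_simp) (by ring) ?_ (by simp) (Or.inr (by simp)) ?_ ?_
      · rw [Padic.norm_le_one_iff_val_nonneg, hval]; positivity
      · rw [if_neg hr0, hval]
        norm_cast
        omega
      · rw [ht, hl1, PadicInt.valuation_coe]
        omega
end

section
/- There exists an absolute constant Cst > 0 with the following property. Let b₁, b₂ be a basis of ℝ², let Λ = ℤb₁ + ℤb₂, and let V = |det(b₁, b₂)| be the covolume of Λ. Call v ∈ Λ primitive if v is not of the form k·w with k ≥ 2 an integer and w ∈ Λ. Then for every R > 0, the number of primitive points v ∈ Λ with Euclidean norm ‖v‖ ≤ R is at most Cst·(1 + R²/V). -/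
lemma aux_int (m n p q : ℤ) (h : IsCoprime m n) (h' : IsCoprime p q) (e : m * q = p * n) :
    (p = m ∧ q = n) ∨ (p = -m ∧ q = -n) := by
  have h1 : m ∣ p := h.dvd_of_dvd_mul_right ⟨q, e.symm⟩
  have h2 : p ∣ m := h'.dvd_of_dvd_mul_right ⟨n, e⟩
  have h3 : n ∣ q := h.symm.dvd_of_dvd_mul_left ⟨p, by rw [e]; ring⟩
  have h4 : q ∣ n := h'.symm.dvd_of_dvd_mul_left ⟨m, by rw [← e]; ring⟩
  have a1 := Int.natAbs_eq_natAbs_iff.1 (Nat.dvd_antisymm (Int.natAbs_dvd_natAbs.2 h1) (Int.natAbs_dvd_natAbs.2 h2))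
  have a2 := Int.natAbs_eq_natAbs_iff.1 (Nat.dvd_antisymm (Int.natAbs_dvd_natAbs.2 h3) (Int.natAbs_dvd_natAbs.2 h4))
  rcases a1 with rfl | rfl <;> rcases a2 with rfl | rfl
  · left; simp
  · have : m * q = 0 := by linarith
    rcases mul_eq_zero.1 this with h | h <;> simp [h]
  · have : p * n = 0 := by linarith
    rcases mul_eq_zero.1 this with h | h <;> simp [h]
  · right; simp

lemma aux_det (a b : ℂ) : |a.re * b.im - b.re * a.im| ≤ ‖a‖ * ‖b‖ * |b.arg - a.arg| := by
  have h : a.re * b.im - b.re * a.im = ‖a‖ * ‖b‖ * Real.sin (b.arg - a.arg) := by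
    rw [Real.sin_sub, ← Complex.norm_mul_cos_arg a, ← Complex.norm_mul_cos_arg b,
      ← Complex.norm_mul_sin_arg a, ← Complex.norm_mul_sin_arg b]
    simp only [Complex.norm_mul_cos_arg, Complex.norm_mul_sin_arg]
    have h1 := Complex.norm_mul_cos_arg a
    have h2 := Complex.norm_mul_cos_arg b
    have h3 := Complex.norm_mul_sin_arg a
    have h4 := Complex.norm_mul_sin_arg b
    rw [← h1, ← h2, ← h3, ← h4]
    simp only [h1, h2, h3, h4]
    linear_combination (-b.im) * h1 - ‖a‖ * Real.cos a.arg * h4 + a.im * h2 + ‖b‖ * Real.cos b.arg * h3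
  rw [h, abs_mul, abs_of_nonneg (by positivity)]
  exact mul_le_mul_of_nonneg_left Real.abs_sin_le_abs (by positivity)

lemma aux_prim (b₁ b₂ : EuclideanSpace ℝ (Fin 2)) (m n : ℤ)
    (h : ¬∃ (k : ℤ) (w : EuclideanSpace ℝ (Fin 2)), 2 ≤ k ∧ (∃ m n : ℤ, w = m • b₁ + n • b₂) ∧
      m • b₁ + n • b₂ = k • w) : IsCoprime m n := by
  rw [Int.isCoprime_iff_gcd_eq_one]
  by_contra hg
  apply h
  by_cases h0 : Int.gcd m n = 0
  · rw [Int.gcd_eq_zero_iff] at h0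
    exact ⟨2, 0, le_rfl, ⟨0, 0, by simp⟩, by simp [h0.1, h0.2]⟩
  · obtain ⟨p, hp⟩ := Int.gcd_dvd_left m n
    obtain ⟨q, hq⟩ := Int.gcd_dvd_right m n
    refine ⟨Int.gcd m n, p • b₁ + q • b₂, by omega, ⟨p, q, rfl⟩, ?_⟩
    rw [smul_add, smul_smul, smul_smul, ← hp, ← hq]


/-- Counting primitive lattice points: there is an absolute constant `Cst` such that for any
rank-two lattice `Λ = ℤb₁ + ℤb₂` in `ℝ²` of covolume `V`, the number of primitive points of
`Λ` of norm at most `R` is at most `Cst·(1 + R²/V)`. -/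
theorem stmt_14 :
    ∃ Cst : ℝ, 0 < Cst ∧
      ∀ b₁ b₂ : EuclideanSpace ℝ (Fin 2), LinearIndependent ℝ ![b₁, b₂] →
      ∀ Λ : Set (EuclideanSpace ℝ (Fin 2)),
        Λ = {v | ∃ m n : ℤ, v = m • b₁ + n • b₂} →
      ∀ V : ℝ, V = |Matrix.det !![b₁ 0, b₂ 0; b₁ 1, b₂ 1]| →
      ∀ R : ℝ, 0 < R →
        {v | v ∈ Λ ∧ (¬∃ (k : ℤ) (w : EuclideanSpace ℝ (Fin 2)), 2 ≤ k ∧ w ∈ Λ ∧ v = k • w) ∧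
            ‖v‖ ≤ R}.Finite ∧
        (({v | v ∈ Λ ∧ (¬∃ (k : ℤ) (w : EuclideanSpace ℝ (Fin 2)), 2 ≤ k ∧ w ∈ Λ ∧ v = k • w) ∧
            ‖v‖ ≤ R}.ncard : ℝ)) ≤ Cst * (1 + R ^ 2 / V) := by
  refine ⟨20, by norm_num, ?_⟩
  intro b₁ b₂ hli Λ hΛ V hV R hR
  subst hΛ
  rw [Matrix.det_fin_two_of] at hV
  have hD : b₁ 0 * b₂ 1 - b₂ 0 * b₁ 1 ≠ 0 := by
    intro h0
    rw [LinearIndependent.pair_iff] at hli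
    have e1 := hli (b₂ 1) (-(b₁ 1)) (by
      ext i; fin_cases i
      · simp; linarith
      · simp; ring)
    have e2 := hli (b₂ 0) (-(b₁ 0)) (by
      ext i; fin_cases i
      · simp; ring
      · simp; linarith)
    have e3 := hli 1 0 (by
      ext i; fin_cases i
      · simpa using e2.2
      · simpa using e1.2)
    exact one_ne_zero e3.1
  have hVpos : 0 < V := by rw [hV]; exact abs_pos.2 hD
  set S := {v : EuclideanSpace ℝ (Fin 2) | v ∈ {v | ∃ m n : ℤ, v = m • b₁ + n • b₂} ∧ (¬∃ (k : ℤ) (w : EuclideanSpace ℝ (Fin 2)), 2 ≤ k ∧ w ∈ {v | ∃ m n : ℤ, v = m • b₁ + n • b₂} ∧ v = k • w) ∧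
            ‖v‖ ≤ R} with hS
  classical
  set T := R ^ 2 / V with hT
  have hTpos : 0 < T := by positivity
  let c : EuclideanSpace ℝ (Fin 2) → ℂ := fun v => ⟨v 0, v 1⟩
  have hc : ∀ v, ‖c v‖ = ‖v‖ := by
    intro v
    rw [EuclideanSpace.norm_eq, Complex.norm_eq_sqrt_sq_add_sq]
    simp [c]
  let f : EuclideanSpace ℝ (Fin 2) → ℤ × Bool := fun v =>
    (⌊(c v).arg * T⌋, decide (0 < v 1 ∨ (v 1 = 0 ∧ 0 < v 0)))
  let F : Finset (ℤ × Bool) := Finset.Icc ⌊-(Real.pi * T)⌋ ⌊Real.pi * T⌋ ×ˢ Finset.univ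
  have hmaps : ∀ v ∈ S, f v ∈ (F : Set (ℤ × Bool)) := by
    intro v _
    simp only [f, F, Finset.coe_product, Set.mem_prod, Finset.coe_univ, Set.mem_univ, and_true,
      Finset.mem_coe, Finset.mem_Icc]
    constructor
    · apply Int.floor_le_floor
      have := Complex.neg_pi_lt_arg (c v)
      nlinarith
    · apply Int.floor_le_floor
      have := Complex.arg_le_pi (c v)
      nlinarith
  have hinj : Set.InjOn f S := by
    rintro v ⟨⟨m, n, rfl⟩, hv, hvR⟩ w ⟨⟨p, q, rfl⟩, hw, hwR⟩ hf
    have cv := aux_prim b₁ b₂ m n hv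
    have cw := aux_prim b₁ b₂ p q hw
    simp only [f, Prod.mk.injEq, decide_eq_decide] at hf
    obtain ⟨hf1, hf2⟩ := hf
    have h1 := Int.abs_sub_lt_one_of_floor_eq_floor hf1.symm
    have h2 := aux_det (c (m • b₁ + n • b₂)) (c (p • b₁ + q • b₂))
    rw [hc, hc] at h2
    rw [← sub_mul, abs_mul, abs_of_pos hTpos] at h1
    set δ := |(c (p • b₁ + q • b₂)).arg - (c (m • b₁ + n • b₂)).arg| with hδ
    have hδ0 : 0 ≤ δ := abs_nonneg _
    have h3 : R * R * δ < V := by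
      have : R * R = T * V := by rw [hT]; field_simp
      rw [this]; nlinarith
    have h4 : ‖m • b₁ + n • b₂‖ * ‖p • b₁ + q • b₂‖ * δ ≤ R * R * δ := by gcongr
    have h5 : (c (m • b₁ + n • b₂)).re * (c (p • b₁ + q • b₂)).im - (c (p • b₁ + q • b₂)).re * (c (m • b₁ + n • b₂)).im
        = ((m * q - p * n : ℤ) : ℝ) * (b₁ 0 * b₂ 1 - b₂ 0 * b₁ 1) := by
      simp [c]; ring
    rw [h5, abs_mul, ← hV] at h2
    have h6 : |((m * q - p * n : ℤ) : ℝ)| < 1 := by nlinarith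
    have h7 : m * q - p * n = 0 := by
      rw [← Int.abs_lt_one_iff]; exact_mod_cast h6
    rcases aux_int m n p q cv cw (by linarith) with ⟨rfl, rfl⟩ | ⟨rfl, rfl⟩
    · rfl
    · set v := m • b₁ + n • b₂ with hvdef
      have hneg : (-m) • b₁ + (-n) • b₂ = -v := by rw [hvdef]; module
      rw [hneg] at hf2 ⊢
      simp only [PiLp.neg_apply] at hf2
      have h1 : v 1 = 0 := by
        rcases lt_trichotomy (v 1) 0 with h | h | h
        · have := hf2.2 (Or.inl (by linarith))
          rcases this with h | h <;> linarith
        · exact h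
        · have := hf2.1 (Or.inl h)
          rcases this with h | h <;> linarith
      have h0 : v 0 = 0 := by
        rcases lt_trichotomy (v 0) 0 with h | h | h
        · have := hf2.2 (Or.inr ⟨by linarith, by linarith⟩)
          rcases this with h | h <;> linarith
        · exact h
        · have := hf2.1 (Or.inr ⟨h1, h⟩)
          rcases this with h | h <;> linarith
      ext i; fin_cases i
      · simp [h0]
      · simp [h1]
  refine ⟨Set.Finite.of_injOn hmaps hinj F.finite_toSet, ?_⟩
  have hcard := Set.ncard_le_ncard_of_injOn f hmaps hinj F.finite_toSet
  rw [Set.ncard_coe_finset] at hcard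
  have hFc : (F.card : ℝ) ≤ 20 * (1 + T) := by
    simp only [F, Finset.card_product, Int.card_Icc, Finset.card_univ, Fintype.card_bool]
    have e1 := Int.floor_le (Real.pi * T)
    have e2 := Int.lt_floor_add_one (-(Real.pi * T))
    have hp : 0 < Real.pi * T := by positivity
    have hle : ⌊-(Real.pi * T)⌋ ≤ ⌊Real.pi * T⌋ := Int.floor_le_floor (by linarith)
    have e3 : (((⌊Real.pi * T⌋ + 1 - ⌊-(Real.pi * T)⌋).toNat : ℤ) : ℝ) = ⌊Real.pi * T⌋ + 1 - ⌊-(Real.pi * T)⌋ := by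
      rw [Int.toNat_of_nonneg (by linarith)]; push_cast; ring
    rw [Int.cast_natCast] at e3
    push_cast
    rw [e3]
    have := Real.pi_le_four
    nlinarith
  exact le_trans (by exact_mod_cast hcard) hFc
end

section
/- There exists an absolute constant Cst > 0 such that for every prime p, every integer l ≥ 0, every z ∈ ℍ with Im z ≥ 1, every g ∈ SL₂(ℤ), every δ' with 0 < δ' < 1, every real X ≥ 1, and every finite set 𝒫 of primes with 𝒫 ⊆ [X, 2X] and p ∉ 𝒫, one has Σ_{(l₁,l₂) ∈ 𝒫×𝒫} M(z, g; δ', p^l, l₁·l₂) ≤ Cst·( X² + X³·√δ'·(Im z)/p^l + X⁴·δ'/p^l ). -/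
/-- The hyperbolic point-pair invariant `u(z,w) = |z−w|² / (Im z · Im w)`. -/
noncomputable def uInv (z w : ℂ) : ℝ := ‖z - w‖ ^ 2 / (z.im * w.im)

/-- The Möbius action of an integer matrix on the upper half-plane. -/
noncomputable def moeb (γ : Matrix (Fin 2) (Fin 2) ℤ) (z : ℂ) : ℂ :=
  (((γ 0 0 : ℤ) : ℂ) * z + ((γ 0 1 : ℤ) : ℂ)) / (((γ 1 0 : ℤ) : ℂ) * z + ((γ 1 1 : ℤ) : ℂ))

/-- `M(z,g;δ,L,m)`: the number of matrices `γ ∈ M₂(ℤ)` with `det γ = m`, `u(γ·z, z) ≤ δ`,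
and both off-diagonal entries of `g⁻¹γg` divisible by `L`. -/
noncomputable def Mcount (z : ℂ) (g : Matrix.SpecialLinearGroup (Fin 2) ℤ) (δ : ℝ)
    (L m : ℕ) : ℕ :=
  Set.ncard {γ : Matrix (Fin 2) (Fin 2) ℤ | γ.det = (m : ℤ) ∧ uInv (moeb γ z) z ≤ δ ∧
    (L : ℤ) ∣ (((g⁻¹ : Matrix.SpecialLinearGroup (Fin 2) ℤ) : Matrix (Fin 2) (Fin 2) ℤ) * γ *
      (g : Matrix (Fin 2) (Fin 2) ℤ)) 0 1 ∧
    (L : ℤ) ∣ (((g⁻¹ : Matrix.SpecialLinearGroup (Fin 2) ℤ) : Matrix (Fin 2) (Fin 2) ℤ) * γ *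
      (g : Matrix (Fin 2) (Fin 2) ℤ)) 1 0}

lemma aux_dvd_s15 {a b c : ℤ} (h : a ∣ b) (e : c = b) : a ∣ c := e ▸ h

lemma aux_step {α : Type*} (S : Finset α) (f : α → ℤ) (N : ℤ) (hN : 0 < N) (R K : ℝ) (hR : 0 ≤ R)
    (hK : 0 ≤ K)
    (h1 : ∀ x ∈ S, ∀ y ∈ S, N ∣ f x - f y)
    (h2 : ∀ x ∈ S, ∀ y ∈ S, ((f x - f y : ℤ) : ℝ) ≤ R)
    (h3 : ∀ v : ℤ, ((S.filter (fun x => f x = v)).card : ℝ) ≤ K) :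
    (S.card : ℝ) ≤ (R / N + 1) * K := by
  have hNr : (0 : ℝ) < N := by exact_mod_cast hN
  have himg : ((S.image f).card : ℝ) ≤ R / N + 1 := by
    rcases S.eq_empty_or_nonempty with rfl | hne
    · simp; positivity
    obtain ⟨x0, hx0, hmin⟩ := S.exists_min_image f hne
    have hsub : S.image f ⊆ (Finset.range (⌊R / N⌋₊ + 1)).image (fun k : ℕ => f x0 + N * k) := by
      intro v hv
      obtain ⟨x, hx, rfl⟩ := Finset.mem_image.1 hv
      obtain ⟨k, hk⟩ := h1 x hx x0 hx0
      have h0 : 0 ≤ N * k := by rw [← hk]; linarith [hmin x hx]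
      have hk0 : 0 ≤ k := nonneg_of_mul_nonneg_right h0 hN
      lift k to ℕ using hk0
      refine Finset.mem_image.2 ⟨k, ?_, by linarith⟩
      rw [Finset.mem_range, Nat.lt_succ_iff]
      apply Nat.le_floor
      rw [le_div_iff₀ hNr]
      have := h2 x hx x0 hx0
      rw [hk] at this
      push_cast at this
      linarith
    have h4 : (S.image f).card ≤ ⌊R / N⌋₊ + 1 :=
      (Finset.card_le_card hsub).trans (Finset.card_image_le.trans (by simp))
    have h5 : ((S.image f).card : ℝ) ≤ (⌊R / N⌋₊ : ℝ) + 1 := by exact_mod_cast h4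
    have h6 : (⌊R / N⌋₊ : ℝ) ≤ R / N := Nat.floor_le (by positivity)
    linarith
  rw [Finset.card_eq_sum_card_image f S]
  push_cast
  calc ∑ v ∈ S.image f, ((S.filter (fun x => f x = v)).card : ℝ)
      ≤ ∑ v ∈ S.image f, K := Finset.sum_le_sum (fun v _ => h3 v)
    _ = (S.image f).card * K := by simp
    _ ≤ _ := mul_le_mul_of_nonneg_right himg hK

lemma aux_u (z : ℂ) (hy : 1 ≤ z.im) (a b c d : ℝ) (m : ℝ) (hm : 0 < m)
    (hdet : a * d - b * c = m) (δ : ℝ)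
    (hu : uInv (((a : ℂ) * z + b) / ((c : ℂ) * z + d)) z ≤ δ) :
    (c * (z.re ^ 2 - z.im ^ 2) + (d - a) * z.re - b) ^ 2
      + (2 * c * z.re + (d - a)) ^ 2 * z.im ^ 2 ≤ δ * m * z.im ^ 2 := by
  have hypos : 0 < z.im := by linarith
  have hw : 0 < (c * z.re + d) ^ 2 + (c * z.im) ^ 2 := by
    by_contra h
    have h1 : c * z.im = 0 := by nlinarith [sq_nonneg (c * z.re + d), sq_nonneg (c * z.im)]
    have h2 : c = 0 := by
      rcases mul_eq_zero.1 h1 with h | h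
      · exact h
      · linarith
    subst h2
    have h3 : d = 0 := by
      have : d ^ 2 ≤ 0 := by simpa using h
      nlinarith [sq_nonneg d]
    subst h3
    simp at hdet
    linarith
  have hn : Complex.normSq ((c : ℂ) * z + d) = (c * z.re + d) ^ 2 + (c * z.im) ^ 2 := by
    simp [Complex.normSq_apply]; ring
  have hw0 : (c : ℂ) * z + d ≠ 0 := by
    intro h; rw [h] at hn; simp at hn; linarith
  have hsub : ((a : ℂ) * z + b) / ((c : ℂ) * z + d) - z
      = (-(c * z ^ 2 + (d - a) * z - b)) / ((c : ℂ) * z + d) := by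
    rw [eq_div_iff hw0, sub_mul, div_mul_cancel₀ _ hw0]; ring
  have hQ : Complex.normSq (-(c * z ^ 2 + (d - a) * z - b)) =
     (c * (z.re ^ 2 - z.im ^ 2) + (d - a) * z.re - b) ^ 2
      + (2 * c * z.re + (d - a)) ^ 2 * z.im ^ 2 := by
    simp [Complex.normSq_apply, pow_two]; ring
  have him : (((a : ℂ) * z + b) / ((c : ℂ) * z + d)).im
      = m * z.im / ((c * z.re + d) ^ 2 + (c * z.im) ^ 2) := by
    rw [Complex.div_im, hn, ← hdet]
    simp
    field_simp
    ring
  unfold uInv at hu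
  rw [← Complex.normSq_eq_norm_sq, hsub, Complex.normSq_div, hQ, hn, him] at hu
  set W := (c * z.re + d) ^ 2 + (c * z.im) ^ 2
  set Q := (c * (z.re ^ 2 - z.im ^ 2) + (d - a) * z.re - b) ^ 2
      + (2 * c * z.re + (d - a)) ^ 2 * z.im ^ 2
  have : Q / W / (m * z.im / W * z.im) = Q / (m * z.im ^ 2) := by
    field_simp
  rw [this, div_le_iff₀ (by positivity)] at hu
  linarith

lemma aux_bounds (x y a b c d m δ X : ℝ) (hy : 1 ≤ y) (hδ : 0 < δ) (hδ1 : δ < 1) (hX : 1 ≤ X)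
    (hm : 0 < m) (hmX : m ≤ 4 * X ^ 2) (hdet : a * d - b * c = m)
    (h : (c * (x ^ 2 - y ^ 2) + (d - a) * x - b) ^ 2
      + (2 * c * x + (d - a)) ^ 2 * y ^ 2 ≤ δ * m * y ^ 2) :
    |2 * c * x + (d - a)| ≤ 2 * X * √δ ∧
    |c * (x ^ 2 - y ^ 2) + (d - a) * x - b| ≤ 2 * X * √δ * y ∧
    |a + d| ≤ 5 * X ∧ |c| ≤ 7 / 2 * X / y := by
  have hypos : 0 < y := by linarith
  have hs : √δ ^ 2 = δ := Real.sq_sqrt hδ.le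
  have hs0 : 0 ≤ √δ := Real.sqrt_nonneg _
  have hs1 : √δ ≤ 1 := Real.sqrt_le_one.2 hδ1.le
  set R := c * (x ^ 2 - y ^ 2) + (d - a) * x - b with hR
  set I := 2 * c * x + (d - a) with hI
  have hdm : δ * m ≤ (2 * X * √δ) ^ 2 := by
    have := mul_le_mul_of_nonneg_left hmX hδ.le
    nlinarith
  have hy2 : 0 < y ^ 2 := by positivity
  have hIb : |I| ≤ 2 * X * √δ := by
    apply abs_le_of_sq_le_sq _ (by positivity)
    have : I ^ 2 * y ^ 2 ≤ δ * m * y ^ 2 := by linarith [sq_nonneg R]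
    exact (le_of_mul_le_mul_right this hy2).trans hdm
  have hRb : |R| ≤ 2 * X * √δ * y := by
    apply abs_le_of_sq_le_sq _ (by positivity)
    have : R ^ 2 ≤ δ * m * y ^ 2 := by linarith [mul_nonneg (sq_nonneg I) hy2.le]
    rw [mul_pow]
    exact this.trans (mul_le_mul_of_nonneg_right hdm hy2.le)
  have key : ((a + d) ^ 2) * y ^ 2 + (R + 2 * c * y ^ 2) ^ 2 = 4 * m * y ^ 2 + (R ^ 2 + I ^ 2 * y ^ 2) := by
    rw [hR, hI, ← hdet]; ring
  have hle : ((a + d) ^ 2) * y ^ 2 + (R + 2 * c * y ^ 2) ^ 2 ≤ (5 * X) ^ 2 * y ^ 2 := by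
    rw [key]
    have h1 : δ * m ≤ m := by nlinarith
    have h2 : 4 * m + δ * m ≤ (5 * X) ^ 2 := by nlinarith
    have := mul_le_mul_of_nonneg_right h2 hy2.le
    linarith
  have ht : |a + d| ≤ 5 * X := by
    apply abs_le_of_sq_le_sq _ (by positivity)
    have : (a + d) ^ 2 * y ^ 2 ≤ (5 * X) ^ 2 * y ^ 2 := by linarith [sq_nonneg (R + 2 * c * y ^ 2)]
    exact le_of_mul_le_mul_right this hy2
  have hh : |R + 2 * c * y ^ 2| ≤ 5 * X * y := by
    apply abs_le_of_sq_le_sq _ (by positivity)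
    rw [mul_pow]; linarith [mul_nonneg (sq_nonneg (a + d)) hy2.le]
  refine ⟨hIb, hRb, ht, ?_⟩
  have hRb' : |R| ≤ 2 * X * y := by
    refine hRb.trans ?_
    have : 2 * X * √δ ≤ 2 * X := by nlinarith
    exact mul_le_mul_of_nonneg_right this hypos.le
  rw [le_div_iff₀ hypos]
  rw [abs_le] at hh hRb'
  have : |c * y| ≤ 7 / 2 * X := by
    rw [abs_le]
    constructor
    · apply le_of_mul_le_mul_right _ hypos
      linarith
    · apply le_of_mul_le_mul_right _ hypos
      linarith
  rwa [abs_mul, abs_of_pos hypos] at this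

lemma aux_cong (g : Matrix.SpecialLinearGroup (Fin 2) ℤ) (L : ℤ)
    (A : Matrix (Fin 2) (Fin 2) ℤ)
    (h1 : L ∣ (((g⁻¹ : Matrix.SpecialLinearGroup (Fin 2) ℤ) : Matrix (Fin 2) (Fin 2) ℤ) * A *
      (g : Matrix (Fin 2) (Fin 2) ℤ)) 0 1)
    (h2 : L ∣ (((g⁻¹ : Matrix.SpecialLinearGroup (Fin 2) ℤ) : Matrix (Fin 2) (Fin 2) ℤ) * A *
      (g : Matrix (Fin 2) (Fin 2) ℤ)) 1 0) :
    ∃ s : ℤ, L ∣ A 1 0 - g.1 1 0 * g.1 1 1 * s ∧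
      L ∣ (A 1 1 - A 0 0) + (g.1 0 0 * g.1 1 1 + g.1 0 1 * g.1 1 0) * s ∧
      L ∣ A 0 1 + g.1 0 0 * g.1 0 1 * s := by
  have hd := g.2
  rw [Matrix.det_fin_two] at hd
  simp only [Matrix.SpecialLinearGroup.coe_inv, Matrix.adjugate_fin_two, Matrix.mul_apply,
    Fin.sum_univ_two, Matrix.of_apply, Matrix.cons_val', Matrix.cons_val_zero, Matrix.cons_val_one,
    Matrix.cons_val_fin_one] at h1 h2
  set e := g.1 0 0
  set f := g.1 0 1
  set h := g.1 1 0
  set k := g.1 1 1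
  set a := A 0 0
  set b := A 0 1
  set c := A 1 0
  set d := A 1 1
  obtain ⟨u, hu⟩ := h1
  obtain ⟨v, hv⟩ := h2
  -- the difference of the diagonal entries of the conjugate
  refine ⟨((k * a - f * c) * e + (k * b - f * d) * h) - ((-h * a + e * c) * f + (-h * b + e * d) * k),
    ⟨v * k ^ 2 - u * h ^ 2, ?_⟩, ⟨2 * u * e * h - 2 * v * f * k, ?_⟩, ⟨u * e ^ 2 - v * f ^ 2, ?_⟩⟩
  · linear_combination k ^ 2 * hv - h ^ 2 * hu - c * (e * k - f * h + 1) * hd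
  · linear_combination 2 * e * h * hu - 2 * f * k * hv - (d - a) * (e * k - f * h + 1) * hd
  · linear_combination e ^ 2 * hu - f ^ 2 * hv - b * (e * k - f * h + 1) * hd

lemma aux_final (X y s D E : ℝ) (hX : 1 ≤ X) (hy : 1 ≤ y) (hs : 0 ≤ s) (hs1 : s ≤ 1)
    (hD : 1 ≤ D) (hE : 1 ≤ E) :
    (7 * X / y / D + 1) * ((4 * X * s / E + 1) * ((4 * X * s * y / (D * E) + 1) *
      ((10 * X / 1 + 1) * 2))) ≤
    19712 * (X ^ 2 + X ^ 3 * s * y / (D * E) + X ^ 4 * s ^ 2 / (D * E)) := by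
  have aux : ∀ i j k : ℝ, 0 ≤ i → i ≤ 1 → 0 ≤ j → j ≤ 1 → 0 ≤ k → k ≤ 1 → i * y = 1 →
      (7 * X * i * j + 1) * ((4 * X * s * k + 1) * ((4 * X * s * y * (j * k) + 1) *
      ((10 * X / 1 + 1) * 2))) ≤
      19712 * (X ^ 2 + X ^ 3 * s * y * (j * k) + X ^ 4 * s ^ 2 * (j * k)) := by
    intro i j k hi hi1 hj hj1 hk hk1 hiy
    have hX0 : 0 ≤ X := by linarith
    have hy0 : 0 ≤ y := by linarith
    have hprod : (X * i * j + 1) * ((X * s * k + 1) * (X * s * y * (j * k) + 1)) ≤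
        8 * (X + X ^ 2 * s * y * (j * k) + X ^ 3 * s ^ 2 * (j * k)) := by
      have e1 : X ^ 3 * s ^ 2 * (j * k) * (j * k) ≤ X ^ 3 * s ^ 2 * (j * k) * 1 := by
        apply mul_le_mul_of_nonneg_left _ (by positivity)
        nlinarith
      have e2 : X ^ 2 * s * (j * k) * i ≤ X ^ 2 * s * (j * k) * y :=
        mul_le_mul_of_nonneg_left (by linarith) (by positivity)
      have e3 : X ^ 2 * s * (j * k) * j ≤ X ^ 2 * s * (j * k) * y :=
        mul_le_mul_of_nonneg_left (by linarith) (by positivity)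
      have e4 : X ^ 2 * s * y * (j * k) * (s * k) ≤ X ^ 2 * s * y * (j * k) * 1 := by
        apply mul_le_mul_of_nonneg_left _ (by positivity)
        nlinarith
      have e5 : X * (i * j) ≤ X * 1 := by
        apply mul_le_mul_of_nonneg_left _ (by positivity)
        nlinarith
      have e6 : X * (s * k) ≤ X * 1 := by
        apply mul_le_mul_of_nonneg_left _ (by positivity)
        nlinarith
      have e7 : X * s * y * (j * k) * 1 ≤ X * s * y * (j * k) * X :=
        mul_le_mul_of_nonneg_left hX (by positivity)
      have p1 : 0 ≤ X ^ 3 * s ^ 2 * (j * k) := by positivity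
      have p2 : 0 ≤ X ^ 2 * s * y * (j * k) := by positivity
      have ex : (X * i * j + 1) * ((X * s * k + 1) * (X * s * y * (j * k) + 1)) =
         X ^ 3 * s ^ 2 * (j * k) * (j * k) * (i * y) + X ^ 2 * s * (j * k) * i
         + X ^ 2 * s * (j * k) * j * (i * y) + X ^ 2 * s * y * (j * k) * (s * k)
         + X * (i * j) + X * (s * k) + X * s * y * (j * k) + 1 := by ring
      rw [ex, hiy]
      linarith
    have f1 : 7 * X * i * j + 1 ≤ 7 * (X * i * j + 1) := by linarith
    have f2 : 4 * X * s * k + 1 ≤ 4 * (X * s * k + 1) := by linarith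
    have f3 : 4 * X * s * y * (j * k) + 1 ≤ 4 * (X * s * y * (j * k) + 1) := by linarith
    have f4 : (10 * X / 1 + 1) * 2 ≤ 22 * X := by linarith
    calc _ ≤ 7 * (X * i * j + 1) * ((4 * (X * s * k + 1)) * ((4 * (X * s * y * (j * k) + 1)) *
            (22 * X))) := by gcongr
      _ = 2464 * X * ((X * i * j + 1) * ((X * s * k + 1) * (X * s * y * (j * k) + 1))) := by ring
      _ ≤ 2464 * X * (8 * (X + X ^ 2 * s * y * (j * k) + X ^ 3 * s ^ 2 * (j * k))) :=
          mul_le_mul_of_nonneg_left hprod (by positivity)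
      _ = _ := by ring
  have hD0 : 0 < D := by linarith
  have hE0 : 0 < E := by linarith
  have hy0 : 0 < y := by linarith
  have := aux y⁻¹ D⁻¹ E⁻¹ (by positivity) (inv_le_one_of_one_le₀ hy) (by positivity)
    (inv_le_one_of_one_le₀ hD) (by positivity) (inv_le_one_of_one_le₀ hE) (by field_simp)
  simpa only [div_eq_mul_inv, mul_inv] using this

lemma aux_ncard {α : Type*} (s : Set α) : ∃ F : Finset α, (∀ x ∈ F, x ∈ s) ∧ F.card = s.ncard := by
  by_cases h : s.Finite
  · exact ⟨h.toFinset, fun x hx => by simpa using hx, (Set.ncard_eq_toFinset_card s h).symm⟩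
  · exact ⟨∅, by simp, by simp [Set.Infinite.ncard h]⟩

/-- Uniform counting bound for the sums `Σ M(z, g; δ', p^l, l₁l₂)` over pairs of primes
`l₁, l₂ ∈ Pr ⊆ [X, 2X]`. -/
theorem stmt_15 :
    ∃ Cst : ℝ, 0 < Cst ∧
      ∀ (p : ℕ), p.Prime →
      ∀ l : ℕ, ∀ z : ℂ, 1 ≤ z.im →
      ∀ g : Matrix.SpecialLinearGroup (Fin 2) ℤ,
      ∀ δ : ℝ, 0 < δ → δ < 1 →
      ∀ X : ℝ, 1 ≤ X →
      ∀ Pr : Finset ℕ, (∀ q ∈ Pr, Nat.Prime q ∧ X ≤ (q : ℝ) ∧ (q : ℝ) ≤ 2 * X) → p ∉ Pr →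
        (∑ q ∈ Pr ×ˢ Pr, (Mcount z g δ (p ^ l) (q.1 * q.2) : ℝ)) ≤
          Cst * (X ^ 2 + X ^ 3 * Real.sqrt δ * z.im / (p : ℝ) ^ l + X ^ 4 * δ / (p : ℝ) ^ l) := by
  refine ⟨19712, by norm_num, ?_⟩
  intro p hp l z hy g δ hδ hδ1 X hX Pr hPr _
  have hpl : 0 < p ^ l := pow_pos hp.pos l
  choose F hF hFc using fun q : ℕ × ℕ => aux_ncard
    {γ : Matrix (Fin 2) (Fin 2) ℤ | γ.det = ((q.1 * q.2 : ℕ) : ℤ) ∧ uInv (moeb γ z) z ≤ δ ∧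
    ((p ^ l : ℕ) : ℤ) ∣ (((g⁻¹ : Matrix.SpecialLinearGroup (Fin 2) ℤ) : Matrix (Fin 2) (Fin 2) ℤ) * γ *
      (g : Matrix (Fin 2) (Fin 2) ℤ)) 0 1 ∧
    ((p ^ l : ℕ) : ℤ) ∣ (((g⁻¹ : Matrix.SpecialLinearGroup (Fin 2) ℤ) : Matrix (Fin 2) (Fin 2) ℤ) * γ *
      (g : Matrix (Fin 2) (Fin 2) ℤ)) 1 0}
  set S : Finset (Σ _ : ℕ × ℕ, Matrix (Fin 2) (Fin 2) ℤ) := (Pr ×ˢ Pr).sigma F with hS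
  have hsum : (∑ q ∈ Pr ×ˢ Pr, (Mcount z g δ (p ^ l) (q.1 * q.2) : ℝ)) = (S.card : ℝ) := by
    rw [hS, Finset.card_sigma]
    push_cast
    exact Finset.sum_congr rfl fun q _ => by rw [hFc q]; rfl
  rw [hsum]
  -- arithmetic data
  have hgd := g.2
  rw [Matrix.det_fin_two] at hgd
  have hLpos : (0 : ℤ) < ((p ^ l : ℕ) : ℤ) := by exact_mod_cast hpl
  have hLr : ((((p ^ l : ℕ) : ℤ) : ℤ) : ℝ) = (p : ℝ) ^ l := by push_cast; rfl
  generalize hLdef : ((p ^ l : ℕ) : ℤ) = L at *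
  set c0 : ℤ := g.1 1 0 * g.1 1 1 with hc0
  set B0 : ℤ := g.1 0 0 * g.1 1 1 + g.1 0 1 * g.1 1 0 with hB0
  set b0 : ℤ := g.1 0 0 * g.1 0 1 with hb0
  have hdisc : B0 ^ 2 - 4 * c0 * b0 = 1 := by
    rw [hB0, hc0, hb0]
    linear_combination (g.1 0 0 * g.1 1 1 - g.1 0 1 * g.1 1 0 + 1) * hgd
  obtain ⟨D, E, hD, hE, hDE, hDc, hEs⟩ : ∃ D E : ℤ, 0 < D ∧ 0 < E ∧ D * E = L ∧ D ∣ c0 ∧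
      ∀ s, L ∣ c0 * s → E ∣ s := by
    have hgpos : 0 < Int.gcd c0 L := Int.gcd_pos_of_ne_zero_right _ hLpos.ne'
    obtain ⟨E, hE⟩ := Int.gcd_dvd_right c0 L
    obtain ⟨c1, hc1⟩ := Int.gcd_dvd_left c0 L
    have hG : (0 : ℤ) < (Int.gcd c0 L : ℤ) := by exact_mod_cast hgpos
    refine ⟨Int.gcd c0 L, E, hG, ?_, hE.symm, Int.gcd_dvd_left c0 L, ?_⟩
    · rw [hE] at hLpos
      exact (mul_pos_iff_of_pos_left hG).1 hLpos
    · intro s hs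
      have hb := Int.gcd_eq_gcd_ab c0 L
      -- gcd = c0 * x + L * y, so gcd * s = c0 s x + L s y is divisible by L = gcd * E
      have h1 : L ∣ (Int.gcd c0 L : ℤ) * s := by
        rw [hb]
        obtain ⟨w, hw⟩ := hs
        exact ⟨w * Int.gcdA c0 L + s * Int.gcdB c0 L, by linear_combination Int.gcdA c0 L * hw⟩
      obtain ⟨w, hw⟩ := h1
      refine ⟨w, mul_left_cancel₀ hG.ne' ?_⟩
      linear_combination hw + w * hE
  -- properties of members
  have hmem : ∀ x ∈ S, x.1.1 ∈ Pr ∧ x.1.2 ∈ Pr ∧ x.2.det = ((x.1.1 * x.1.2 : ℕ) : ℤ) := by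
    intro x hx
    rw [hS, Finset.mem_sigma, Finset.mem_product] at hx
    exact ⟨hx.1.1, hx.1.2, (hF _ _ hx.2).1⟩
  have hcong : ∀ x ∈ S, ∃ s : ℤ, L ∣ x.2 1 0 - c0 * s ∧ L ∣ (x.2 1 1 - x.2 0 0) + B0 * s ∧
      L ∣ x.2 0 1 + b0 * s := by
    intro x hx
    rw [hS, Finset.mem_sigma] at hx
    have h := hF _ _ hx.2
    exact aux_cong g L x.2 h.2.2.1 h.2.2.2
  have hbd : ∀ x ∈ S,
      |2 * (x.2 1 0 : ℝ) * z.re + ((x.2 1 1 : ℝ) - x.2 0 0)| ≤ 2 * X * √δ ∧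
      |(x.2 1 0 : ℝ) * (z.re ^ 2 - z.im ^ 2) + ((x.2 1 1 : ℝ) - x.2 0 0) * z.re - x.2 0 1|
        ≤ 2 * X * √δ * z.im ∧
      |(x.2 0 0 : ℝ) + x.2 1 1| ≤ 5 * X ∧ |(x.2 1 0 : ℝ)| ≤ 7 / 2 * X / z.im := by
    intro x hx
    obtain ⟨h1, h2, h3⟩ := hmem x hx
    obtain ⟨-, h1l, h1u⟩ := hPr _ h1
    obtain ⟨-, h2l, h2u⟩ := hPr _ h2
    rw [hS, Finset.mem_sigma] at hx
    have hu := (hF _ _ hx.2).2.1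
    rw [Matrix.det_fin_two] at h3
    have hdet : (x.2 0 0 : ℝ) * x.2 1 1 - x.2 0 1 * x.2 1 0 = (x.1.1 : ℝ) * x.1.2 := by
      exact_mod_cast h3
    have hm : 0 < (x.1.1 : ℝ) * x.1.2 := by
      have : 0 < (x.1.1 : ℝ) := by linarith
      have : 0 < (x.1.2 : ℝ) := by linarith
      positivity
    have hmX : (x.1.1 : ℝ) * x.1.2 ≤ 4 * X ^ 2 := by
      calc (x.1.1 : ℝ) * x.1.2 ≤ (2 * X) * (2 * X) := by gcongr
        _ = _ := by ring
    refine aux_bounds _ _ _ _ _ _ _ _ _ hy hδ hδ1 hX hm hmX hdet ?_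
    refine aux_u z hy _ _ _ _ _ hm hdet δ ?_
    simpa [moeb] using hu
  have hy0 : 0 < z.im := by linarith
  have hX0 : 0 < X := by linarith
  have hs0 : 0 ≤ √δ := Real.sqrt_nonneg _
  have hDr : (1 : ℝ) ≤ D := by exact_mod_cast hD
  have hEr : (1 : ℝ) ≤ E := by exact_mod_cast hE
  have hLrDE : (L : ℝ) = D * E := by rw [← hDE]; push_cast; rfl
  have hDp : (0 : ℝ) < D := by linarith
  have hEp : (0 : ℝ) < E := by linarith
  have hfin := aux_final X z.im (√δ) D E hX hy hs0 (Real.sqrt_le_one.2 hδ1.le) hDr hEr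
  rw [Real.sq_sqrt hδ.le, ← hLrDE, hLr] at hfin
  refine le_trans ?_ hfin
  rw [← hLr, hLrDE]
  -- step 1: lower left entry
  refine aux_step S (fun x => x.2 1 0) D hD _ _ (by positivity) (by positivity) ?_ ?_ ?_
  · have : ∀ x ∈ S, D ∣ x.2 1 0 := by
      intro x hx
      obtain ⟨s, h, -, -⟩ := hcong x hx
      have h1 : D ∣ x.2 1 0 - c0 * s := (Dvd.intro E hDE).trans h
      have := dvd_add h1 (hDc.mul_right s)
      simpa using this
    intro x hx y hy
    exact dvd_sub (this x hx) (this y hy)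
  · intro x hx y hy
    have h1 := abs_le.1 (hbd x hx).2.2.2
    have h2 := abs_le.1 (hbd y hy).2.2.2
    push_cast
    have : 7 * X / z.im = 7 / 2 * X / z.im + 7 / 2 * X / z.im := by ring
    linarith [h1.2, h2.1]
  intro v1
  -- step 2: difference of the diagonal entries
  refine aux_step _ (fun x => x.2 1 1 - x.2 0 0) E hE _ _ (by positivity) (by positivity) ?_ ?_ ?_
  · intro x hx y hy
    simp only [Finset.mem_filter] at hx hy
    obtain ⟨s, h1, h2, -⟩ := hcong x hx.1
    obtain ⟨t, h1', h2', -⟩ := hcong y hy.1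
    have h3 : L ∣ c0 * (s - t) := by
      have := dvd_sub h1' h1
      rw [hx.2, hy.2] at this
      refine aux_dvd_s15 this ?_; ring
    have h4 := hEs _ h3
    have h5 : E ∣ _ := (Dvd.intro_left D hDE).trans (dvd_sub h2 h2')
    have := dvd_sub h5 (h4.mul_left B0)
    refine aux_dvd_s15 this ?_; ring
  · intro x hx y hy
    simp only [Finset.mem_filter] at hx hy
    have h1 := abs_le.1 (hbd x hx.1).1
    have h2 := abs_le.1 (hbd y hy.1).1
    rw [hx.2] at h1
    rw [hy.2] at h2
    push_cast
    linarith [h1.2, h2.1]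
  intro v2
  -- step 3: upper right entry
  rw [← hLrDE]
  refine aux_step _ (fun x => x.2 0 1) L hLpos _ _ (by positivity) (by positivity) ?_ ?_ ?_
  · intro x hx y hy
    simp only [Finset.mem_filter] at hx hy
    obtain ⟨s, h1, h2, h3⟩ := hcong x hx.1.1
    obtain ⟨t, h1', h2', h3'⟩ := hcong y hy.1.1
    have h4 : L ∣ c0 * (s - t) := by
      have := dvd_sub h1' h1
      rw [hx.1.2, hy.1.2] at this
      refine aux_dvd_s15 this ?_; ring
    have h5 : L ∣ B0 * (s - t) := by
      have := dvd_sub h2 h2'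
      rw [hx.2, hy.2] at this
      refine aux_dvd_s15 this ?_; ring
    have h6 : L ∣ s - t := by
      have := dvd_sub (h5.mul_left B0) (h4.mul_left (4 * b0))
      refine aux_dvd_s15 this ?_
      linear_combination (-(s - t)) * hdisc
    have := dvd_sub (dvd_sub h3 h3') (h6.mul_left b0)
    refine aux_dvd_s15 this ?_; ring
  · intro x hx y hy
    simp only [Finset.mem_filter] at hx hy
    have h1 := abs_le.1 (hbd x hx.1.1).2.1
    have h2 := abs_le.1 (hbd y hy.1.1).2.1
    have ex : ((x.2 1 1 : ℝ) - x.2 0 0) = v2 := by exact_mod_cast hx.2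
    have ey : ((y.2 1 1 : ℝ) - y.2 0 0) = v2 := by exact_mod_cast hy.2
    rw [hx.1.2, ex] at h1
    rw [hy.1.2, ey] at h2
    push_cast
    linarith [h1.1, h2.2]
  intro v3
  -- step 4: trace
  have h10 : 10 * X / 1 = 10 * X / ((1 : ℤ) : ℝ) := by simp
  rw [h10]
  refine aux_step _ (fun x => x.2 0 0 + x.2 1 1) 1 one_pos _ _ (by positivity) (by positivity) ?_ ?_ ?_
  · intro x _ y _
    exact one_dvd _
  · intro x hx y hy
    simp only [Finset.mem_filter] at hx hy
    have h1 := abs_le.1 (hbd x hx.1.1.1).2.2.1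
    have h2 := abs_le.1 (hbd y hy.1.1.1).2.2.1
    push_cast
    linarith [h1.2, h2.1]
  intro v4
  -- last step: the matrix is determined and only the order of the primes is free
  set T := Finset.filter (fun x : (Σ _ : ℕ × ℕ, Matrix (Fin 2) (Fin 2) ℤ) => x.2 0 0 + x.2 1 1 = v4)
    _ with hT
  rcases T.eq_empty_or_nonempty with h0 | ⟨x, hx⟩
  · rw [h0]; simp
  have hsub : T ⊆ {x, ⟨(x.1.2, x.1.1), x.2⟩} := by
    intro y hy
    simp only [hT, Finset.mem_filter] at hx hy
    obtain ⟨⟨⟨⟨hxS, x1⟩, x2⟩, x3⟩, x4⟩ := hx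
    obtain ⟨⟨⟨⟨hyS, y1⟩, y2⟩, y3⟩, y4⟩ := hy
    have hxy : y.2 = x.2 := by
      ext i j
      fin_cases i <;> fin_cases j <;> simp only [Fin.mk_zero, Fin.mk_one] <;> omega
    obtain ⟨ax, bx, dx⟩ := hmem x hxS
    obtain ⟨ay, cy, dy⟩ := hmem y hyS
    rw [hxy, dx] at dy
    have hm : x.1.1 * x.1.2 = y.1.1 * y.1.2 := by exact_mod_cast dy
    have px1 := (hPr _ ax).1
    have px2 := (hPr _ bx).1
    have py1 := (hPr _ ay).1
    obtain ⟨⟨q1, q2⟩, A⟩ := x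
    obtain ⟨⟨r1, r2⟩, B⟩ := y
    simp only at hxy hm px1 px2 py1
    subst hxy
    have hdvd : r1 ∣ q1 * q2 := hm ▸ Dvd.intro _ rfl
    rw [Finset.mem_insert, Finset.mem_singleton]
    rcases py1.dvd_mul.1 hdvd with h | h
    · left
      have h := (Nat.prime_dvd_prime_iff_eq py1 px1).1 h
      subst h
      have := Nat.eq_of_mul_eq_mul_left py1.pos hm
      rw [this]
    · right
      have h := (Nat.prime_dvd_prime_iff_eq py1 px2).1 h
      subst h
      rw [mul_comm] at hm
      have := Nat.eq_of_mul_eq_mul_left py1.pos hm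
      rw [this]
  have hc : T.card ≤ 2 := (Finset.card_le_card hsub).trans Finset.card_le_two
  exact_mod_cast hc
end

section
/- For every ε > 0 there exists a constant C = C(ε) > 0 such that for every prime p, every integer l ≥ 0, every z ∈ ℍ with Im z ≥ 1, every g ∈ SL₂(ℤ), every δ' with 0 < δ' < 1, every real X ≥ 1, and every finite set 𝒫 of primes with 𝒫 ⊆ [X, 2X] and p ∉ 𝒫, one has Σ_{(l₁,l₂) ∈ 𝒫×𝒫} M_*(z, g; δ', p^l, (l₁·l₂)²) ≤ C·X^{2+ε}·( 1 + √δ'·X²·(Im z)/p^l + δ'·X⁴/p^l ). -/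
/-- `M_par(z,g;δ,L,m)`: those matrices counted by `M(z,g;δ,L,m)` that are moreover parabolic
(`(tr γ)² = 4m`) with nonzero lower-left entry. -/
noncomputable def Mpar (z : ℂ) (g : Matrix.SpecialLinearGroup (Fin 2) ℤ) (δ : ℝ)
    (L m : ℕ) : ℕ :=
  Set.ncard {γ : Matrix (Fin 2) (Fin 2) ℤ | γ.det = (m : ℤ) ∧ uInv (moeb γ z) z ≤ δ ∧
    ((L : ℤ) ∣ (((g⁻¹ : Matrix.SpecialLinearGroup (Fin 2) ℤ) : Matrix (Fin 2) (Fin 2) ℤ) * γ *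
      (g : Matrix (Fin 2) (Fin 2) ℤ)) 0 1 ∧
    (L : ℤ) ∣ (((g⁻¹ : Matrix.SpecialLinearGroup (Fin 2) ℤ) : Matrix (Fin 2) (Fin 2) ℤ) * γ *
      (g : Matrix (Fin 2) (Fin 2) ℤ)) 1 0) ∧
    γ.trace ^ 2 = 4 * (m : ℤ) ∧ γ 1 0 ≠ 0}

/-- `M_* = M − M_par`. -/
noncomputable def Mstar (z : ℂ) (g : Matrix.SpecialLinearGroup (Fin 2) ℤ) (δ : ℝ)
    (L m : ℕ) : ℕ :=
  Mcount z g δ L m - Mpar z g δ L m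


/-- Divisor bound. -/
theorem divisor_bound (η : ℝ) (hη : 0 < η) :
    ∃ C : ℝ, 1 ≤ C ∧ ∀ n : ℕ, n ≠ 0 → (n.divisors.card : ℝ) ≤ C * (n : ℝ) ^ η := by
  have hlog2 : 0 < Real.log 2 := Real.log_pos (by norm_num)
  set A : ℝ := 1 + 1 / (η * Real.log 2) with hA
  have hA1 : 1 ≤ A := by
    have : 0 < 1 / (η * Real.log 2) := by positivity
    linarith
  obtain ⟨P, hP⟩ := exists_nat_ge ((2 : ℝ) ^ (1 / η))
  refine ⟨A ^ P, one_le_pow₀ hA1, fun n hn => ?_⟩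
  rw [Nat.card_divisors hn]
  push_cast
  have key : ∀ p ∈ n.primeFactors, ((n.factorization p : ℝ) + 1) ≤
      (if p < P then A else 1) * ((p : ℝ) ^ (n.factorization p)) ^ η := by
    intro p hp
    have hpp := Nat.prime_of_mem_primeFactors hp
    have hp2 : (2 : ℝ) ≤ p := by exact_mod_cast hpp.two_le
    set v := n.factorization p
    have hsw : ((p : ℝ) ^ v) ^ η = ((p : ℝ) ^ η) ^ v := by
      rw [← Real.rpow_natCast, ← Real.rpow_mul (by positivity), mul_comm,
        Real.rpow_mul (by positivity), Real.rpow_natCast]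
    split_ifs with h
    · have h1 : (2 : ℝ) ^ η ≤ (p : ℝ) ^ η := Real.rpow_le_rpow (by norm_num) hp2 hη.le
      have h2 : 1 + η * Real.log 2 ≤ (2 : ℝ) ^ η := by
        rw [Real.rpow_def_of_pos (by norm_num)]
        have := Real.add_one_le_exp (Real.log 2 * η)
        linarith
      have h3 : 1 + (v : ℝ) * (η * Real.log 2) ≤ ((p : ℝ) ^ η) ^ v := by
        have hb := one_add_mul_le_pow (a := η * Real.log 2)
          (by have : 0 < η * Real.log 2 := by positivity
              linarith) v
        exact hb.trans (pow_le_pow_left₀ (by positivity) (h2.trans h1) v)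
      rw [hsw]
      calc (v : ℝ) + 1 ≤ A * (1 + (v : ℝ) * (η * Real.log 2)) := by
            have hx : 0 < η * Real.log 2 := by positivity
            rw [hA]
            have : (1 + 1 / (η * Real.log 2)) * (1 + (v : ℝ) * (η * Real.log 2))
              = 1 + (v : ℝ) * (η * Real.log 2) + 1 / (η * Real.log 2) + v := by
              field_simp
              ring
            rw [this]
            have h0 : 0 < 1 / (η * Real.log 2) := by positivity
            have h4 : 0 ≤ (v : ℝ) * (η * Real.log 2) := by positivity
            linarith
        _ ≤ _ := by gcongr
    · have h1 : (2 : ℝ) ≤ (p : ℝ) ^ η := by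
        have hPp : (2 : ℝ) ^ (1 / η) ≤ p := hP.trans (by exact_mod_cast not_lt.mp h)
        have := Real.rpow_le_rpow (by positivity) hPp hη.le
        rwa [← Real.rpow_mul (by norm_num), one_div_mul_cancel hη.ne', Real.rpow_one] at this
      rw [hsw, one_mul]
      have h2 : ((v : ℝ) + 1) ≤ 2 ^ v := by
        exact_mod_cast Nat.lt_two_pow_self
      exact h2.trans (pow_le_pow_left₀ (by norm_num) h1 v)
  calc ∏ p ∈ n.primeFactors, ((n.factorization p : ℝ) + 1)
      ≤ ∏ p ∈ n.primeFactors, ((if p < P then A else 1) * ((p : ℝ) ^ (n.factorization p)) ^ η) :=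
        Finset.prod_le_prod (fun _ _ => by positivity) key
    _ = (∏ p ∈ n.primeFactors, (if p < P then A else 1)) *
        ∏ p ∈ n.primeFactors, ((p : ℝ) ^ (n.factorization p)) ^ η := Finset.prod_mul_distrib
    _ ≤ _ := by
      have e1 : ∏ p ∈ n.primeFactors, ((p : ℝ) ^ (n.factorization p)) ^ η = (n : ℝ) ^ η := by
        rw [Real.finsetProd_rpow _ _ (fun _ _ => by positivity)]
        congr 1
        conv_rhs => rw [← Nat.prod_factorization_pow_eq_self hn]
        rw [Finsupp.prod, Nat.support_factorization]
        push_cast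
        rfl
      rw [e1]
      gcongr
      rw [Finset.prod_ite, Finset.prod_const, Finset.prod_const_one, mul_one]
      apply pow_le_pow_right₀ hA1
      calc _ ≤ (Finset.range P).card := Finset.card_le_card (by
            intro x hx
            simp at hx ⊢
            exact hx.2)
        _ = P := by simp

/-- Integers in a common class mod `M` in an interval. -/
theorem count_interval (S : Finset ℤ) (M : ℕ) (hM : 0 < M) (r H : ℝ) (hH : 0 ≤ H)
    (hd : ∀ x ∈ S, ∀ y ∈ S, (M : ℤ) ∣ x - y) (hr : ∀ x ∈ S, |(x : ℝ) - r| ≤ H) :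
    (S.card : ℝ) ≤ 1 + 2 * H / M := by
  have hMr : (0 : ℝ) < M := by exact_mod_cast hM
  have hnn : 0 ≤ 2 * H / M := by positivity
  rcases S.eq_empty_or_nonempty with rfl | hne
  · simp; linarith
  set x0 := S.min' hne
  have hx0 : x0 ∈ S := S.min'_mem hne
  have hle : S.card ≤ (Finset.range (⌊2 * H / M⌋₊ + 1)).card := by
    apply Finset.card_le_card_of_injOn (fun x => ((x - x0) / M).toNat)
    · intro x hx
      have hx : x ∈ S := hx
      obtain ⟨k, hk⟩ := hd x hx x0 hx0
      have hge : x0 ≤ x := S.min'_le x hx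
      have hM0 : (M : ℤ) ≠ 0 := by positivity
      have hk0 : 0 ≤ k := by
        by_contra hcon
        push Not at hcon
        have : (M : ℤ) * k < 0 := mul_neg_of_pos_of_neg (by positivity) hcon
        linarith
      have : (x - x0) / (M : ℤ) = k := by rw [hk, Int.mul_ediv_cancel_left _ hM0]
      simp only [this, Finset.coe_range, Set.mem_Iio]
      rw [Nat.lt_succ_iff, Nat.le_floor_iff hnn, le_div_iff₀ hMr]
      have h1 := abs_le.mp (hr x hx)
      have h2 := abs_le.mp (hr x0 hx0)
      have hkc : ((k.toNat : ℕ) : ℝ) = (k : ℝ) := by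
        have := Int.toNat_of_nonneg hk0
        exact_mod_cast this
      have hkr : (x : ℝ) - x0 = M * k := by exact_mod_cast hk
      rw [hkc]; linarith
    · intro x hx y hy hxy
      have hx : x ∈ S := hx
      have hy : y ∈ S := hy
      obtain ⟨k, hk⟩ := hd x hx x0 hx0
      obtain ⟨j, hj⟩ := hd y hy x0 hx0
      have hM0 : (0 : ℤ) < (M : ℤ) := by positivity
      have hgx : 0 ≤ (x - x0) / (M : ℤ) := Int.ediv_nonneg (by linarith [S.min'_le x hx]) hM0.le
      have hgy : 0 ≤ (y - x0) / (M : ℤ) := Int.ediv_nonneg (by linarith [S.min'_le y hy]) hM0.le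
      simp only at hxy
      have : (x - x0) / (M : ℤ) = (y - x0) / (M : ℤ) := by omega
      rw [hk, hj, Int.mul_ediv_cancel_left _ hM0.ne', Int.mul_ediv_cancel_left _ hM0.ne'] at this
      subst this
      linarith
  rw [Finset.card_range] at hle
  have h1 : (S.card : ℝ) ≤ (⌊2 * H / M⌋₊ : ℝ) + 1 := by exact_mod_cast hle
  linarith [Nat.floor_le hnn]

/-- Fibre counting. -/
theorem card_fiber {α β : Type*} [DecidableEq β] (S : Finset α) (f : α → β) (K : ℝ)
    (h : ∀ b ∈ S.image f, ((S.filter (fun a => f a = b)).card : ℝ) ≤ K) :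
    (S.card : ℝ) ≤ K * (S.image f).card := by
  rw [Finset.card_eq_sum_card_image f S]
  push_cast
  refine (Finset.sum_le_card_nsmul _ _ _ h).trans ?_
  rw [nsmul_eq_mul, mul_comm]

theorem triple_algebra {N U V T W : ℝ} (hN : 1 ≤ N) (hT0 : 0 ≤ T)
    (hW0 : 0 ≤ N * W) (hUN : U ≤ N) (hVN : V ≤ N) (hUV : U * V ≤ N * T)
    (hTUV : T * (U * V) ≤ N * W) :
    (1 + 2 * T) * ((1 + 2 * U) * (1 + 4 * V)) ≤ 60 * N * (1 + T + W) := by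
  have h1 : T * U ≤ N * T := by
    rw [mul_comm N T]; exact mul_le_mul_of_nonneg_left hUN hT0
  have h2 : T * V ≤ N * T := by
    rw [mul_comm N T]; exact mul_le_mul_of_nonneg_left hVN hT0
  have h3 : T ≤ N * T := le_mul_of_one_le_left hT0 hN
  have e1 : (1 + 2 * T) * ((1 + 2 * U) * (1 + 4 * V)) =
    1 + 2 * T + 2 * U + 4 * V + 4 * (T * U) + 8 * (T * V) + 8 * (U * V) + 16 * (T * (U * V)) := by
    ring
  have e2 : 60 * N * (1 + T + W) = 60 * N + 60 * (N * T) + 60 * (N * W) := by ring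
  rw [e1, e2]
  have : 0 ≤ N * T := by positivity
  linarith

/-- Lattice point count for the triples `(c, a - d, b)`. -/
theorem count_triples (S : Finset (ℤ × ℤ × ℤ)) (L : ℕ) (hL : 0 < L) (α β γ η : ℤ)
    (hdet : α * η - β * γ = 1) (x y N s : ℝ) (hy : 1 ≤ y) (hN : 1 ≤ N) (hs : 0 < s) (hs1 : s < 1)
    (h01 : ∀ t ∈ S, (L : ℤ) ∣ t.2.1 * (β * η) + t.2.2 * η ^ 2 - t.1 * β ^ 2)
    (h10 : ∀ t ∈ S, (L : ℤ) ∣ -(t.2.1 * (α * γ)) - t.2.2 * γ ^ 2 + t.1 * α ^ 2)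
    (hc : ∀ t ∈ S, |(t.1 : ℝ)| ≤ 2 * N / y)
    (hB : ∀ t ∈ S, |2 * (t.1 : ℝ) * x - t.2.1| ≤ s * N)
    (hb : ∀ t ∈ S, |(t.1 : ℝ) * (x ^ 2 - y ^ 2) - t.2.1 * x - t.2.2| ≤ s * N * y) :
    (S.card : ℝ) ≤ 60 * N * (1 + s * N * y / L + s ^ 2 * N ^ 2 / L) := by
  have hkey : ∀ t ∈ S, (L : ℤ) ∣ t.1 * (α * η + β * γ) - t.2.1 * (γ * η) := by
    intro t ht
    have h := dvd_add (Dvd.dvd.mul_left (h01 t ht) (γ ^ 2)) (Dvd.dvd.mul_left (h10 t ht) (η ^ 2))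
    have e : γ ^ 2 * (t.2.1 * (β * η) + t.2.2 * η ^ 2 - t.1 * β ^ 2) +
        η ^ 2 * (-(t.2.1 * (α * γ)) - t.2.2 * γ ^ 2 + t.1 * α ^ 2) =
        (α * η - β * γ) * (t.1 * (α * η + β * γ) - t.2.1 * (γ * η)) := by ring
    rw [e, hdet, one_mul] at h
    exact h
  have hcop : IsCoprime (γ * η) (α * η + β * γ) :=
    ⟨-4 * α * β, α * η + β * γ, by linear_combination (α * η - β * γ + 1) * hdet⟩
  have hcop2 : IsCoprime (γ ^ 2) (η ^ 2) :=
    IsCoprime.pow ⟨-β, α, by linear_combination hdet⟩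
  set e := Nat.gcd L (γ * η).natAbs with he
  have hepos : 0 < e := Nat.gcd_pos_of_pos_left _ hL
  have heL : e ∣ L := Nat.gcd_dvd_left _ _
  obtain ⟨L', hL'⟩ := heL
  have hL'pos : 0 < L' := Nat.pos_of_ne_zero (by rintro rfl; simp at hL'; omega)
  obtain ⟨v, hv⟩ : (e : ℤ) ∣ γ * η := Int.natCast_dvd.mpr (Nat.gcd_dvd_right _ _)
  have hLr : (0 : ℝ) < L := by exact_mod_cast hL
  have her : (1 : ℝ) ≤ e := by exact_mod_cast hepos
  have hLe : (L : ℝ) = e * L' := by exact_mod_cast hL'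
  have hL'r : (1 : ℝ) ≤ L' := by exact_mod_cast hL'pos
  have step1 : (S.card : ℝ) ≤ (1 + 2 * (s * N * y) / L) *
      (S.image (fun t => (t.1, t.2.1))).card := by
    apply card_fiber
    rintro ⟨c, B⟩ -
    have hinj : ((S.filter (fun a => (a.1, a.2.1) = (c, B))).card) =
        ((S.filter (fun a => (a.1, a.2.1) = (c, B))).image (fun t => t.2.2)).card := by
      symm
      apply Finset.card_image_of_injOn
      intro t ht t' ht' h
      simp at ht ht' h
      ext <;> simp [ht, ht', h]
    rw [hinj]
    apply count_interval _ L hL ((c : ℝ) * (x ^ 2 - y ^ 2) - B * x) _ (by positivity)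
    · intro b1 hb1 b2 hb2
      simp only [Finset.mem_image, Finset.mem_filter, Prod.mk.injEq] at hb1 hb2
      obtain ⟨t, ⟨ht, rfl, rfl⟩, rfl⟩ := hb1
      obtain ⟨t', ⟨ht', h1, h2⟩, rfl⟩ := hb2
      have d1 := dvd_sub (h01 t ht) (h01 t' ht')
      have d2 := dvd_sub (h10 t' ht') (h10 t ht)
      rw [h1, h2] at d1 d2
      obtain ⟨u, w, huw⟩ := hcop2
      have := dvd_add (Dvd.dvd.mul_left d1 w) (Dvd.dvd.mul_left d2 u)
      exact this.trans (dvd_of_eq (by linear_combination (t.2.2 - t'.2.2) * huw))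
    · intro b1 hb1
      simp only [Finset.mem_image, Finset.mem_filter, Prod.mk.injEq] at hb1
      obtain ⟨t, ⟨ht, rfl, rfl⟩, rfl⟩ := hb1
      rw [abs_sub_comm]
      exact hb t ht
  set S2 := S.image (fun t => (t.1, t.2.1)) with hS2
  have step2 : (S2.card : ℝ) ≤ (1 + 2 * (s * N) / L') * (S2.image Prod.fst).card := by
    apply card_fiber
    rintro c -
    have hinj : ((S2.filter (fun a => a.1 = c)).card) =
        ((S2.filter (fun a => a.1 = c)).image (fun t => t.2)).card := by
      symm
      apply Finset.card_image_of_injOn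
      intro t ht t' ht' h
      simp at ht ht' h
      ext <;> simp [ht, ht', h]
    rw [hinj]
    apply count_interval _ L' hL'pos (2 * (c : ℝ) * x) _ (by positivity)
    · intro b1 hb1 b2 hb2
      simp only [hS2, Finset.mem_image, Finset.mem_filter] at hb1 hb2
      obtain ⟨_, ⟨⟨t, ht, rfl⟩, rfl⟩, rfl⟩ := hb1
      obtain ⟨_, ⟨⟨t', ht', rfl⟩, h1⟩, rfl⟩ := hb2
      simp only at h1 ⊢
      have d1 := dvd_sub (hkey t' ht') (hkey t ht)
      rw [h1] at d1
      have d2 : (L : ℤ) ∣ (t.2.1 - t'.2.1) * (γ * η) := by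
        exact d1.trans (dvd_of_eq (by ring))
      have d3 : L ∣ (t.2.1 - t'.2.1).natAbs * (γ * η).natAbs := by
        rw [← Int.natAbs_mul]; exact Int.natCast_dvd.mp d2
      have d4 : L ∣ (t.2.1 - t'.2.1).natAbs * e := by
        rw [he, Nat.gcd_comm]
        have := Nat.dvd_gcd d3 (Dvd.intro_left (t.2.1 - t'.2.1).natAbs rfl : L ∣ (t.2.1 - t'.2.1).natAbs * L)
        rwa [Nat.gcd_mul_left] at this
      rw [hL', mul_comm] at d4
      exact Int.natCast_dvd.mpr (Nat.dvd_of_mul_dvd_mul_right hepos d4)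
    · intro b1 hb1
      simp only [hS2, Finset.mem_image, Finset.mem_filter] at hb1
      obtain ⟨_, ⟨⟨t, ht, rfl⟩, rfl⟩, rfl⟩ := hb1
      rw [abs_sub_comm]
      exact hB t ht
  have step3 : ((S2.image Prod.fst).card : ℝ) ≤ 1 + 2 * (2 * N / y) / e := by
    have hmul : ∀ c ∈ S2.image Prod.fst, (e : ℤ) ∣ c ∧ |(c : ℝ) - 0| ≤ 2 * N / y := by
      intro c hcm
      simp only [hS2, Finset.mem_image] at hcm
      obtain ⟨_, ⟨t, ht, rfl⟩, rfl⟩ := hcm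
      refine ⟨?_, by simpa using hc t ht⟩
      have d1 : (e : ℤ) ∣ t.1 * (α * η + β * γ) - t.2.1 * (γ * η) :=
        dvd_trans (by exact_mod_cast Dvd.intro _ hL'.symm) (hkey t ht)
      have d2 : (e : ℤ) ∣ t.1 * (α * η + β * γ) := by
        have := dvd_add d1 (Dvd.dvd.mul_left (Dvd.intro v hv.symm) t.2.1)
        simpa using this
      exact (hcop.of_isCoprime_of_dvd_left (Dvd.intro v hv.symm)).dvd_of_dvd_mul_right d2
    apply count_interval _ e hepos 0 _ (by positivity)
    · intro c1 h1 c2 h2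
      exact dvd_sub (hmul c1 h1).1 (hmul c2 h2).1
    · exact fun c h => (hmul c h).2
  have hy0 : 0 < y := by linarith
  have hN0 : 0 < N := by linarith
  have he0 : (0 : ℝ) < e := by linarith
  have hL'0 : (0 : ℝ) < L' := by linarith
  calc (S.card : ℝ) ≤ (1 + 2 * (s * N * y) / L) * ((1 + 2 * (s * N) / L') *
        (1 + 2 * (2 * N / y) / e)) := by
        refine step1.trans ?_
        gcongr
        refine step2.trans ?_
        gcongr
    _ ≤ _ := by
      have eU : 2 * (s * N) / L' = 2 * (s * N / L') := by ring
      have eT : 2 * (s * N * y) / L = 2 * (s * N * y / L) := by ring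
      have eV : 2 * (2 * N / y) / e = 4 * (N / (y * e)) := by field_simp; ring
      have eTU : s * N * y / L = s * N / L' * y / e := by rw [hLe]; field_simp
      rw [eU, eT, eV]
      have hUN : s * N / L' ≤ N := by
        rw [div_le_iff₀ hL'0]; nlinarith
      have hVN : N / (y * e) ≤ N := by
        exact div_le_self hN0.le (one_le_mul_of_one_le_of_one_le hy her)
      have hUV : s * N / L' * (N / (y * e)) ≤ N * (s * N * y / L) := by
        have : s * N / L' * (N / (y * e)) = N * (s * N / L) * (1 / y) := by
          rw [hLe]; field_simp
        rw [this]
        have h2 : N * (s * N * y / L) = N * (s * N / L) * y := by ring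
        rw [h2]
        have h3 : 1 / y ≤ y := by rw [div_le_iff₀ hy0]; nlinarith
        gcongr
      have hTUV : s * N * y / L * (s * N / L' * (N / (y * e))) ≤ N * (s ^ 2 * N ^ 2 / L) := by
        have : s * N * y / L * (s * N / L' * (N / (y * e))) = N * (s ^ 2 * N ^ 2 / L) * (1 / L) := by
          rw [hLe]; field_simp
        rw [this]
        have h3 : 1 / (L : ℝ) ≤ 1 := by rw [div_le_iff₀ hLr, hLe]; nlinarith
        have : 0 ≤ N * (s ^ 2 * N ^ 2 / L) := by positivity
        nlinarith
      have hU0 : 0 ≤ s * N / L' := by positivity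
      have hV0 : 0 ≤ N / (y * e) := by positivity
      have hT0 : 0 ≤ s * N * y / L := by positivity
      have hW0 : 0 ≤ N * (s ^ 2 * N ^ 2 / L) := by positivity
      exact triple_algebra hN hT0 hW0 hUN hVN hUV hTUV

theorem geom (a b c d : ℤ) (n : ℕ) (hn : 0 < n) (z : ℂ) (hy : 1 ≤ z.im) (δ : ℝ) (hδ : 0 < δ)
    (hδ1 : δ < 1) (hdet : a * d - b * c = ((n ^ 2 : ℕ) : ℤ))
    (hu : uInv (((a : ℂ) * z + (b : ℂ)) / ((c : ℂ) * z + (d : ℂ))) z ≤ δ) :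
    |2 * (c : ℝ) * z.re - ((a - d : ℤ) : ℝ)| ≤ Real.sqrt δ * n ∧
    |(c : ℝ) * (z.re ^ 2 - z.im ^ 2) - ((a - d : ℤ) : ℝ) * z.re - b| ≤ Real.sqrt δ * n * z.im ∧
    |(c : ℝ)| ≤ 2 * n / z.im ∧
    ((a + d : ℤ) : ℝ) ^ 2 ≤ 5 * (n : ℝ) ^ 2 := by
  have hy0 : 0 < z.im := by linarith
  have hnr : (0 : ℝ) < n := by exact_mod_cast hn
  have hdr : (a : ℝ) * d - b * c = (n : ℝ) ^ 2 := by exact_mod_cast hdet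
  set x := z.re with hx
  set y := z.im with hyy
  set w : ℂ := (c : ℂ) * z + (d : ℂ) with hw
  have hwre : w.re = c * x + d := by simp [hw, hx]
  have hwim : w.im = c * y := by simp [hw, hyy]
  have hw0 : w ≠ 0 := by
    intro h
    have h1 : (c : ℝ) * y = 0 := by rw [← hwim, h]; simp
    have h2 : (c : ℝ) * x + d = 0 := by rw [← hwre, h]; simp
    have hc : (c : ℝ) = 0 := by
      rcases mul_eq_zero.mp h1 with h | h
      · exact h
      · linarith
    rw [hc] at h2 hdr
    have hd : (d : ℝ) = 0 := by linarith
    rw [hd] at hdr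
    nlinarith [pow_pos hnr 2]
  have hns : 0 < Complex.normSq w := Complex.normSq_pos.mpr hw0
  have him : (((a : ℂ) * z + (b : ℂ)) / w).im = (n : ℝ) ^ 2 * y / Complex.normSq w := by
    rw [Complex.div_im, hwre, hwim, ← hdr]
    simp [← hx, ← hyy]
    field_simp
    ring
  have hnorm : ‖((a : ℂ) * z + (b : ℂ)) / w - z‖ ^ 2 =
      ((c * (x ^ 2 - y ^ 2) - (a - d) * x - b) ^ 2 + (y * (2 * c * x - (a - d))) ^ 2) /
        Complex.normSq w := by
    have : ((a : ℂ) * z + (b : ℂ)) / w - z = ((a : ℂ) * z + (b : ℂ) - z * w) / w := by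
      field_simp
    rw [this, norm_div, div_pow, ← Complex.normSq_eq_norm_sq, ← Complex.normSq_eq_norm_sq]
    congr 1
    rw [Complex.normSq_apply]
    simp [hwre, hwim, ← hx, ← hyy]
    ring
  rw [uInv, him, hnorm, ← hyy] at hu
  have hQ : (c * (x ^ 2 - y ^ 2) - (a - d) * x - b) ^ 2 + (y * (2 * c * x - (a - d))) ^ 2
      ≤ δ * (n : ℝ) ^ 2 * y ^ 2 := by
    have e : ((c * (x ^ 2 - y ^ 2) - (a - d) * x - b) ^ 2 + (y * (2 * c * x - (a - d))) ^ 2) /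
        Complex.normSq w / ((n : ℝ) ^ 2 * y / Complex.normSq w * y) =
        ((c * (x ^ 2 - y ^ 2) - (a - d) * x - b) ^ 2 + (y * (2 * c * x - (a - d))) ^ 2) /
        ((n : ℝ) ^ 2 * y ^ 2) := by
      field_simp
    rw [e, div_le_iff₀ (by positivity)] at hu
    linarith
  have hs2 : Real.sqrt δ ^ 2 = δ := Real.sq_sqrt hδ.le
  have hs0 : 0 < Real.sqrt δ := Real.sqrt_pos.mpr hδ
  have hs1 : Real.sqrt δ < 1 := by
    rw [Real.sqrt_lt' one_pos]; simpa using hδ1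
  set s := Real.sqrt δ
  rw [← hs2] at hQ
  push_cast
  have hRe : |(c : ℝ) * (x ^ 2 - y ^ 2) - (a - d) * x - b| ≤ s * n * y := by
    apply abs_le_of_sq_le_sq _ (by positivity)
    have e : (s * n * y) ^ 2 = s ^ 2 * (n : ℝ) ^ 2 * y ^ 2 := by ring
    rw [e]
    linarith [sq_nonneg (y * (2 * c * x - (a - d)))]
  have hIm : |2 * (c : ℝ) * x - (a - d)| ≤ s * n := by
    apply abs_le_of_sq_le_sq _ (by positivity)
    have h1 : (2 * (c : ℝ) * x - (a - d)) ^ 2 * y ^ 2 ≤ (s * n) ^ 2 * y ^ 2 := by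
      have e : (s * n) ^ 2 * y ^ 2 = s ^ 2 * (n : ℝ) ^ 2 * y ^ 2 := by ring
      rw [e]
      nlinarith [sq_nonneg ((c : ℝ) * (x ^ 2 - y ^ 2) - (a - d) * x - b)]
    exact le_of_mul_le_mul_right h1 (by positivity)
  have hR : ((c : ℝ) * (x ^ 2 + y ^ 2) - (a - d) * x - b) ^ 2 + ((a : ℝ) + d) ^ 2 * y ^ 2 ≤
      5 * (n : ℝ) ^ 2 * y ^ 2 := by
    have e : ((c : ℝ) * (x ^ 2 + y ^ 2) - (a - d) * x - b) ^ 2 + ((a : ℝ) + d) ^ 2 * y ^ 2 =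
      (c * (x ^ 2 - y ^ 2) - (a - d) * x - b) ^ 2 + (y * (2 * c * x - (a - d))) ^ 2
       + 4 * (n : ℝ) ^ 2 * y ^ 2 := by
      rw [← hdr]; ring
    rw [e]
    have : s ^ 2 * (n : ℝ) ^ 2 * y ^ 2 ≤ 1 * (n : ℝ) ^ 2 * y ^ 2 := by
      gcongr
      nlinarith
    linarith
  refine ⟨hIm, hRe, ?_, ?_⟩
  · rw [le_div_iff₀ hy0]
    have h3 : |(c : ℝ) * (x ^ 2 + y ^ 2) - (a - d) * x - b| ≤ 3 * n * y := by
      apply abs_le_of_sq_le_sq _ (by positivity)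
      nlinarith [sq_nonneg (((a : ℝ) + d) * y), sq_nonneg ((n : ℝ) * y)]
    have h4 : s * n * y ≤ 1 * n * y := by gcongr
    rw [abs_le] at h3 hRe
    have h5 : |(c : ℝ) * y * (2 * y)| ≤ 2 * n * (2 * y) := by
      have e : (c : ℝ) * y * (2 * y) = ((c : ℝ) * (x ^ 2 + y ^ 2) - (a - d) * x - b) -
          ((c : ℝ) * (x ^ 2 - y ^ 2) - (a - d) * x - b) := by ring
      rw [e, abs_le]
      constructor <;> linarith [h3.1, h3.2, hRe.1, hRe.2]
    rw [abs_mul, abs_mul, abs_of_pos hy0, abs_of_pos (by positivity : 0 < 2 * y)] at h5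
    exact le_of_mul_le_mul_right h5 (by positivity)
  · have : ((a : ℝ) + d) ^ 2 * y ^ 2 ≤ 5 * (n : ℝ) ^ 2 * y ^ 2 := by
      linarith [sq_nonneg ((c : ℝ) * (x ^ 2 + y ^ 2) - (a - d) * x - b)]
    exact le_of_mul_le_mul_right this (by positivity)

theorem conj_entries (γ : Matrix (Fin 2) (Fin 2) ℤ) (g : Matrix.SpecialLinearGroup (Fin 2) ℤ) :
    (((g⁻¹ : Matrix.SpecialLinearGroup (Fin 2) ℤ) : Matrix (Fin 2) (Fin 2) ℤ) * γ *
      (g : Matrix (Fin 2) (Fin 2) ℤ)) 0 1 =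
      (γ 0 0 - γ 1 1) * (g 0 1 * g 1 1) + γ 0 1 * (g 1 1) ^ 2 - γ 1 0 * (g 0 1) ^ 2 ∧
    (((g⁻¹ : Matrix.SpecialLinearGroup (Fin 2) ℤ) : Matrix (Fin 2) (Fin 2) ℤ) * γ *
      (g : Matrix (Fin 2) (Fin 2) ℤ)) 1 0 =
      -((γ 0 0 - γ 1 1) * (g 0 0 * g 1 0)) - γ 0 1 * (g 1 0) ^ 2 + γ 1 0 * (g 0 0) ^ 2 := by
  rw [Matrix.SpecialLinearGroup.coe_inv, Matrix.adjugate_fin_two]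
  constructor <;> simp [Matrix.mul_apply, Matrix.vecMul, dotProduct, Fin.sum_univ_two] <;> ring

/-- The conditions satisfied by the counted matrices. -/
structure Good (z : ℂ) (g : Matrix.SpecialLinearGroup (Fin 2) ℤ) (s : ℝ)
    (L n : ℕ) (γ : Matrix (Fin 2) (Fin 2) ℤ) : Prop where
  det : γ 0 0 * γ 1 1 - γ 0 1 * γ 1 0 = (n : ℤ) ^ 2
  h01 : (L : ℤ) ∣ (γ 0 0 - γ 1 1) * (g 0 1 * g 1 1) + γ 0 1 * (g 1 1) ^ 2 - γ 1 0 * (g 0 1) ^ 2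
  h10 : (L : ℤ) ∣ -((γ 0 0 - γ 1 1) * (g 0 0 * g 1 0)) - γ 0 1 * (g 1 0) ^ 2 +
    γ 1 0 * (g 0 0) ^ 2
  hB : |2 * (γ 1 0 : ℝ) * z.re - ((γ 0 0 - γ 1 1 : ℤ) : ℝ)| ≤ s * n
  hb : |(γ 1 0 : ℝ) * (z.re ^ 2 - z.im ^ 2) - ((γ 0 0 - γ 1 1 : ℤ) : ℝ) * z.re - γ 0 1| ≤
    s * n * z.im
  hc : |(γ 1 0 : ℝ)| ≤ 2 * n / z.im
  ht : ((γ 0 0 + γ 1 1 : ℤ) : ℝ) ^ 2 ≤ 5 * (n : ℝ) ^ 2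
  hpar : (γ 0 0 + γ 1 1) ^ 2 = 4 * (n : ℤ) ^ 2 → γ 1 0 = 0

theorem mstar_finset (z : ℂ) (hy : 1 ≤ z.im) (g : Matrix.SpecialLinearGroup (Fin 2) ℤ) (δ : ℝ)
    (hδ : 0 < δ) (hδ1 : δ < 1) (L n : ℕ) (hn : 0 < n) :
    ∃ F : Finset (Matrix (Fin 2) (Fin 2) ℤ), Mstar z g δ L (n ^ 2) ≤ F.card ∧
      ∀ γ ∈ F, Good z g (Real.sqrt δ) L n γ := by
  classical
  unfold Mstar Mcount Mpar
  set S := {γ : Matrix (Fin 2) (Fin 2) ℤ | γ.det = ((n ^ 2 : ℕ) : ℤ) ∧ uInv (moeb γ z) z ≤ δ ∧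
    (L : ℤ) ∣ (((g⁻¹ : Matrix.SpecialLinearGroup (Fin 2) ℤ) : Matrix (Fin 2) (Fin 2) ℤ) * γ *
      (g : Matrix (Fin 2) (Fin 2) ℤ)) 0 1 ∧
    (L : ℤ) ∣ (((g⁻¹ : Matrix.SpecialLinearGroup (Fin 2) ℤ) : Matrix (Fin 2) (Fin 2) ℤ) * γ *
      (g : Matrix (Fin 2) (Fin 2) ℤ)) 1 0} with hS
  set S' := {γ : Matrix (Fin 2) (Fin 2) ℤ | γ.det = ((n ^ 2 : ℕ) : ℤ) ∧ uInv (moeb γ z) z ≤ δ ∧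
    ((L : ℤ) ∣ (((g⁻¹ : Matrix.SpecialLinearGroup (Fin 2) ℤ) : Matrix (Fin 2) (Fin 2) ℤ) * γ *
      (g : Matrix (Fin 2) (Fin 2) ℤ)) 0 1 ∧
    (L : ℤ) ∣ (((g⁻¹ : Matrix.SpecialLinearGroup (Fin 2) ℤ) : Matrix (Fin 2) (Fin 2) ℤ) * γ *
      (g : Matrix (Fin 2) (Fin 2) ℤ)) 1 0) ∧
    γ.trace ^ 2 = 4 * ((n ^ 2 : ℕ) : ℤ) ∧ γ 1 0 ≠ 0} with hS'
  by_cases hfin : S.Finite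
  · have hsub : S' ⊆ S := fun γ h => ⟨h.1, h.2.1, h.2.2.1.1, h.2.2.1.2⟩
    have hfin' : S'.Finite := hfin.subset hsub
    have hfd : (S \ S').Finite := hfin.subset Set.sdiff_subset
    refine ⟨hfd.toFinset, ?_, ?_⟩
    · rw [← Set.ncard_eq_toFinset_card _ hfd, Set.ncard_sdiff hsub hfin']
    · intro γ hγ
      rw [Set.Finite.mem_toFinset] at hγ
      obtain ⟨⟨h1, h2, h3, h4⟩, h5⟩ := hγ
      have hdet : γ 0 0 * γ 1 1 - γ 0 1 * γ 1 0 = ((n ^ 2 : ℕ) : ℤ) := by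
        rw [← h1, Matrix.det_fin_two]
      obtain ⟨g1, g2, g3, g4⟩ := geom _ _ _ _ n hn z hy δ hδ hδ1 hdet h2
      obtain ⟨c1, c2⟩ := conj_entries γ g
      refine ⟨by rw [hdet]; push_cast; rfl, by rw [← c1]; exact h3, by rw [← c2]; exact h4,
        g1, g2, g3, g4, ?_⟩
      intro htr
      by_contra hne
      apply h5
      refine ⟨h1, h2, ⟨h3, h4⟩, ?_, hne⟩
      rw [Matrix.trace_fin_two]
      push_cast
      exact htr
  · refine ⟨∅, ?_, by simp⟩
    rw [Set.Infinite.ncard hfin]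
    simp

theorem count_deg (z : ℂ) (hy : 1 ≤ z.im) (g : Matrix.SpecialLinearGroup (Fin 2) ℤ) (s : ℝ)
    (hs : 0 < s) (L n : ℕ) (hL : 0 < L) (F : Finset (Matrix (Fin 2) (Fin 2) ℤ))
    (hF : ∀ γ ∈ F, Good z g s L n γ ∧ (γ 0 0 + γ 1 1) ^ 2 = 4 * (n : ℤ) ^ 2) :
    (F.card : ℝ) ≤ 2 * (1 + 2 * (s * n * z.im) / L) := by
  classical
  have hy0 : 0 < z.im := by linarith
  have hLr : (0 : ℝ) < L := by exact_mod_cast hL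
  have hgd : g 0 0 * g 1 1 - g 0 1 * g 1 0 = 1 := by
    rw [← Matrix.det_fin_two]; exact g.det_coe
  have hfacts : ∀ γ ∈ F, γ 1 0 = 0 ∧ γ 1 1 = γ 0 0 ∧ (γ 0 0 = n ∨ γ 0 0 = -n) ∧
      (L : ℤ) ∣ γ 0 1 ∧ |(γ 0 1 : ℝ)| ≤ s * n * z.im := by
    intro γ hγ
    obtain ⟨hG, htr⟩ := hF γ hγ
    have hc0 := hG.hpar htr
    have hdet := hG.det
    rw [hc0] at hdet
    have hsq : (γ 0 0 - γ 1 1) ^ 2 = 0 := by linear_combination htr - 4 * hdet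
    have had : γ 0 0 - γ 1 1 = 0 := by simpa using hsq
    have hd : γ 1 1 = γ 0 0 := by linarith
    refine ⟨hc0, hd, ?_, ?_, ?_⟩
    · rw [hd] at hdet
      exact sq_eq_sq_iff_eq_or_eq_neg.mp (by linarith)
    · have d1 := hG.h01
      have d2 := hG.h10
      rw [hc0, had] at d1 d2
      have hcop2 : IsCoprime ((g 1 0) ^ 2) ((g 1 1) ^ 2) :=
        IsCoprime.pow ⟨-(g 0 1), g 0 0, by linear_combination hgd⟩
      obtain ⟨u, w, huw⟩ := hcop2
      have := dvd_sub (Dvd.dvd.mul_left d1 w) (Dvd.dvd.mul_left d2 u)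
      exact this.trans (dvd_of_eq (by linear_combination (γ 0 1) * huw))
    · have := hG.hb
      rw [hc0, had] at this
      simpa using this
  have h1 : (F.card : ℝ) ≤ (1 + 2 * (s * n * z.im) / L) * (F.image (fun γ => γ 0 0)).card := by
    apply card_fiber
    intro a _
    have hinj : (F.filter (fun γ => γ 0 0 = a)).card =
        ((F.filter (fun γ => γ 0 0 = a)).image (fun γ => γ 0 1)).card := by
      symm
      apply Finset.card_image_of_injOn
      intro γ hγ γ' hγ' h
      simp only [Finset.coe_filter, Set.mem_ofPred_eq] at hγ hγ' h
      obtain ⟨p1, p2, -⟩ := hfacts γ hγ.1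
      obtain ⟨q1, q2, -⟩ := hfacts γ' hγ'.1
      ext i j
      fin_cases i <;> fin_cases j <;> simp [p1, p2, q1, q2, h, hγ.2, hγ'.2]
    rw [hinj]
    apply count_interval _ L hL 0 _ (by positivity)
    · intro x hx y hy
      simp only [Finset.mem_image, Finset.mem_filter] at hx hy
      obtain ⟨γ, ⟨hγ, -⟩, rfl⟩ := hx
      obtain ⟨γ', ⟨hγ', -⟩, rfl⟩ := hy
      exact dvd_sub (hfacts γ hγ).2.2.2.1 (hfacts γ' hγ').2.2.2.1
    · intro x hx
      simp only [Finset.mem_image, Finset.mem_filter] at hx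
      obtain ⟨γ, ⟨hγ, -⟩, rfl⟩ := hx
      simpa using (hfacts γ hγ).2.2.2.2
  have h2 : (F.image (fun γ => γ 0 0)).card ≤ 2 := by
    refine (Finset.card_le_card (t := {(n : ℤ), -(n : ℤ)}) ?_).trans Finset.card_le_two
    intro a ha
    simp only [Finset.mem_image] at ha
    obtain ⟨γ, hγ, rfl⟩ := ha
    simpa using (hfacts γ hγ).2.2.1
  have h2' : ((F.image (fun γ => γ 0 0)).card : ℝ) ≤ 2 := by exact_mod_cast h2
  calc (F.card : ℝ) ≤ (1 + 2 * (s * n * z.im) / L) * (F.image (fun γ => γ 0 0)).card := h1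
    _ ≤ (1 + 2 * (s * n * z.im) / L) * 2 := by gcongr
    _ = _ := by ring

theorem count_nondeg (η C : ℝ) (hη : 0 < η) (hC : 1 ≤ C)
    (hdiv : ∀ n : ℕ, n ≠ 0 → (n.divisors.card : ℝ) ≤ C * (n : ℝ) ^ η)
    (z : ℂ) (hy : 1 ≤ z.im) (g : Matrix.SpecialLinearGroup (Fin 2) ℤ) (s : ℝ)
    (hs : 0 < s) (hs1 : s < 1) (L : ℕ) (hL : 0 < L) (N : ℝ) (hN : 1 ≤ N)
    (T : Finset ((_ : ℕ × ℕ) × Matrix (Fin 2) (Fin 2) ℤ))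
    (hT : ∀ τ ∈ T, 0 < τ.1.1 * τ.1.2 ∧ ((τ.1.1 * τ.1.2 : ℕ) : ℝ) ≤ N ∧
      Good z g s L (τ.1.1 * τ.1.2) τ.2 ∧
      (τ.2 0 0 + τ.2 1 1) ^ 2 ≠ 4 * ((τ.1.1 * τ.1.2 : ℕ) : ℤ) ^ 2) :
    (T.card : ℝ) ≤ (C * N ^ η * (2 * (C * (4 * N ^ 2) ^ η))) *
      (60 * N * (1 + s * N * z.im / L + s ^ 2 * N ^ 2 / L)) := by
  classical
  have hy0 : 0 < z.im := by linarith
  have hgd : g 0 0 * g 1 1 - g 0 1 * g 1 0 = 1 := by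
    rw [← Matrix.det_fin_two]; exact g.det_coe
  set f : ((_ : ℕ × ℕ) × Matrix (Fin 2) (Fin 2) ℤ) → ℤ × ℤ × ℤ :=
    fun τ => (τ.2 1 0, τ.2 0 0 - τ.2 1 1, τ.2 0 1) with hf
  have hA : (T.card : ℝ) ≤ (C * N ^ η * (2 * (C * (4 * N ^ 2) ^ η))) * (T.image f).card := by
    apply card_fiber
    intro t ht
    set U := T.filter (fun τ => f τ = t) with hU
    set D : ℤ := t.2.1 ^ 2 + 4 * t.2.2 * t.1 with hD
    set k : ((_ : ℕ × ℕ) × Matrix (Fin 2) (Fin 2) ℤ) → ℤ :=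
      fun τ => τ.2 0 0 + τ.2 1 1 - 2 * ((τ.1.1 * τ.1.2 : ℕ) : ℤ) with hk
    have hprod : ∀ τ ∈ U, k τ * (k τ + 4 * ((τ.1.1 * τ.1.2 : ℕ) : ℤ)) = D ∧ D ≠ 0 ∧
        (D.natAbs : ℝ) ≤ 4 * N ^ 2 := by
      intro τ hτ
      rw [hU, Finset.mem_filter] at hτ
      obtain ⟨hτT, rfl⟩ := hτ
      obtain ⟨p1, p2, p3, p4⟩ := hT τ hτT
      have hDe : D = (τ.2 0 0 + τ.2 1 1) ^ 2 - 4 * ((τ.1.1 * τ.1.2 : ℕ) : ℤ) ^ 2 := by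
        rw [hD, hf]
        linear_combination (-4) * p3.det
      refine ⟨by rw [hDe, hk]; ring, by rw [hDe]; exact sub_ne_zero.mpr p4, ?_⟩
      have hDr : (D : ℝ) = ((τ.2 0 0 + τ.2 1 1 : ℤ) : ℝ) ^ 2 -
          4 * ((τ.1.1 * τ.1.2 : ℕ) : ℝ) ^ 2 := by
        rw [hDe]; push_cast; ring
      have h5 := p3.ht
      have hcast : (D.natAbs : ℝ) = |(D : ℝ)| := by
        rw [← Int.cast_abs, Int.abs_eq_natAbs]; simp
      have hn2 : ((τ.1.1 * τ.1.2 : ℕ) : ℝ) ^ 2 ≤ N ^ 2 := by gcongr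
      rw [hcast, hDr, abs_le]
      constructor
      · linarith [sq_nonneg (((τ.2 0 0 + τ.2 1 1 : ℤ) : ℝ))]
      · linarith [sq_nonneg N]
    have hB : (U.card : ℝ) ≤ (C * N ^ η) * (U.image k).card := by
      apply card_fiber
      intro k0 hk0
      rw [Finset.mem_image] at hk0
      obtain ⟨τ0, hτ0, hkτ0⟩ := hk0
      obtain ⟨e0, hD0, -⟩ := hprod τ0 hτ0
      rw [hkτ0] at e0
      have hk00 : k0 ≠ 0 := by
        rintro rfl
        apply hD0; rw [← e0]; simp
      set n0 := τ0.1.1 * τ0.1.2 with hn0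
      have hn0T := hT τ0 (Finset.mem_filter.mp hτ0).1
      have hsame : ∀ τ ∈ U.filter (fun τ => k τ = k0), τ.1.1 * τ.1.2 = n0 := by
        intro τ hτ
        rw [Finset.mem_filter] at hτ
        obtain ⟨e1, -, -⟩ := hprod τ hτ.1
        rw [hτ.2] at e1
        have := mul_left_cancel₀ hk00 (e1.trans e0.symm)
        have h4 : ((τ.1.1 * τ.1.2 : ℕ) : ℤ) = (n0 : ℤ) := by linarith
        exact_mod_cast h4
      have hle : (U.filter (fun τ => k τ = k0)).card ≤ n0.divisors.card := by
        apply Finset.card_le_card_of_injOn (fun τ => τ.1.1)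
        · intro τ hτ
          have h := hsame τ hτ
          have : τ.1.1 ∈ n0.divisors := Nat.mem_divisors.mpr ⟨Dvd.intro _ h, hn0T.1.ne'⟩
          exact this
        · intro τ hτ τ' hτ' h11
          have hm := hsame τ hτ
          have hm' := hsame τ' hτ'
          have h11 : τ.1.1 = τ'.1.1 := h11
          have hpos : 0 < τ.1.1 := Nat.pos_of_ne_zero (by
            intro h0
            rw [h0, zero_mul] at hm
            exact hn0T.1.ne hm)
          have h12 : τ.1.2 = τ'.1.2 := by
            rw [← hm', ← h11] at hm
            exact Nat.eq_of_mul_eq_mul_left hpos hm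
          have hτ1 := Finset.mem_filter.mp (Finset.mem_coe.mp hτ)
          have hτ1' := Finset.mem_filter.mp (Finset.mem_coe.mp hτ')
          have hkk : k τ = k τ' := hτ1.2.trans hτ1'.2.symm
          have hff : f τ = f τ' :=
            (Finset.mem_filter.mp hτ1.1).2.trans (Finset.mem_filter.mp hτ1'.1).2.symm
          simp only [hf, Prod.mk.injEq] at hff
          simp only [hk, hm, hm'] at hkk
          obtain ⟨f1, f2, f3⟩ := hff
          have ha : τ.2 0 0 = τ'.2 0 0 := by linarith
          have hd : τ.2 1 1 = τ'.2 1 1 := by linarith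
          obtain ⟨q, γ⟩ := τ
          obtain ⟨q', γ'⟩ := τ'
          have hq : q = q' := Prod.ext h11 h12
          have hγ : γ = γ' := by
            ext i j
            fin_cases i <;> fin_cases j
            · exact ha
            · exact f3
            · exact f1
            · exact hd
          rw [hq, hγ]
      calc ((U.filter (fun τ => k τ = k0)).card : ℝ) ≤ n0.divisors.card := by exact_mod_cast hle
        _ ≤ C * (n0 : ℝ) ^ η := hdiv n0 hn0T.1.ne'
        _ ≤ C * N ^ η := by
          gcongr
          exact hn0T.2.1
    have hCc : ((U.image k).card : ℝ) ≤ 2 * (C * (4 * N ^ 2) ^ η) := by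
      rcases U.eq_empty_or_nonempty with h | ⟨τ0, hτ0⟩
      · rw [h]; simp; positivity
      obtain ⟨-, hD0, hDN⟩ := hprod τ0 hτ0
      have hD0' : D.natAbs ≠ 0 := by simpa using hD0
      have hsub : U.image k ⊆ (D.natAbs.divisors.image (fun m : ℕ => (m : ℤ))) ∪
          (D.natAbs.divisors.image (fun m : ℕ => -(m : ℤ))) := by
        intro k0 hk0
        rw [Finset.mem_image] at hk0
        obtain ⟨τ, hτ, rfl⟩ := hk0
        have hd : (k τ).natAbs ∈ D.natAbs.divisors := by
          rw [Nat.mem_divisors]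
          exact ⟨Int.natAbs_dvd_natAbs.mpr (Dvd.intro _ (hprod τ hτ).1), hD0'⟩
        rw [Finset.mem_union, Finset.mem_image, Finset.mem_image]
        rcases Int.natAbs_eq (k τ) with h | h
        · exact Or.inl ⟨_, hd, h.symm⟩
        · exact Or.inr ⟨_, hd, h.symm⟩
      have hle : (U.image k).card ≤ D.natAbs.divisors.card + D.natAbs.divisors.card :=
        (Finset.card_le_card hsub).trans ((Finset.card_union_le _ _).trans
          (add_le_add Finset.card_image_le Finset.card_image_le))
      have hle' : ((U.image k).card : ℝ) ≤ D.natAbs.divisors.card + D.natAbs.divisors.card := by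
        exact_mod_cast hle
      have h3 : (D.natAbs.divisors.card : ℝ) ≤ C * (4 * N ^ 2) ^ η := by
        refine (hdiv _ hD0').trans ?_
        gcongr
      linarith
    refine hB.trans ?_
    gcongr
  refine hA.trans ?_
  gcongr
  have hmem : ∀ t ∈ T.image f, ∃ τ ∈ T, f τ = t := by
    intro t ht
    simpa [Finset.mem_image] using ht
  apply count_triples (T.image f) L hL (g 0 0) (g 0 1) (g 1 0) (g 1 1) hgd z.re z.im N s hy hN hs hs1
  · intro t ht
    obtain ⟨τ, hτ, rfl⟩ := hmem t ht
    exact (hT τ hτ).2.2.1.h01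
  · intro t ht
    obtain ⟨τ, hτ, rfl⟩ := hmem t ht
    exact (hT τ hτ).2.2.1.h10
  · intro t ht
    obtain ⟨τ, hτ, rfl⟩ := hmem t ht
    refine (hT τ hτ).2.2.1.hc.trans ?_
    have := (hT τ hτ).2.1
    gcongr
  · intro t ht
    obtain ⟨τ, hτ, rfl⟩ := hmem t ht
    refine (hT τ hτ).2.2.1.hB.trans ?_
    have := (hT τ hτ).2.1
    gcongr
  · intro t ht
    obtain ⟨τ, hτ, rfl⟩ := hmem t ht
    refine (hT τ hτ).2.2.1.hb.trans ?_
    have := (hT τ hτ).2.1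
    gcongr

/-- Counting bound for the non-parabolic part of the square-determinant sums. -/
theorem stmt_16 :
    ∀ ε : ℝ, 0 < ε →
    ∃ C : ℝ, 0 < C ∧
      ∀ (p : ℕ), p.Prime →
      ∀ l : ℕ, ∀ z : ℂ, 1 ≤ z.im →
      ∀ g : Matrix.SpecialLinearGroup (Fin 2) ℤ,
      ∀ δ : ℝ, 0 < δ → δ < 1 →
      ∀ X : ℝ, 1 ≤ X →
      ∀ Pr : Finset ℕ, (∀ q ∈ Pr, Nat.Prime q ∧ X ≤ (q : ℝ) ∧ (q : ℝ) ≤ 2 * X) → p ∉ Pr →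
        (∑ q ∈ Pr ×ˢ Pr, (Mstar z g δ (p ^ l) ((q.1 * q.2) ^ 2) : ℝ)) ≤
          C * X ^ ((2 : ℝ) + ε) *
            (1 + Real.sqrt δ * X ^ 2 * z.im / (p : ℝ) ^ l + δ * X ^ 4 / (p : ℝ) ^ l) := by
  classical
  intro ε hε
  obtain ⟨C, hC1, hdiv⟩ := divisor_bound (ε / 6) (by positivity)
  refine ⟨64 + 2 * C ^ 2 * 256 ^ (ε / 6) * 3840, by positivity, ?_⟩
  intro p hp l z hy g δ hδ hδ1 X hX Pr hPr _
  have hy0 : 0 < z.im := by linarith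
  have hX0 : 0 < X := by linarith
  have hLpos : 0 < p ^ l := pow_pos hp.pos l
  have hLr : (0 : ℝ) < (p : ℝ) ^ l := by exact_mod_cast hLpos
  have hs0 : 0 < Real.sqrt δ := Real.sqrt_pos.mpr hδ
  have hs1 : Real.sqrt δ < 1 := by
    rw [Real.sqrt_lt' one_pos]; simpa using hδ1
  have hs2 : Real.sqrt δ ^ 2 = δ := Real.sq_sqrt hδ.le
  have hpos : ∀ q ∈ Pr ×ˢ Pr, 0 < q.1 * q.2 ∧ ((q.1 * q.2 : ℕ) : ℝ) ≤ 4 * X ^ 2 := by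
    intro q hq
    rw [Finset.mem_product] at hq
    obtain ⟨a1, -, a3⟩ := hPr _ hq.1
    obtain ⟨b1, -, b3⟩ := hPr _ hq.2
    refine ⟨Nat.mul_pos a1.pos b1.pos, ?_⟩
    push_cast
    calc (q.1 : ℝ) * q.2 ≤ (2 * X) * (2 * X) := by gcongr
      _ = _ := by ring
  have hex : ∀ q : ℕ × ℕ, ∃ F : Finset (Matrix (Fin 2) (Fin 2) ℤ), q ∈ Pr ×ˢ Pr →
      (Mstar z g δ (p ^ l) ((q.1 * q.2) ^ 2) ≤ F.card ∧
      ∀ γ ∈ F, Good z g (Real.sqrt δ) (p ^ l) (q.1 * q.2) γ) := by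
    intro q
    by_cases hq : q ∈ Pr ×ˢ Pr
    · obtain ⟨F, hF⟩ := mstar_finset z hy g δ hδ hδ1 (p ^ l) (q.1 * q.2) (hpos q hq).1
      exact ⟨F, fun _ => hF⟩
    · exact ⟨∅, fun h => absurd h hq⟩
  choose F hF using hex
  set s := Real.sqrt δ with hs
  set Fd : ℕ × ℕ → Finset (Matrix (Fin 2) (Fin 2) ℤ) := fun q =>
    (F q).filter (fun γ => (γ 0 0 + γ 1 1) ^ 2 = 4 * ((q.1 * q.2 : ℕ) : ℤ) ^ 2) with hFd
  set Fn : ℕ × ℕ → Finset (Matrix (Fin 2) (Fin 2) ℤ) := fun q =>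
    (F q).filter (fun γ => ¬ (γ 0 0 + γ 1 1) ^ 2 = 4 * ((q.1 * q.2 : ℕ) : ℤ) ^ 2) with hFn
  have hsplit : (∑ q ∈ Pr ×ˢ Pr, (Mstar z g δ (p ^ l) ((q.1 * q.2) ^ 2) : ℝ)) ≤
      (∑ q ∈ Pr ×ˢ Pr, ((Fd q).card : ℝ)) + ∑ q ∈ Pr ×ˢ Pr, ((Fn q).card : ℝ) := by
    rw [← Finset.sum_add_distrib]
    apply Finset.sum_le_sum
    intro q hq
    have h1 := (hF q hq).1
    have h2 : (Fd q).card + (Fn q).card = (F q).card :=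
      Finset.card_filter_add_card_filter_not _
    rw [← h2] at h1
    exact_mod_cast h1
  have hPrcard : (Pr.card : ℝ) ≤ 2 * X := by
    have h1 : Pr.card ≤ (Finset.Icc 1 ⌊2 * X⌋₊).card := by
      apply Finset.card_le_card
      intro q hq
      obtain ⟨a1, -, a3⟩ := hPr q hq
      rw [Finset.mem_Icc]
      exact ⟨a1.pos, Nat.le_floor a3⟩
    rw [Nat.card_Icc, Nat.add_sub_cancel] at h1
    exact (Nat.cast_le.mpr h1).trans (Nat.floor_le (by positivity))
  set R : ℝ := 1 + s * X ^ 2 * z.im / (p : ℝ) ^ l + δ * X ^ 4 / (p : ℝ) ^ l with hR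
  have ht1 : 0 ≤ s * X ^ 2 * z.im / (p : ℝ) ^ l := by positivity
  have ht2 : 0 ≤ δ * X ^ 4 / (p : ℝ) ^ l := by positivity
  have hR0 : 0 ≤ R := by positivity
  have hdeg : (∑ q ∈ Pr ×ˢ Pr, ((Fd q).card : ℝ)) ≤ 64 * X ^ 2 * R := by
    have hb : ∀ q ∈ Pr ×ˢ Pr, ((Fd q).card : ℝ) ≤ 16 * R := by
      intro q hq
      have h := count_deg z hy g s hs0 (p ^ l) (q.1 * q.2) hLpos (Fd q) (by
        intro γ hγ
        rw [hFd, Finset.mem_filter] at hγ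
        exact ⟨(hF q hq).2 γ hγ.1, hγ.2⟩)
      refine h.trans ?_
      have h2 : 2 * (s * ((q.1 * q.2 : ℕ) : ℝ) * z.im) / ((p ^ l : ℕ) : ℝ) ≤
          2 * (s * (4 * X ^ 2) * z.im) / (p : ℝ) ^ l := by
        rw [Nat.cast_pow]
        have := (hpos q hq).2
        gcongr
      have h3 : 2 * (s * (4 * X ^ 2) * z.im) / (p : ℝ) ^ l =
          8 * (s * X ^ 2 * z.im / (p : ℝ) ^ l) := by ring
      rw [hR]
      linarith
    refine (Finset.sum_le_card_nsmul _ _ _ hb).trans ?_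
    rw [nsmul_eq_mul, Finset.card_product]
    push_cast
    calc (Pr.card : ℝ) * Pr.card * (16 * R) ≤ (2 * X) * (2 * X) * (16 * R) := by gcongr
      _ = _ := by ring
  have hnon : (∑ q ∈ Pr ×ˢ Pr, ((Fn q).card : ℝ)) ≤
      2 * C ^ 2 * 256 ^ (ε / 6) * 3840 * (X ^ ε * X ^ 2) * R := by
    have hcard : (∑ q ∈ Pr ×ˢ Pr, ((Fn q).card : ℝ)) = (((Pr ×ˢ Pr).sigma Fn).card : ℝ) := by
      rw [Finset.card_sigma]; push_cast; rfl
    rw [hcard]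
    have h := count_nondeg (ε / 6) C (by positivity) hC1 hdiv z hy g s hs0 hs1 (p ^ l) hLpos
      (4 * X ^ 2) (by nlinarith) ((Pr ×ˢ Pr).sigma Fn) (by
        intro τ hτ
        rw [Finset.mem_sigma] at hτ
        obtain ⟨h1, h2⟩ := hτ
        rw [hFn, Finset.mem_filter] at h2
        exact ⟨(hpos _ h1).1, (hpos _ h1).2, (hF _ h1).2 _ h2.1, h2.2⟩)
    refine h.trans ?_
    have e1 : (4 * X ^ 2) ^ (ε / 6) * (4 * (4 * X ^ 2) ^ 2) ^ (ε / 6) =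
        256 ^ (ε / 6) * X ^ ε := by
      rw [← Real.mul_rpow (by positivity) (by positivity)]
      have : 4 * X ^ 2 * (4 * (4 * X ^ 2) ^ 2) = 256 * X ^ 6 := by ring
      rw [this, Real.mul_rpow (by positivity) (by positivity)]
      congr 1
      rw [← Real.rpow_natCast, ← Real.rpow_mul hX0.le]
      congr 1
      push_cast
      ring
    have e2 : C * (4 * X ^ 2) ^ (ε / 6) * (2 * (C * (4 * (4 * X ^ 2) ^ 2) ^ (ε / 6))) =
        2 * C ^ 2 * (256 ^ (ε / 6) * X ^ ε) := by
      rw [← e1]; ring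
    rw [e2]
    have e3 : 60 * (4 * X ^ 2) * (1 + s * (4 * X ^ 2) * z.im / ((p ^ l : ℕ) : ℝ) +
        s ^ 2 * (4 * X ^ 2) ^ 2 / ((p ^ l : ℕ) : ℝ)) ≤ 3840 * X ^ 2 * R := by
      rw [hs2]
      push_cast
      have : (1 + s * (4 * X ^ 2) * z.im / (p : ℝ) ^ l + δ * (4 * X ^ 2) ^ 2 / (p : ℝ) ^ l) =
        1 + 4 * (s * X ^ 2 * z.im / (p : ℝ) ^ l) + 16 * (δ * X ^ 4 / (p : ℝ) ^ l) := by ring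
      rw [this]
      calc _ ≤ 60 * (4 * X ^ 2) * (16 * R) := by
            gcongr
            rw [hR]; linarith
        _ = _ := by ring
    calc _ ≤ 2 * C ^ 2 * (256 ^ (ε / 6) * X ^ ε) * (3840 * X ^ 2 * R) := by gcongr
      _ = _ := by ring
  have hXe : X ^ ((2 : ℝ) + ε) = X ^ ε * X ^ 2 := by
    rw [Real.rpow_add hX0, mul_comm]
    congr 1
    exact Real.rpow_natCast X 2
  have hX1 : X ^ 2 ≤ X ^ ε * X ^ 2 :=
    le_mul_of_one_le_left (by positivity) (Real.one_le_rpow hX hε.le)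
  rw [hXe]
  calc _ ≤ 64 * X ^ 2 * R + 2 * C ^ 2 * 256 ^ (ε / 6) * 3840 * (X ^ ε * X ^ 2) * R :=
        hsplit.trans (add_le_add hdeg hnon)
    _ ≤ 64 * (X ^ ε * X ^ 2) * R + 2 * C ^ 2 * 256 ^ (ε / 6) * 3840 * (X ^ ε * X ^ 2) * R := by
        gcongr
    _ = _ := by ring
end

section
/- For every ε > 0 there exists a constant C = C(ε) > 0 such that for every prime p, every integer l ≥ 0, every z ∈ ℍ with Im z ≥ 1, every g ∈ SL₂(ℤ), every δ' with 0 < δ' < 1, every real X ≥ 1, and every finite set 𝒫 of primes with 𝒫 ⊆ [X, 2X] and p ∉ 𝒫, one has Σ_{(l₁,l₂) ∈ 𝒫×𝒫} M_par(z, g; δ', p^l, (l₁·l₂)²) ≤ C·( X^{2+ε} + X^{4+ε}·(Im z)·√δ'/p^l ). -/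
/-- Parametrization of integral nilpotent matrices with nonzero lower-left entry. -/
lemma nilp_param (A B C : ℤ) (h0 : A ^ 2 + B * C = 0) (hC : C ≠ 0) :
    ∃ h r s : ℤ, 1 ≤ s ∧ IsCoprime r s ∧ A = h * r * s ∧ C = h * s ^ 2 ∧ B = -(h * r ^ 2) := by
  obtain ⟨g, r, s, hcop, hA, hC'⟩ : ∃ g r s : ℤ, IsCoprime r s ∧ A = g * r ∧ C = g * s := by
    have hg : 0 < Int.gcd A C := Int.gcd_pos_of_ne_zero_right _ hC
    obtain ⟨r, s, hrs, hA, hC'⟩ := Int.exists_gcd_one hg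
    exact ⟨Int.gcd A C, r, s, Int.isCoprime_iff_gcd_eq_one.2 hrs, by linarith, by linarith⟩
  have hg0 : g ≠ 0 := by rintro rfl; simp at hC'; exact hC hC'
  have hs0 : s ≠ 0 := by rintro rfl; simp at hC'; exact hC hC'
  have h1 : g * r ^ 2 = -B * s := by
    have : g * (g * r ^ 2 + B * s) = 0 := by
      rw [hA, hC'] at h0; linear_combination h0
    rcases mul_eq_zero.1 this with h | h
    · exact absurd h hg0
    · linarith
  have hsg : s ∣ g := by
    have : s ∣ g * r ^ 2 := ⟨-B, by rw [h1]; ring⟩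
    exact (hcop.symm.pow_right).dvd_of_dvd_mul_right this
  obtain ⟨h, rfl⟩ := hsg
  have hB : B = -(h * r ^ 2) := by
    have : s * (B + h * r ^ 2) = 0 := by linear_combination h1
    rcases mul_eq_zero.1 this with h | h
    · exact absurd h hs0
    · linarith
  rcases lt_or_gt_of_ne hs0 with hs | hs
  · refine ⟨h, -r, -s, by omega, hcop.neg_neg, ?_, ?_, ?_⟩
    · rw [hA]; ring
    · rw [hC']; ring
    · rw [hB]; ring
  · exact ⟨h, r, s, by omega, hcop, by rw [hA]; ring, by rw [hC']; ring, hB⟩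

/-- The matrix attached to the parameters. -/
def parMat (e h r s : ℤ) : Matrix (Fin 2) (Fin 2) ℤ :=
  !![e + h * r * s, -(h * r ^ 2); h * s ^ 2, e - h * r * s]

lemma par_exists (γ : Matrix (Fin 2) (Fin 2) ℤ) (n : ℤ) (hd : γ.det = n ^ 2)
    (ht : γ.trace ^ 2 = 4 * n ^ 2) (hc : γ 1 0 ≠ 0) :
    ∃ e h r s : ℤ, (e = n ∨ e = -n) ∧ 1 ≤ s ∧ IsCoprime r s ∧ h ≠ 0 ∧ γ = parMat e h r s := by
  rw [Matrix.det_fin_two] at hd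
  rw [Matrix.trace_fin_two] at ht
  have : ∃ e, (e = n ∨ e = -n) ∧ γ 0 0 + γ 1 1 = 2 * e := by
    have : (γ 0 0 + γ 1 1) ^ 2 = (2 * n) ^ 2 := by rw [ht]; ring
    rcases sq_eq_sq_iff_eq_or_eq_neg.1 this with h | h
    · exact ⟨n, Or.inl rfl, h⟩
    · exact ⟨-n, Or.inr rfl, by rw [h]; ring⟩
  obtain ⟨e, he, htr⟩ := this
  have he2 : e ^ 2 = n ^ 2 := by rcases he with rfl | rfl <;> ring
  obtain ⟨h, r, s, hs, hcop, hA, hC, hB⟩ := nilp_param (γ 0 0 - e) (γ 0 1) (γ 1 0) (by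
    linear_combination he2 - hd + (γ 0 0) * htr) hc
  refine ⟨e, h, r, s, he, hs, hcop, ?_, ?_⟩
  · rintro rfl; simp at hC; exact hc hC
  · ext i j
    fin_cases i <;> fin_cases j <;> simp [parMat] <;> linarith

lemma par_dvd (g : Matrix.SpecialLinearGroup (Fin 2) ℤ) (e h r s L : ℤ) (hcop : IsCoprime r s)
    (h1 : L ∣ (((g⁻¹ : Matrix.SpecialLinearGroup (Fin 2) ℤ) : Matrix (Fin 2) (Fin 2) ℤ) *
      parMat e h r s * (g : Matrix (Fin 2) (Fin 2) ℤ)) 0 1)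
    (h2 : L ∣ (((g⁻¹ : Matrix.SpecialLinearGroup (Fin 2) ℤ) : Matrix (Fin 2) (Fin 2) ℤ) *
      parMat e h r s * (g : Matrix (Fin 2) (Fin 2) ℤ)) 1 0) : L ∣ h := by
  have hdet := g.det_coe
  rw [Matrix.det_fin_two] at hdet
  rw [Matrix.SpecialLinearGroup.coe_inv, Matrix.adjugate_fin_two] at h1 h2
  simp [Matrix.mul_apply, Fin.sum_univ_two, parMat] at h1 h2
  set a := (g : Matrix (Fin 2) (Fin 2) ℤ) 0 0
  set b := (g : Matrix (Fin 2) (Fin 2) ℤ) 0 1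
  set c := (g : Matrix (Fin 2) (Fin 2) ℤ) 1 0
  set d := (g : Matrix (Fin 2) (Fin 2) ℤ) 1 1
  have hcop' : IsCoprime (d * r - b * s) (a * s - c * r) := by
    obtain ⟨x, y, hxy⟩ := hcop
    refine ⟨x * a + y * c, x * b + y * d, ?_⟩
    linear_combination (x * r + y * s) * hdet + hxy
  have k1 : L ∣ h * (d * r - b * s) ^ 2 := by
    obtain ⟨w, hw⟩ := h1
    exact ⟨-w, by linear_combination -hw⟩
  have k2 : L ∣ h * (a * s - c * r) ^ 2 := by
    convert h2 using 1; ring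
  obtain ⟨x, y, hxy⟩ := hcop'.pow (m := 2) (n := 2)
  have : h = x * (h * (d * r - b * s) ^ 2) + y * (h * (a * s - c * r) ^ 2) := by
    linear_combination -h * hxy
  rw [this]
  exact (k1.mul_left x).add (k2.mul_left y)

lemma par_u (z : ℂ) (hz : 1 ≤ z.im) (e h r s : ℤ) (n : ℝ) (hn : 0 < n) (he : (e : ℝ) ^ 2 = n ^ 2)
    (hs : 1 ≤ s) (hh : h ≠ 0) (δ : ℝ) (hδ : 0 < δ) (hu : uInv (moeb (parMat e h r s) z) z ≤ δ) :
    |(h : ℝ)| * ((s * z.re - r) ^ 2 + (s * z.im) ^ 2) ≤ n * z.im * Real.sqrt δ := by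
  set D : ℂ := (h : ℂ) * s ^ 2 * z + (e - h * r * s) with hD
  have hyp : 0 < z.im := by linarith
  have hDim : D.im = h * s ^ 2 * z.im := by
    simp [hD, pow_two]
  have hDre : D.re = h * s ^ 2 * z.re + (e - h * r * s) := by
    simp [hD, pow_two]
  have hsR : (1 : ℝ) ≤ s := by exact_mod_cast hs
  have hhR : (h : ℝ) ≠ 0 := by exact_mod_cast hh
  have hD0 : D ≠ 0 := by
    intro h0
    rw [h0] at hDim
    simp only [Complex.zero_im] at hDim
    have : (h : ℝ) * s ^ 2 * z.im ≠ 0 := by positivity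
    exact this hDim.symm
  have hN : 0 < Complex.normSq D := Complex.normSq_pos.2 hD0
  have hm : moeb (parMat e h r s) z = ((e + h * r * s) * z + -(h * r ^ 2)) / D := by
    simp [moeb, parMat, hD]
  have hsub : moeb (parMat e h r s) z - z = -(h * (s * z - r) ^ 2) / D := by
    rw [hm]; field_simp; rw [hD]; ring
  have him : (moeb (parMat e h r s) z).im = n ^ 2 * z.im / Complex.normSq D := by
    rw [hm, Complex.div_im]
    field_simp
    rw [hDim, hDre, ← he]
    simp [pow_two]
    ring
  set Q : ℝ := (s * z.re - r) ^ 2 + (s * z.im) ^ 2 with hQ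
  have hQ' : Complex.normSq (s * z - r) = Q := by
    rw [Complex.normSq_apply, hQ]; simp; ring
  have hu' : uInv (moeb (parMat e h r s) z) z = (|(h : ℝ)| * Q) ^ 2 / (n * z.im) ^ 2 := by
    unfold uInv
    rw [hsub, him, ← Complex.normSq_eq_norm_sq, map_div₀, Complex.normSq_neg, map_mul, map_pow,
      hQ', Complex.normSq_intCast, mul_pow, sq_abs]
    field_simp
  rw [hu', div_le_iff₀ (by positivity)] at hu
  refine (sq_le_sq₀ (by positivity) (by positivity)).1 ?_
  rw [mul_pow (n * z.im), Real.sq_sqrt hδ.le]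
  linarith

open Finset in
lemma mpar_bound (z : ℂ) (hz : 1 ≤ z.im) (g : Matrix.SpecialLinearGroup (Fin 2) ℤ)
    (δ : ℝ) (hδ : 0 < δ) (hδ1 : δ < 1) (L n : ℕ) (hL : 0 < L) (hn : 0 < n) :
    (Mpar z g δ L (n ^ 2) : ℝ) ≤ 12 * (n * Real.sqrt δ / L) * (1 + Real.log n) := by
  have hy : 0 < z.im := by linarith
  have hLR : (1 : ℝ) ≤ L := by exact_mod_cast hL
  have hnR : (1 : ℝ) ≤ n := by exact_mod_cast hn
  set T : ℝ := n * z.im * Real.sqrt δ / L with hT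
  have hsδ : 0 < Real.sqrt δ := Real.sqrt_pos.2 hδ
  have hsδ1 : Real.sqrt δ ≤ 1 := Real.sqrt_le_one.2 hδ1.le
  have hT0 : 0 < T := by positivity
  let R : ℕ → ℝ := fun j => Real.sqrt (T / j)
  let F : Finset (Matrix (Fin 2) (Fin 2) ℤ) :=
    (Icc 1 n).biUnion fun j => (Icc 1 ⌊R j / z.im⌋₊).biUnion fun s =>
      (((({1, -1} : Finset ℤ) ×ˢ ({1, -1} : Finset ℤ)) ×ˢ
        Icc ⌈(s : ℝ) * z.re - R j⌉ ⌊(s : ℝ) * z.re + R j⌋).image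
          fun q => parMat (q.1.1 * n) (q.1.2 * (L * j)) q.2 s)
  have hsub : {γ : Matrix (Fin 2) (Fin 2) ℤ | γ.det = ((n ^ 2 : ℕ) : ℤ) ∧ uInv (moeb γ z) z ≤ δ ∧
    ((L : ℤ) ∣ (((g⁻¹ : Matrix.SpecialLinearGroup (Fin 2) ℤ) : Matrix (Fin 2) (Fin 2) ℤ) * γ *
      (g : Matrix (Fin 2) (Fin 2) ℤ)) 0 1 ∧
    (L : ℤ) ∣ (((g⁻¹ : Matrix.SpecialLinearGroup (Fin 2) ℤ) : Matrix (Fin 2) (Fin 2) ℤ) * γ *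
      (g : Matrix (Fin 2) (Fin 2) ℤ)) 1 0) ∧
    γ.trace ^ 2 = 4 * ((n ^ 2 : ℕ) : ℤ) ∧ γ 1 0 ≠ 0} ⊆ (F : Set (Matrix (Fin 2) (Fin 2) ℤ)) := by
    rintro γ ⟨hd, hu, ⟨h1, h2⟩, ht, hc⟩
    push_cast at hd ht
    obtain ⟨e, h, r, s, he, hs, hcop, hh, rfl⟩ := par_exists γ n hd ht hc
    obtain ⟨k, rfl⟩ := par_dvd g e h r s L hcop h1 h2
    have hk : k ≠ 0 := by rintro rfl; simp at hh
    have he2 : (e : ℝ) ^ 2 = (n : ℝ) ^ 2 := by rcases he with rfl | rfl <;> simp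
    have key := par_u z hz e _ r s n (by positivity) he2 hs hh δ hδ hu
    obtain ⟨j, hj⟩ : ∃ j : ℕ, k = j ∨ k = -j := ⟨k.natAbs, Int.natAbs_eq k⟩
    have hj0 : 0 < j := by omega
    have hjR : (1 : ℝ) ≤ j := by exact_mod_cast hj0
    have habs : |(((L : ℤ) * k : ℤ) : ℝ)| = L * j := by
      rcases hj with rfl | rfl <;> simp [abs_mul]
    rw [habs] at key
    lift s to ℕ using by omega
    have hs1 : 1 ≤ s := by exact_mod_cast hs
    have hsR : (1 : ℝ) ≤ s := by exact_mod_cast hs1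
    push_cast at key
    have key2 : (s * z.re - r) ^ 2 + (s * z.im) ^ 2 ≤ T / j := by
      rw [hT, div_div, le_div_iff₀ (by positivity)]
      linarith
    have hRs : (s : ℝ) ≤ R j / z.im := by
      rw [le_div_iff₀ hy]
      apply Real.le_sqrt_of_sq_le
      nlinarith [sq_nonneg (s * z.re - r)]
    have hRr : |s * z.re - r| ≤ R j := by
      apply Real.abs_le_sqrt
      nlinarith [sq_nonneg (s * z.im)]
    rw [abs_le] at hRr
    have hjn : j ≤ n := by
      have a1 : z.im ^ 2 ≤ (s * z.im) ^ 2 := by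
        apply pow_le_pow_left₀ hy.le; nlinarith
      have a2 : z.im ^ 2 ≤ T / j := by nlinarith [sq_nonneg (s * z.re - r)]
      rw [le_div_iff₀ (by positivity)] at a2
      have a3 : T ≤ n * z.im := by
        rw [hT]
        apply (div_le_self (by positivity) hLR).trans
        exact mul_le_of_le_one_right (by positivity) hsδ1
      have a4 : z.im * (z.im * j) ≤ z.im * n := by nlinarith
      have a5 := le_of_mul_le_mul_left a4 hy
      have : (j : ℝ) ≤ n := by nlinarith
      exact_mod_cast this
    simp only [F, coe_biUnion, Set.mem_iUnion, mem_coe, mem_Icc, mem_image, mem_product]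
    refine ⟨j, ⟨hj0, hjn⟩, s, ⟨hs1, Nat.le_floor hRs⟩, ?_⟩
    have hr : ⌈(s : ℝ) * z.re - R j⌉ ≤ r ∧ r ≤ ⌊(s : ℝ) * z.re + R j⌋ :=
      ⟨Int.ceil_le.2 (by linarith), Int.le_floor.2 (by linarith)⟩
    rcases he with rfl | rfl <;> rcases hj with rfl | rfl
    · exact ⟨((1, 1), r), ⟨⟨by simp, by simp⟩, hr⟩, by simp⟩
    · exact ⟨((1, -1), r), ⟨⟨by simp, by simp⟩, hr⟩, by simp⟩
    · exact ⟨((-1, 1), r), ⟨⟨by simp, by simp⟩, hr⟩, by simp⟩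
    · exact ⟨((-1, -1), r), ⟨⟨by simp, by simp⟩, hr⟩, by simp⟩
  have hM : Mpar z g δ L (n ^ 2) ≤ F.card := by
    unfold Mpar
    rw [← Set.ncard_coe_finset]
    exact Set.ncard_le_ncard hsub F.finite_toSet
  have hF : (F.card : ℝ) ≤ ∑ j ∈ Icc 1 n, 12 * (n * Real.sqrt δ / L) * (j : ℝ)⁻¹ := by
    refine le_trans (Nat.cast_le.2 card_biUnion_le) ?_
    push_cast
    apply sum_le_sum
    intro j hj
    have hj1 : (1 : ℝ) ≤ j := by exact_mod_cast (mem_Icc.1 hj).1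
    have hR0 : 0 ≤ R j := Real.sqrt_nonneg _
    have hR2 : R j ^ 2 = T / j := Real.sq_sqrt (by positivity)
    have hstep : ∀ s ∈ Icc 1 ⌊R j / z.im⌋₊,
      (#(((({1, -1} : Finset ℤ) ×ˢ ({1, -1} : Finset ℤ)) ×ˢ
        Icc ⌈(s : ℝ) * z.re - R j⌉ ⌊(s : ℝ) * z.re + R j⌋).image
          fun q => parMat (q.1.1 * n) (q.1.2 * (L * j)) q.2 s) : ℝ) ≤ 12 * R j := by
      intro s hs
      have hs1 := mem_Icc.1 hs
      have b1 : (s : ℝ) ≤ R j / z.im := (Nat.le_floor_iff (by positivity)).1 hs1.2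
      have b2 : (1 : ℝ) ≤ s := by exact_mod_cast hs1.1
      have b3 : 1 ≤ R j := by
        have := b2.trans b1
        rw [le_div_iff₀ hy] at this
        linarith
      refine le_trans (Nat.cast_le.2 card_image_le) ?_
      rw [card_product, card_product, Int.card_Icc]
      have c2 : #({1, -1} : Finset ℤ) = 2 := by decide
      rw [c2]
      push_cast
      have b4 : ((⌊(s : ℝ) * z.re + R j⌋ + 1 - ⌈(s : ℝ) * z.re - R j⌉).toNat : ℝ) ≤ 3 * R j := by
        have c1 := Int.floor_le ((s : ℝ) * z.re + R j)
        have c3 := Int.le_ceil ((s : ℝ) * z.re - R j)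
        rcases le_total 0 (⌊(s : ℝ) * z.re + R j⌋ + 1 - ⌈(s : ℝ) * z.re - R j⌉) with h | h
        · have : ((⌊(s : ℝ) * z.re + R j⌋ + 1 - ⌈(s : ℝ) * z.re - R j⌉).toNat : ℝ) =
              ((⌊(s : ℝ) * z.re + R j⌋ + 1 - ⌈(s : ℝ) * z.re - R j⌉ : ℤ) : ℝ) := by
            exact_mod_cast congrArg (Int.cast (R := ℝ)) (Int.toNat_of_nonneg h)
          rw [this]; push_cast; linarith
        · rw [Int.toNat_of_nonpos h]; simp; linarith
      linarith
    refine le_trans (Nat.cast_le.2 card_biUnion_le) ?_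
    push_cast
    refine le_trans (sum_le_sum hstep) ?_
    rw [sum_const, Nat.card_Icc, nsmul_eq_mul, Nat.add_sub_cancel]
    calc (⌊R j / z.im⌋₊ : ℝ) * (12 * R j) ≤ R j / z.im * (12 * R j) := by
          gcongr
          exact Nat.floor_le (by positivity)
      _ = 12 * R j ^ 2 / z.im := by ring
      _ = 12 * (n * Real.sqrt δ / L) * (j : ℝ)⁻¹ := by
          rw [hR2, hT]; field_simp
  have hH : ∑ j ∈ Icc 1 n, (j : ℝ)⁻¹ ≤ 1 + Real.log n := by
    have := harmonic_le_one_add_log n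
    rw [harmonic_eq_sum_Icc] at this
    push_cast at this
    exact this
  calc (Mpar z g δ L (n ^ 2) : ℝ) ≤ F.card := by exact_mod_cast hM
    _ ≤ _ := hF
    _ = 12 * (n * Real.sqrt δ / L) * ∑ j ∈ Icc 1 n, (j : ℝ)⁻¹ := by rw [mul_sum]
    _ ≤ _ := by gcongr

/-- Counting bound for the parabolic part of the square-determinant sums. -/
theorem stmt_17 :
    ∀ ε : ℝ, 0 < ε →
    ∃ C : ℝ, 0 < C ∧
      ∀ (p : ℕ), p.Prime →
      ∀ l : ℕ, ∀ z : ℂ, 1 ≤ z.im →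
      ∀ g : Matrix.SpecialLinearGroup (Fin 2) ℤ,
      ∀ δ : ℝ, 0 < δ → δ < 1 →
      ∀ X : ℝ, 1 ≤ X →
      ∀ Pr : Finset ℕ, (∀ q ∈ Pr, Nat.Prime q ∧ X ≤ (q : ℝ) ∧ (q : ℝ) ≤ 2 * X) → p ∉ Pr →
        (∑ q ∈ Pr ×ˢ Pr, (Mpar z g δ (p ^ l) ((q.1 * q.2) ^ 2) : ℝ)) ≤
          C * (X ^ ((2 : ℝ) + ε) + X ^ ((4 : ℝ) + ε) * z.im * Real.sqrt δ / (p : ℝ) ^ l) := by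
  intro ε hε
  refine ⟨192 * (4 + 2 / ε), by positivity, ?_⟩
  intro p hp l z hz g δ hδ hδ1 X hX Pr hPr _
  have hy : 0 < z.im := by linarith
  have hX0 : 0 < X := by linarith
  have hpR : (0 : ℝ) < p := by exact_mod_cast hp.pos
  have hXe : 1 ≤ X ^ ε := Real.one_le_rpow hX hε.le
  have hsδ : 0 ≤ Real.sqrt δ := Real.sqrt_nonneg _
  set B : ℝ := 48 * X ^ 2 * (Real.sqrt δ / (p : ℝ) ^ l) * ((4 + 2 / ε) * X ^ ε) with hB
  have hB0 : 0 ≤ B := by positivity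
  have hterm : ∀ q ∈ Pr ×ˢ Pr, (Mpar z g δ (p ^ l) ((q.1 * q.2) ^ 2) : ℝ) ≤ B := by
    intro q hq
    obtain ⟨h1, h2⟩ := Finset.mem_product.1 hq
    obtain ⟨p1, _, u1⟩ := hPr _ h1
    obtain ⟨p2, _, u2⟩ := hPr _ h2
    have hn : 0 < q.1 * q.2 := Nat.mul_pos p1.pos p2.pos
    have hn1 : (1 : ℝ) ≤ ((q.1 * q.2 : ℕ) : ℝ) := by exact_mod_cast hn
    have hnX : ((q.1 * q.2 : ℕ) : ℝ) ≤ 4 * X ^ 2 := by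
      push_cast
      calc (q.1 : ℝ) * q.2 ≤ (2 * X) * (2 * X) := by gcongr
        _ = _ := by ring
    have hlog : 1 + Real.log ((q.1 * q.2 : ℕ) : ℝ) ≤ (4 + 2 / ε) * X ^ ε := by
      have a1 : Real.log ((q.1 * q.2 : ℕ) : ℝ) ≤ Real.log (4 * X ^ 2) :=
        Real.log_le_log (by linarith) hnX
      rw [Real.log_mul (by norm_num) (by positivity), Real.log_pow] at a1
      have a2 : Real.log 4 ≤ 4 - 1 := Real.log_le_sub_one_of_pos (by norm_num)
      have a3 : Real.log X ≤ X ^ ε / ε := Real.log_le_rpow_div hX0.le hε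
      have a4 : (4 + 2 / ε) * X ^ ε = 4 * X ^ ε + 2 * (X ^ ε / ε) := by ring
      rw [a4]
      push_cast at a1 ⊢
      linarith
    have hlog0 : 0 ≤ Real.log ((q.1 * q.2 : ℕ) : ℝ) := Real.log_nonneg hn1
    refine (mpar_bound z hz g δ hδ hδ1 (p ^ l) (q.1 * q.2) (pow_pos hp.pos l) hn).trans ?_
    calc 12 * (((q.1 * q.2 : ℕ) : ℝ) * Real.sqrt δ / ((p ^ l : ℕ) : ℝ)) *
          (1 + Real.log ((q.1 * q.2 : ℕ) : ℝ))
        = 12 * ((q.1 * q.2 : ℕ) : ℝ) * (Real.sqrt δ / (p : ℝ) ^ l) *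
          (1 + Real.log ((q.1 * q.2 : ℕ) : ℝ)) := by rw [Nat.cast_pow]; ring
      _ ≤ 12 * (4 * X ^ 2) * (Real.sqrt δ / (p : ℝ) ^ l) * ((4 + 2 / ε) * X ^ ε) := by
          gcongr
      _ = B := by rw [hB]; ring
  have hcard : (Pr.card : ℝ) ≤ 2 * X := by
    have hs : Pr ⊆ Finset.Icc 1 ⌊2 * X⌋₊ := by
      intro q hq
      obtain ⟨p1, _, u1⟩ := hPr _ hq
      exact Finset.mem_Icc.2 ⟨p1.pos, Nat.le_floor u1⟩
    have := Finset.card_le_card hs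
    rw [Nat.card_Icc, Nat.add_sub_cancel] at this
    exact le_trans (Nat.cast_le.2 this) (Nat.floor_le (by positivity))
  have hmain : (∑ q ∈ Pr ×ˢ Pr, (Mpar z g δ (p ^ l) ((q.1 * q.2) ^ 2) : ℝ)) ≤
      (2 * X) * (2 * X) * B := by
    refine (Finset.sum_le_sum hterm).trans ?_
    rw [Finset.sum_const, nsmul_eq_mul, Finset.card_product]
    push_cast
    gcongr
  have hX4 : X ^ ((4 : ℝ) + ε) = X ^ 4 * X ^ ε := by
    rw [Real.rpow_add hX0]; norm_cast
  have hX2 : 0 ≤ X ^ ((2 : ℝ) + ε) := Real.rpow_nonneg hX0.le _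
  refine hmain.trans ?_
  calc (2 * X) * (2 * X) * B
      = 192 * (4 + 2 / ε) * (0 + X ^ 4 * X ^ ε * 1 * Real.sqrt δ / (p : ℝ) ^ l) := by
        rw [hB]; ring
    _ ≤ 192 * (4 + 2 / ε) * (X ^ ((2 : ℝ) + ε) +
          X ^ ((4 : ℝ) + ε) * z.im * Real.sqrt δ / (p : ℝ) ^ l) := by
        rw [hX4]; gcongr
end
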